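/- For all integers Δ ≥ 3 and all δ ∈ (0,1), there exists a constant C = C(Δ,δ) such that for every finite simple graph G = (V,E) with n = |V| ≥ 2 vertices and maximum degree at most Δ, and every λ with 0 < λ ≤ (1−δ)·λ_c(Δ), the Glauber dynamics for the hard-core model on G with fugacity λ has mixing time T_mix(P_GL, 1/4) ≤ C·n·log n. -/

import Mathlib

/-!
Two regimes of the fugacity `λ` are treated separately, with `Δ = d + 1` the degree bound. When
`λ ≤ 1 / (2Δ)`, one step of the dynamics contracts the Lipschitz constant of a test function by
a factor `1 - 1 / (2n)` (`Lip_Pop`, the dual form of path coupling), which gives `O(n log n)`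
directly (`mix_small`). For `1 / (2Δ) ≤ λ ≤ (1 - δ) λ_c` the hard-core measure satisfies
approximate tensorization of entropy with a constant depending only on `Δ` and `δ` (`at_hc`):
`Ent f ≤ A ∑ u, E Ent_u f`, where `Ent_u` is the entropy in the spin at `u` alone. Convexity of
`x log x` (`phi_Pop`) then gives entropy decay at rate `1 / (A n)`, and since
`log (1 / μ(ω)) = O(n)` a weak Pinsker inequality gives mixing in `O(n log n)` steps
(`mix_entropy`).

Approximate tensorization rests on spectral independence, proved for all vectors of vertex
fugacities bounded by `(1 - δ) λ_c`. The total influence of a vertex `q` on a vertex set `W` is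
the ℓ¹ change of the marginals between conditioning on `q` occupied and on `q` empty. Removing the
neighbours of `q` one at a time (`peel`) bounds it by the influences of those neighbours in
smaller graphs, in which each has lost an edge and so has at most `d` neighbours. An induction on
the number of vertices shows `p · Infl ≤ √p / ε` for such a vertex of marginal `p`
(`infl_reduced`): the induction step is the inequality
`√p ∑ √p_v ≤ 1 - ε` for the marginals in the recursion `p / (1 - p) = x ∏ (1 - p_v)`
(`contraction`), and the maximum of `(∏ (1 - p_v)) (d ∑ p_v - 1)` is exactly `1 / λ_c`
(`prod_bound`). Bounded influence is bounded absolute row sums of the covariance matrix, whence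
`Var (∑ y_v 1_v) ≤ K ∑ y_v²` (`var_bound`).

An exponential tilt of the hard-core measure is again a hard-core measure with modified
fugacities. The variance bound therefore holds along a whole interval of tilts, and integrating it
twice shows that sums of small one-site functions are sub-Gaussian, also conditionally on any
partial configuration (`subgaussian`, `SG_hc`). By the Gibbs variational principle, sub-Gaussianity
is dual to entropic independence (`entropic_independence`): the entropies gained by revealing
each unrevealed vertex separately add up to at most a constant multiple of the total conditional
entropy. The room needed for the tilt comes from replacing `δ` by `δ / 2`.

Entropic independence is a differential inequality for the mean conditional entropy of a random
block that contains each vertex independently with probability `t`; integrating from `t = θ` to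
`t = 1` bounds the entropy by a constant times the mean conditional entropy of random blocks of
density `θ` (`block_factor`). By the spatial Markov property, the conditional entropy of a block is
at most the sum of those of its connected components (`phi_le_comp`). On a component with `k`
vertices approximate tensorization holds with a constant exponential in `k` (`crude`), because
all conditional probabilities are bounded below. For `θ` small the components are
subcritical percolation clusters, whose exponential moments are bounded (`explore`,
`comp_moment`), so averaging over the random block leaves a constant independent of the graph
(`approx_tensor`).

The measure lives on the subtype of independent sets and the dynamics is an averaging operator
`Pop` there; `glauber_mulVec` identifies it with the transition matrix, and `mixingTime_le` turns
convergence of averages of test functions into a bound on the mixing time.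
-/


open Finset

noncomputable section

variable {S : Type} [Fintype S] [DecidableEq S]

/-- Total variation distance between two (densities of) distributions on a finite set. -/
def tvDist (p μ : S → ℝ) : ℝ := (1 / 2) * ∑ x, |p x - μ x|

/-- Mixing time of a Markov chain with transition matrix `P` and stationary
distribution `μ`: the maximum over starting states `x` in the support of `μ` of the first
time `t` at which the distribution `P^t(x,·)` is within total variation distance `ε`
of `μ`. -/
def mixingTime (μ : S → ℝ) (P : Matrix S S ℝ) (ε : ℝ) : ℕ :=
  (@Finset.filter S (fun x => 0 < μ x) (Classical.decPred _) Finset.univ).sup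
    fun x => sInf {t : ℕ | tvDist (fun y => (P ^ t) x y) μ ≤ ε}

variable {V : Type} [Fintype V] [DecidableEq V]

/-- Glauber dynamics transition matrix for a distribution `μ` on `V → q`. -/
def glauberMatrix {q : Type} [Fintype q] [DecidableEq q] (μ : (V → q) → ℝ) :
    Matrix (V → q) (V → q) ℝ :=
  Matrix.of fun σ σ' =>
    (Fintype.card V : ℝ)⁻¹ *
      ∑ v : V, if ∀ u, u ≠ v → σ' u = σ u then
        μ σ' / ∑ j : q, μ (Function.update σ v j) else 0

/-- Number of vertices receiving spin `1` (`true`), i.e. the size of the independent set. -/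
def numOnes (σ : V → Bool) : ℕ := (Finset.univ.filter fun v => σ v = true).card

/-- `σ` is the indicator of an independent set of `G`. -/
def IsIndep (G : SimpleGraph V) (σ : V → Bool) : Prop :=
  ∀ u v, G.Adj u v → ¬(σ u = true ∧ σ v = true)

instance (G : SimpleGraph V) [DecidableRel G.Adj] (σ : V → Bool) : Decidable (IsIndep G σ) :=
  inferInstanceAs (Decidable (∀ u v, G.Adj u v → ¬(σ u = true ∧ σ v = true)))

/-- Weight of a configuration in the hard-core model: `λ^{|I|}` for independent sets. -/
def hardCoreWeight (G : SimpleGraph V) [DecidableRel G.Adj] (lam : ℝ) (σ : V → Bool) : ℝ :=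
  if IsIndep G σ then lam ^ numOnes σ else 0

/-- Gibbs distribution of the hard-core model on `G` with fugacity `λ`. -/
def hardCoreGibbs (G : SimpleGraph V) [DecidableRel G.Adj] (lam : ℝ) (σ : V → Bool) : ℝ :=
  hardCoreWeight G lam σ / ∑ σ' : V → Bool, hardCoreWeight G lam σ'

end

/-- The critical fugacity `λ_c(Δ) = (Δ−1)^{Δ−1}/(Δ−2)^Δ`. -/
noncomputable def lambdaC (Δ : ℕ) : ℝ := ((Δ : ℝ) - 1) ^ (Δ - 1) / ((Δ : ℝ) - 2) ^ Δ

set_option linter.unusedSectionVars false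
set_option linter.unnecessarySimpa false

/-! ### Partition functions, marginals and total influence -/

namespace HC

variable {V : Type} [Fintype V] [DecidableEq V]

/-- `I` is an independent set of `G`. -/
def Ind (G : SimpleGraph V) (I : Finset V) : Prop := ∀ u ∈ I, ∀ v ∈ I, ¬ G.Adj u v

instance (G : SimpleGraph V) [DecidableRel G.Adj] (I : Finset V) : Decidable (Ind G I) :=
  inferInstanceAs (Decidable (∀ u ∈ I, ∀ v ∈ I, ¬ G.Adj u v))

/-- The neighbourhood of `v`, as a finset. -/
def nbr (G : SimpleGraph V) [DecidableRel G.Adj] (v : V) : Finset V :=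
  univ.filter fun u => G.Adj v u

/-- Hard-core weight of `I` with vertex-dependent fugacities `x`; zero if `I` is not independent. -/
def wt (G : SimpleGraph V) [DecidableRel G.Adj] (x : V → ℝ) (I : Finset V) : ℝ :=
  if Ind G I then ∏ v ∈ I, x v else 0

/-- Weighted sum of `F` over the independent subsets of `U`, that is, for the hard-core model on the
subgraph of `G` induced by `U`. -/
def Zf (G : SimpleGraph V) [DecidableRel G.Adj] (x : V → ℝ) (U : Finset V)
    (F : Finset V → ℝ) : ℝ := ∑ I ∈ U.powerset, wt G x I * F I

/-- Partition function of the hard-core model on the subgraph induced by `U`. -/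
def Z (G : SimpleGraph V) [DecidableRel G.Adj] (x : V → ℝ) (U : Finset V) : ℝ :=
  Zf G x U fun _ => 1

/-- Probability that `j` is occupied in the hard-core model on the subgraph induced by `U`. It is
`0` for `j ∉ U`. -/
noncomputable def P (G : SimpleGraph V) [DecidableRel G.Adj] (x : V → ℝ) (U : Finset V)
    (j : V) : ℝ := Zf G x U (fun I => if j ∈ I then 1 else 0) / Z G x U

variable (G : SimpleGraph V) [DecidableRel G.Adj] {x : V → ℝ}

lemma mem_nbr {u v : V} : u ∈ nbr G v ↔ G.Adj v u := by simp [nbr]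

lemma ind_mono {I J : Finset V} (h : I ⊆ J) (hJ : Ind G J) : Ind G I :=
  fun u hu v hv => hJ u (h hu) v (h hv)

lemma ind_empty : Ind G ∅ := by simp [Ind]

lemma ind_insert {v : V} {I : Finset V} :
    Ind G (insert v I) ↔ Ind G I ∧ ∀ u ∈ I, u ∉ nbr G v := by
  constructor
  · intro h
    refine ⟨ind_mono G (subset_insert _ _) h, fun u hu => ?_⟩
    rw [mem_nbr]
    exact h v (mem_insert_self _ _) u (mem_insert_of_mem hu)
  · rintro ⟨h1, h2⟩ a ha b hb hab
    rcases mem_insert.1 ha with rfl | ha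
    · rcases mem_insert.1 hb with rfl | hb
      · exact G.loopless.irrefl _ hab
      · exact h2 b hb ((mem_nbr G).2 hab)
    · rcases mem_insert.1 hb with hb' | hb
      · exact h2 a ha ((mem_nbr G).2 (hb' ▸ hab.symm))
      · exact h1 a ha b hb hab

lemma wt_nonneg (hx : ∀ v, 0 < x v) (I : Finset V) : 0 ≤ wt G x I := by
  unfold wt; split_ifs
  · exact prod_nonneg fun v _ => (hx v).le
  · exact le_rfl

lemma Zf_rec {U : Finset V} {v : V} (hv : v ∈ U) (F : Finset V → ℝ) :
    Zf G x U F = Zf G x (U.erase v) F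
      + x v * Zf G x (U.erase v \ nbr G v) (fun I => F (insert v I)) := by
  unfold Zf
  conv_lhs => rw [← insert_erase hv, sum_powerset_insert (notMem_erase v U)]
  congr 1
  rw [mul_sum]
  symm
  refine (sum_subset_zero_on_sdiff (powerset_mono.2 sdiff_subset) ?_ ?_)
  · intro I hI
    simp only [mem_sdiff, mem_powerset] at hI
    have : ¬ Ind G (insert v I) := by
      rw [ind_insert]
      rintro ⟨_, h⟩
      exact hI.2 fun u hu => mem_sdiff.2 ⟨hI.1 hu, h u hu⟩
    simp [wt, this]
  · intro I hI
    rw [mem_powerset] at hI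
    have hvI : v ∉ I := fun h => by simpa using mem_sdiff.1 (hI h)
    have : Ind G (insert v I) ↔ Ind G I := by
      rw [ind_insert]
      exact ⟨fun h => h.1, fun h => ⟨h, fun u hu => (mem_sdiff.1 (hI hu)).2⟩⟩
    simp only [wt, this, prod_insert hvI]
    split_ifs <;> ring

lemma Zf_zero {U : Finset V} {F : Finset V → ℝ} (h : ∀ I ⊆ U, F I = 0) : Zf G x U F = 0 :=
  sum_eq_zero fun I hI => by rw [h I (mem_powerset.1 hI), mul_zero]

lemma Zf_congr {U : Finset V} {F F' : Finset V → ℝ} (h : ∀ I ⊆ U, F I = F' I) :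
    Zf G x U F = Zf G x U F' :=
  sum_congr rfl fun I hI => by rw [h I (mem_powerset.1 hI)]

lemma Zf_nonneg (hx : ∀ v, 0 < x v) {U : Finset V} {F : Finset V → ℝ} (h : ∀ I, 0 ≤ F I) :
    0 ≤ Zf G x U F := sum_nonneg fun I _ => mul_nonneg (wt_nonneg G hx I) (h I)

lemma Z_pos (hx : ∀ v, 0 < x v) (U : Finset V) : 0 < Z G x U := by
  unfold Z Zf
  refine sum_pos' (fun I _ => by simpa using wt_nonneg G hx I) ⟨∅, by simp, ?_⟩
  simp [wt, ind_empty]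

lemma Z_rec {U : Finset V} {v : V} (hv : v ∈ U) :
    Z G x U = Z G x (U.erase v) + x v * Z G x (U.erase v \ nbr G v) := Zf_rec G hv _

lemma P_notMem {U : Finset V} {j : V} (h : j ∉ U) : P G x U j = 0 := by
  unfold P
  rw [Zf_zero G (fun I hI => if_neg fun hj => h (hI hj)), zero_div]

lemma P_mul_Z (hx : ∀ v, 0 < x v) {U : Finset V} {v : V} (hv : v ∈ U) :
    P G x U v * Z G x U = x v * Z G x (U.erase v \ nbr G v) := by
  unfold P
  rw [div_mul_cancel₀ _ (Z_pos G hx U).ne', Zf_rec G hv, Zf_zero G (fun I hI => ?_), zero_add]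
  · simp [Z]
  · exact if_neg fun h => by simpa using hI h

lemma one_sub_P_mul_Z (hx : ∀ v, 0 < x v) {U : Finset V} {v : V} (hv : v ∈ U) :
    (1 - P G x U v) * Z G x U = Z G x (U.erase v) := by
  rw [sub_mul, P_mul_Z G hx hv, Z_rec G hv]; ring

lemma P_nonneg (hx : ∀ v, 0 < x v) (U : Finset V) (v : V) : 0 ≤ P G x U v :=
  div_nonneg (Zf_nonneg G hx fun I => by split_ifs <;> norm_num) (Z_pos G hx U).le

lemma P_lt_one (hx : ∀ v, 0 < x v) (U : Finset V) (v : V) : P G x U v < 1 := by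
  by_cases hv : v ∈ U
  · have := one_sub_P_mul_Z G hx hv
    have h2 := Z_pos G hx (U.erase v)
    have h3 := Z_pos G hx U
    rw [← this] at h2
    have := pos_of_mul_pos_left h2 h3.le
    linarith
  · rw [P_notMem G hv]; norm_num

/-- Law of total probability, conditioning on whether `v` is occupied. -/
lemma P_total (hx : ∀ v, 0 < x v) {U : Finset V} {v j : V} (hv : v ∈ U) (hj : j ≠ v) :
    P G x U j = (1 - P G x U v) * P G x (U.erase v) j
      + P G x U v * P G x (U.erase v \ nbr G v) j := by
  have h1 := P_mul_Z G hx hv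
  have h2 := one_sub_P_mul_Z G hx hv
  have hZ := (Z_pos G hx U).ne'
  have hZ1 := (Z_pos G hx (U.erase v)).ne'
  have hZ2 := (Z_pos G hx (U.erase v \ nbr G v)).ne'
  rw [← mul_left_inj' hZ, add_mul, mul_right_comm, h2, mul_right_comm, h1]
  unfold P
  rw [div_mul_cancel₀ _ hZ, mul_div_cancel₀ _ hZ1, mul_assoc, mul_div_cancel₀ _ hZ2, Zf_rec G hv]
  simp [mem_insert, hj]

/-- Probability that `v` and `j` are both occupied, by conditioning on `v` occupied: this deletes
`v` and its neighbours. -/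
lemma joint (hx : ∀ v, 0 < x v) {U : Finset V} {v j : V} (hv : v ∈ U) (hj : j ≠ v) :
    Zf G x U (fun I => (if v ∈ I then 1 else 0) * (if j ∈ I then 1 else 0)) / Z G x U
      = P G x U v * P G x (U.erase v \ nbr G v) j := by
  have h1 := P_mul_Z G hx hv
  have hZ := (Z_pos G hx U).ne'
  have hZ2 := (Z_pos G hx (U.erase v \ nbr G v)).ne'
  rw [div_eq_iff hZ, mul_right_comm, h1, Zf_rec G hv, Zf_zero G (fun I hI => ?_), zero_add]
  · unfold P
    rw [mul_assoc, mul_div_cancel₀ _ hZ2]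
    simp [mem_insert, hj]
  · rw [if_neg fun h => by simpa using hI h, zero_mul]

/-- The ℓ¹ change of the vector of marginals when the vertices of `Q` are deleted from `W`. -/
noncomputable def Dl (x : V → ℝ) (W Q : Finset V) : ℝ := ∑ j, |P G x (W \ Q) j - P G x W j|

/-- Total influence of `q` in the model on `W`: the ℓ¹ distance between the marginals given `q`
occupied and given `q` empty, the term `1` being the influence of `q` on itself. -/
noncomputable def Infl (x : V → ℝ) (W : Finset V) (q : V) : ℝ := 1 + Dl G x (W.erase q) (nbr G q)

lemma Dl_nonneg (W Q : Finset V) : 0 ≤ Dl G x W Q := sum_nonneg fun _ _ => abs_nonneg _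

/-- Deleting `q` conditions on `q` empty, and by the law of total probability this moves the
marginals by `P q` times the difference between the two conditionings. -/
lemma diff_erase (hx : ∀ v, 0 < x v) {W : Finset V} {q : V} (hq : q ∈ W) :
    ∑ j, |P G x (W.erase q) j - P G x W j| = P G x W q * Infl G x W q := by
  have hp := P_nonneg G hx W q
  unfold Infl Dl
  rw [mul_add, mul_one, ← add_sum_erase _ _ (mem_univ q)]
  congr 1
  · rw [P_notMem G (notMem_erase q W), zero_sub, abs_neg, abs_of_nonneg hp]
  · rw [← add_sum_erase (a := q) _ _ (mem_univ q), P_notMem G (notMem_erase q W),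
      P_notMem G (fun h => by simpa using h : q ∉ W.erase q \ nbr G q), sub_zero, abs_zero, zero_add,
      mul_sum]
    refine sum_congr rfl fun j hj => ?_
    rw [P_total G hx hq (ne_of_mem_erase hj), ← abs_of_nonneg hp, ← abs_mul, abs_of_nonneg hp,
      ← abs_neg]
    congr 1; ring

lemma Dl_insert (hx : ∀ v, 0 < x v) {W Q : Finset V} {q : V} (hq : q ∈ W) :
    Dl G x W (insert q Q) ≤ P G x W q * Infl G x W q + Dl G x (W.erase q) Q := by
  rw [← diff_erase G hx hq]
  unfold Dl
  rw [← sum_add_distrib]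
  refine sum_le_sum fun j _ => ?_
  have : W \ insert q Q = W.erase q \ Q := by
    ext; simp; tauto
  rw [this, add_comm]
  exact abs_sub_le _ _ _

/-- Deleting the vertices of `Q` one at a time. Here `p v` is the marginal of `v` in the graph that
remains just before `v` is deleted: the ratio of partition functions is the product of the
`1 - p v`, and a bound `P * Infl ≤ A √P` in the smaller graphs gives a bound on the change of the
marginals in terms of the same `p`. -/
lemma peel (hx : ∀ v, 0 < x v) (A : ℝ) (Q : Finset V) : ∀ W : Finset V, Q ⊆ W →
    (∀ W' ⊆ W, ∀ q ∈ W', q ∈ Q → P G x W' q * Infl G x W' q ≤ A * √(P G x W' q)) →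
    ∃ p : V → ℝ, (∀ v ∈ Q, 0 ≤ p v ∧ p v < 1) ∧
      Z G x (W \ Q) = Z G x W * ∏ v ∈ Q, (1 - p v) ∧ Dl G x W Q ≤ A * ∑ v ∈ Q, √(p v) := by
  induction Q using Finset.induction_on with
  | empty => intro W _ _; exact ⟨0, by simp, by simp, by simp [Dl]⟩
  | insert q Q hqQ ih =>
    intro W hQW hA
    have hq : q ∈ W := hQW (mem_insert_self _ _)
    obtain ⟨p, h1, h2, h3⟩ := ih (W.erase q)
      (fun v hv => mem_erase.2 ⟨ne_of_mem_of_not_mem hv hqQ, hQW (mem_insert_of_mem hv)⟩)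
      (fun W' hW' r hr hrQ => hA W' (hW'.trans (erase_subset _ _)) r hr (mem_insert_of_mem hrQ))
    have hne : ∀ v ∈ Q, Function.update p q (P G x W q) v = p v := fun v hv =>
      Function.update_of_ne (ne_of_mem_of_not_mem hv hqQ) _ _
    refine ⟨Function.update p q (P G x W q), ?_, ?_, ?_⟩
    · intro v hv
      rcases mem_insert.1 hv with rfl | hv
      · simpa using ⟨P_nonneg G hx W v, P_lt_one G hx W v⟩
      · rw [hne v hv]; exact h1 v hv
    · have : W \ insert q Q = W.erase q \ Q := by
        ext; simp; tauto
      rw [this, h2, prod_insert hqQ, ← one_sub_P_mul_Z G hx hq, Function.update_self,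
        prod_congr rfl fun v hv => congrArg (fun t => 1 - t) (hne v hv)]
      ring
    · rw [sum_insert hqQ, Function.update_self, mul_add, sum_congr rfl fun v hv => congrArg Real.sqrt (hne v hv)]
      exact (Dl_insert G hx hq).trans
        (add_le_add (hA W subset_rfl q hq (mem_insert_self _ _)) h3)

end HC

/-! ### Spectral independence below the uniqueness threshold -/

namespace HC

variable {V : Type} [Fintype V] [DecidableEq V]

/-- The extremal problem behind the critical fugacity. Both factors are bounded by tangent lines of
`exp` chosen so that the exponentials cancel; equality holds when all `d` values `p v` equal `1 / d`. -/
lemma prod_bound (d : ℕ) (hd : 2 ≤ d) (Q : Finset V) (hQ : #Q ≤ d) (p : V → ℝ)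
    (hp : ∀ v ∈ Q, 0 ≤ p v ∧ p v < 1) :
    (∏ v ∈ Q, (1 - p v)) * (d * ∑ v ∈ Q, p v - 1) ≤ ((d : ℝ) - 1) ^ (d + 1) / (d : ℝ) ^ d := by
  have hd' : (2 : ℝ) ≤ d := by exact_mod_cast hd
  have hd0 : (0 : ℝ) < d := by linarith
  have hd1 : (0 : ℝ) < (d : ℝ) - 1 := by linarith
  set a : ℝ := ((d : ℝ) - 1) / d with ha
  have ha0 : 0 < a := by positivity
  set s := ∑ v ∈ Q, p v with hs
  have key : ∀ t : ℝ, t ≤ a * Real.exp (t / a - 1) := fun t => by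
    have := Real.add_one_le_exp (t / a - 1)
    calc t = a * (t / a - 1 + 1) := by field_simp; ring
      _ ≤ _ := by gcongr
  have h1 : ∏ v ∈ Q, (1 - p v) ≤ a ^ d * Real.exp (d / a - d - s / a) := by
    calc ∏ v ∈ Q, (1 - p v) ≤ ∏ v ∈ Q, (a * Real.exp ((1 - p v) / a - 1)) :=
          prod_le_prod (fun v hv => by linarith [(hp v hv).2]) fun v _ => key _
      _ = a ^ #Q * Real.exp (∑ v ∈ Q, ((1 - p v) / a - 1)) := by
          rw [prod_mul_distrib, prod_const, Real.exp_sum]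
      _ = a ^ #Q * Real.exp (#Q * (1 / a - 1) - s / a) := by
          congr 2
          rw [hs, sum_div, sum_sub_distrib, ← sum_div, sum_sub_distrib]
          simp only [sum_const, nsmul_eq_mul]
          rw [← sum_div]; ring
      _ ≤ a ^ #Q * (a * Real.exp (1 / a - 1)) ^ (d - #Q) * Real.exp (#Q * (1 / a - 1) - s / a) := by
          have h2 : 1 ≤ (a * Real.exp (1 / a - 1)) ^ (d - #Q) := one_le_pow₀ (key 1)
          have h3 : 0 ≤ a ^ #Q := by positivity
          gcongr
          nlinarith
      _ = a ^ d * Real.exp (d / a - d - s / a) := by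
          obtain ⟨k, hk⟩ := Nat.exists_eq_add_of_le hQ
          rw [show d - #Q = k by omega, mul_pow, ← Real.exp_nat_mul, ← mul_assoc, ← pow_add, mul_assoc,
            ← Real.exp_add, ← hk]
          congr 2
          rw [hk]; push_cast; ring
  by_cases hneg : d * s - 1 ≤ 0
  · have : 0 ≤ ∏ v ∈ Q, (1 - p v) := prod_nonneg fun v hv => by linarith [(hp v hv).2]
    calc _ ≤ (0 : ℝ) := mul_nonpos_of_nonneg_of_nonpos this hneg
      _ ≤ _ := by positivity
  push Not at hneg
  have h4 : d * s - 1 ≤ (d - 1) * Real.exp ((d * s - 1) / (d - 1) - 1) := by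
    have := Real.add_one_le_exp ((d * s - 1) / ((d : ℝ) - 1) - 1)
    calc d * s - 1 = (d - 1) * ((d * s - 1) / (d - 1) - 1 + 1) := by field_simp; ring
      _ ≤ _ := by gcongr
  calc (∏ v ∈ Q, (1 - p v)) * (d * s - 1)
      ≤ (a ^ d * Real.exp (d / a - d - s / a)) * ((d - 1) * Real.exp ((d * s - 1) / (d - 1) - 1)) :=
        mul_le_mul h1 h4 hneg.le (by positivity)
    _ = a ^ d * (d - 1) * (Real.exp (d / a - d - s / a) * Real.exp ((d * s - 1) / (d - 1) - 1)) := by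
        ring
    _ = a ^ d * (d - 1) := by
        rw [← Real.exp_add]
        have : d / a - d - s / a + ((d * s - 1) / (d - 1) - 1) = 0 := by
          rw [ha]; field_simp; ring
        rw [this, Real.exp_zero, mul_one]
    _ = _ := by rw [ha, div_pow, pow_succ]; ring

/-- The critical fugacity `λ_c(d + 1)`. -/
noncomputable def lamD (d : ℕ) : ℝ := (d : ℝ) ^ d / ((d : ℝ) - 1) ^ (d + 1)

lemma lamD_pos {d : ℕ} (hd : 2 ≤ d) : 0 < lamD d := by
  have hd' : (2 : ℝ) ≤ d := by exact_mod_cast hd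
  have : (0 : ℝ) < (d : ℝ) - 1 := by linarith
  unfold lamD; positivity

/-- The contraction gap at relative distance `δ` from the critical fugacity. -/
noncomputable def epsD (d : ℕ) (δ : ℝ) : ℝ := δ / (2 * (1 + lamD d))

lemma epsD_pos {d : ℕ} (hd : 2 ≤ d) {δ : ℝ} (h : 0 < δ) : 0 < epsD d δ := by
  have := lamD_pos hd
  unfold epsD; positivity

/-- Contraction of the square-root potential along the tree recursion `q / (1 - q) = x ∏ (1 - p v)`:
by Cauchy–Schwarz the square of the left-hand side is at most `q * d * ∑ p v`, and `prod_bound`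
applies. -/
lemma contraction (d : ℕ) (hd : 2 ≤ d) (Q : Finset V) (hQ : #Q ≤ d) (p : V → ℝ)
    (hp : ∀ v ∈ Q, 0 ≤ p v ∧ p v < 1) (δ : ℝ) (hδ0 : 0 < δ) (hδ1 : δ < 1) (x q : ℝ) (hx : 0 ≤ x)
    (hxl : x ≤ (1 - δ) * lamD d) (hq0 : 0 ≤ q) (hq : q = x * (1 - q) * ∏ v ∈ Q, (1 - p v)) :
    √q * ∑ v ∈ Q, √(p v) ≤ 1 - epsD d δ := by
  have hl := lamD_pos hd
  set pr := ∏ v ∈ Q, (1 - p v) with hpr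
  have hpr0 : 0 ≤ pr := prod_nonneg fun v hv => by linarith [(hp v hv).2]
  have hpr1 : pr ≤ 1 := prod_le_one (fun v hv => by linarith [(hp v hv).2])
    fun v hv => by linarith [(hp v hv).1]
  set X := d * ∑ v ∈ Q, p v with hX
  have hs0 : 0 ≤ ∑ v ∈ Q, p v := sum_nonneg fun v hv => (hp v hv).1
  have hX0 : 0 ≤ X := by positivity
  set Rc := lamD d * pr with hRc
  have hRc0 : 0 ≤ Rc := by positivity
  have hb : Rc * (X - 1) ≤ 1 := by
    have := prod_bound d hd Q hQ p hp
    have hd' : (2 : ℝ) ≤ d := by exact_mod_cast hd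
    have hd1 : (0 : ℝ) < (d : ℝ) - 1 := by linarith
    calc Rc * (X - 1) = lamD d * (pr * (X - 1)) := by rw [hRc]; ring
      _ ≤ lamD d * (((d : ℝ) - 1) ^ (d + 1) / (d : ℝ) ^ d) := by gcongr
      _ = 1 := by unfold lamD; field_simp
  have hR : x * pr ≤ (1 - δ) * Rc := by
    calc x * pr ≤ (1 - δ) * lamD d * pr := by gcongr
      _ = _ := by rw [hRc]; ring
  set R := x * pr with hRdef
  have hR0 : 0 ≤ R := by positivity
  have hqR : q * (1 + R) = R := by rw [hRdef]; nlinarith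
  have hq1 : q ≤ 1 := by
    by_contra h; push Not at h; nlinarith
  have hδ' : 0 < 1 - δ := by linarith
  have hqX : q * X ≤ 1 - δ / (1 + lamD d) := by
    have h1 : q * (1 + (1 - δ) * Rc) ≤ (1 - δ) * Rc := by nlinarith
    have h0 : 0 < 1 + (1 - δ) * Rc := by positivity
    have h2 : q * X * (1 + (1 - δ) * Rc) ≤ (1 - δ) * (1 + Rc) := by
      calc q * X * (1 + (1 - δ) * Rc) = (q * (1 + (1 - δ) * Rc)) * X := by ring
        _ ≤ ((1 - δ) * Rc) * X := by gcongr
        _ = (1 - δ) * (Rc * X) := by ring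
        _ ≤ (1 - δ) * (1 + Rc) := by gcongr; linarith
    have h3 : q * X ≤ 1 - δ / (1 + (1 - δ) * Rc) := by
      rw [← mul_le_mul_iff_left₀ h0]
      calc _ ≤ _ := h2
        _ = _ := by field_simp; ring
    have h4 : (1 - δ) * Rc ≤ lamD d := by
      have : Rc ≤ lamD d := by rw [hRc]; nlinarith
      nlinarith
    have : δ / (1 + lamD d) ≤ δ / (1 + (1 - δ) * Rc) := by gcongr
    linarith
  have hS : (∑ v ∈ Q, √(p v)) ^ 2 ≤ X := by
    calc (∑ v ∈ Q, √(p v)) ^ 2 ≤ #Q * ∑ v ∈ Q, (√(p v)) ^ 2 := sq_sum_le_card_mul_sum_sq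
      _ = #Q * ∑ v ∈ Q, p v := by
        rw [sum_congr rfl fun v hv => Real.sq_sqrt (hp v hv).1]
      _ ≤ X := by
        rw [hX]; gcongr
  have hε : epsD d δ ≤ 1 := by
    unfold epsD
    rw [div_le_one (by positivity)]; linarith
  refine abs_le_of_sq_le_sq' ?_ (by linarith) |>.2
  rw [mul_pow, Real.sq_sqrt hq0]
  calc q * (∑ v ∈ Q, √(p v)) ^ 2 ≤ q * X := by gcongr
    _ ≤ 1 - δ / (1 + lamD d) := hqX
    _ = 1 - 2 * epsD d δ := by unfold epsD; field_simp
    _ ≤ (1 - epsD d δ) ^ 2 := by nlinarith [sq_nonneg (epsD d δ)]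

variable (G : SimpleGraph V) [DecidableRel G.Adj] {x : V → ℝ}

lemma Dl_inter (W Q : Finset V) : Dl G x W Q = Dl G x W (Q ∩ W) := by
  unfold Dl
  have : W \ (Q ∩ W) = W \ Q := by ext; simp
  rw [this]

/-- Influence of a vertex with at most `d` neighbours in `W`, by induction on the size of `W`: when
the neighbours of `q` are deleted one at a time from `W.erase q`, each has at most `d` neighbours
left, because `q` is gone. -/
lemma infl_reduced (d : ℕ) (hd : 2 ≤ d) (hdeg : ∀ v, #(nbr G v) ≤ d + 1) (δ : ℝ) (hδ0 : 0 < δ)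
    (hδ1 : δ < 1) (hx : ∀ v, 0 < x v) (hxl : ∀ v, x v ≤ (1 - δ) * lamD d) :
    ∀ (n : ℕ) (W : Finset V), #W ≤ n → ∀ q ∈ W, #(nbr G q ∩ W) ≤ d →
      P G x W q * Infl G x W q ≤ 1 / epsD d δ * √(P G x W q) := by
  intro n
  induction n with
  | zero =>
    intro W hW q hq
    rw [Nat.le_zero, card_eq_zero] at hW
    simp [hW] at hq
  | succ n ih =>
    intro W hW q hq hQ
    have hε := epsD_pos hd hδ0
    set A := 1 / epsD d δ with hA
    have hA0 : 0 < A := by positivity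
    have hcard : #(nbr G q ∩ W.erase q) ≤ d :=
      (card_le_card (inter_subset_inter_left (erase_subset _ _))).trans hQ
    obtain ⟨p, h1, h2, h3⟩ := peel G hx A (nbr G q ∩ W.erase q) (W.erase q) inter_subset_right (by
      intro W' hW' r hr hrQ
      have hrq : q ∈ nbr G r := by
        have := (mem_nbr G).1 (mem_inter.1 hrQ).1
        exact (mem_nbr G).2 this.symm
      refine ih W' ?_ r hr ?_
      · have := card_le_card hW'
        rw [card_erase_of_mem hq] at this
        omega
      · have : nbr G r ∩ W' ⊆ (nbr G r).erase q := by
          intro v hv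
          rw [mem_inter] at hv
          exact mem_erase.2 ⟨ne_of_mem_erase (hW' hv.2), hv.1⟩
        have := card_le_card this
        rw [card_erase_of_mem hrq] at this
        have := hdeg r
        omega)
    have hp0 := P_nonneg G hx W q
    have hZ := Z_pos G hx W
    have hsd : W.erase q \ (nbr G q ∩ W.erase q) = W.erase q \ nbr G q := by ext; simp
    rw [← Dl_inter] at h3
    have hrec : P G x W q = x q * (1 - P G x W q) * ∏ v ∈ nbr G q ∩ W.erase q, (1 - p v) := by
      rw [← mul_left_inj' hZ.ne', P_mul_Z G hx hq, ← hsd, h2, ← one_sub_P_mul_Z G hx hq]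
      ring
    have hc := contraction d hd _ hcard p h1 δ hδ0 hδ1 (x q) _ (hx q).le (hxl q) hp0 hrec
    set p0 := P G x W q
    have hp01 : p0 ≤ √p0 := by
      have hlt := P_lt_one G hx W q
      exact Real.le_sqrt_of_sq_le (by nlinarith)
    have hsq : √p0 * √p0 = p0 := Real.mul_self_sqrt hp0
    have hs0 := Real.sqrt_nonneg p0
    unfold Infl
    calc p0 * (1 + Dl G x (W.erase q) (nbr G q))
        ≤ p0 * (1 + A * ∑ v ∈ nbr G q ∩ W.erase q, √(p v)) := by gcongr
      _ = p0 + A * √p0 * (√p0 * ∑ v ∈ nbr G q ∩ W.erase q, √(p v)) := by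
          rw [← hsq]; simp only [Real.sqrt_mul_self hs0]; ring
      _ ≤ √p0 + A * √p0 * (1 - epsD d δ) := by gcongr
      _ = A * √p0 := by rw [hA]; field_simp; ring

/-- The spectral independence constant. -/
noncomputable def KSI (d : ℕ) (δ : ℝ) : ℝ := 1 + 1 / epsD d δ * (d + 1)

/-- Influence of an arbitrary vertex: its neighbours fall under `infl_reduced` once it is deleted. -/
lemma infl_bound (d : ℕ) (hd : 2 ≤ d) (hdeg : ∀ v, #(nbr G v) ≤ d + 1) (δ : ℝ) (hδ0 : 0 < δ)
    (hδ1 : δ < 1) (hx : ∀ v, 0 < x v) (hxl : ∀ v, x v ≤ (1 - δ) * lamD d) (W : Finset V) (q : V) :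
    Infl G x W q ≤ KSI d δ := by
  have hε := epsD_pos hd hδ0
  set A := 1 / epsD d δ with hA
  have hA0 : 0 < A := by positivity
  obtain ⟨p, h1, h2, h3⟩ := peel G hx A (nbr G q ∩ W.erase q) (W.erase q) inter_subset_right (by
      intro W' hW' r hr hrQ
      have hrq : q ∈ nbr G r := by
        have := (mem_nbr G).1 (mem_inter.1 hrQ).1
        exact (mem_nbr G).2 this.symm
      refine infl_reduced G d hd hdeg δ hδ0 hδ1 hx hxl _ W' le_rfl r hr ?_
      have : nbr G r ∩ W' ⊆ (nbr G r).erase q := by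
        intro v hv
        rw [mem_inter] at hv
        exact mem_erase.2 ⟨ne_of_mem_erase (hW' hv.2), hv.1⟩
      have := card_le_card this
      rw [card_erase_of_mem hrq] at this
      have := hdeg r
      omega)
  rw [← Dl_inter] at h3
  unfold Infl KSI
  have h4 : ∑ v ∈ nbr G q ∩ W.erase q, √(p v) ≤ d + 1 := by
    calc _ ≤ ∑ v ∈ nbr G q ∩ W.erase q, (1 : ℝ) := sum_le_sum fun v hv => by
            exact Real.sqrt_le_one.2 (h1 v hv).2.le
      _ = #(nbr G q ∩ W.erase q) := by simp
      _ ≤ #(nbr G q) := by exact_mod_cast card_le_card inter_subset_left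
      _ ≤ d + 1 := by exact_mod_cast hdeg q
  calc 1 + Dl G x (W.erase q) (nbr G q) ≤ 1 + A * _ := by linarith [h3]
    _ ≤ 1 + A * (d + 1) := by gcongr

/-- The joint probability that both `i` and `j` are occupied. -/
noncomputable def P2 (x : V → ℝ) (U : Finset V) (i j : V) : ℝ :=
  Zf G x U (fun I => (if i ∈ I then 1 else 0) * (if j ∈ I then 1 else 0)) / Z G x U

/-- The absolute row sums of the covariance matrix of the occupation indicators are, up to the
variance factor, the total influences. -/
lemma cov_row (hx : ∀ v, 0 < x v) (U : Finset V) {i : V} (hi : i ∈ U) :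
    ∑ j, |P2 G x U i j - P G x U i * P G x U j|
      = P G x U i * (1 - P G x U i) * Infl G x U i := by
  have hp := P_nonneg G hx U i
  have hp1 := P_lt_one G hx U i
  unfold Infl Dl
  rw [mul_add, mul_one, ← add_sum_erase _ _ (mem_univ i)]
  congr 1
  · have : P2 G x U i i = P G x U i := by
      unfold P2 P
      congr 1
      exact Zf_congr G fun I _ => by split_ifs <;> norm_num
    rw [this, abs_of_nonneg (by nlinarith)]; ring
  · rw [← add_sum_erase (a := i) _ _ (mem_univ i), P_notMem G (notMem_erase i U),
      P_notMem G (fun h => by simpa using h : i ∉ U.erase i \ nbr G i), sub_zero, abs_zero, zero_add,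
      mul_sum]
    refine sum_congr rfl fun j hj => ?_
    have hc : 0 ≤ P G x U i * (1 - P G x U i) := mul_nonneg hp (by linarith)
    rw [P2, joint G hx hi (ne_of_mem_erase hj), P_total G hx hi (ne_of_mem_erase hj),
      show P G x U i * (1 - P G x U i) * |P G x (U.erase i \ nbr G i) j - P G x (U.erase i) j| =
        |P G x U i * (1 - P G x U i) * (P G x (U.erase i \ nbr G i) j - P G x (U.erase i) j)| by
          rw [abs_mul _ (_ - _), abs_of_nonneg hc]]
    congr 1; ring

lemma sum_ind (U I : Finset V) (hI : I ⊆ U) (y : V → ℝ) :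
    ∑ v ∈ I, y v = ∑ v ∈ U, y v * (if v ∈ I then 1 else 0) := by
  simp only [mul_ite, mul_one, mul_zero]
  rw [← sum_filter, filter_mem_eq_inter, inter_eq_right.2 hI]

lemma Zf_sum {ι : Type} (s : Finset ι) (U : Finset V) (F : ι → Finset V → ℝ) :
    Zf G x U (fun I => ∑ i ∈ s, F i I) = ∑ i ∈ s, Zf G x U (F i) := by
  unfold Zf; simp only [mul_sum]; rw [sum_comm]

lemma Zf_mul (c : ℝ) (U : Finset V) (F : Finset V → ℝ) :
    Zf G x U (fun I => c * F I) = c * Zf G x U F := by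
  unfold Zf; rw [mul_sum]; exact sum_congr rfl fun I _ => by ring

lemma mean_lin (U : Finset V) (y : V → ℝ) :
    Zf G x U (fun I => ∑ v ∈ I, y v) / Z G x U = ∑ v ∈ U, y v * P G x U v := by
  rw [Zf_congr G (fun I hI => sum_ind U I hI y), Zf_sum, sum_div]
  refine sum_congr rfl fun v _ => ?_
  rw [Zf_mul, P, mul_div_assoc]

/-- Spectral independence, as a variance bound for linear statistics: the covariance matrix is
symmetric, so its quadratic form is bounded by its maximal absolute row sum. -/
lemma var_bound (d : ℕ) (hd : 2 ≤ d) (hdeg : ∀ v, #(nbr G v) ≤ d + 1) (δ : ℝ) (hδ0 : 0 < δ)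
    (hδ1 : δ < 1) (hx : ∀ v, 0 < x v) (hxl : ∀ v, x v ≤ (1 - δ) * lamD d) (U : Finset V)
    (y : V → ℝ) :
    Zf G x U (fun I => (∑ v ∈ I, y v) ^ 2) / Z G x U
      - (Zf G x U (fun I => ∑ v ∈ I, y v) / Z G x U) ^ 2 ≤ KSI d δ * ∑ v ∈ U, y v ^ 2 := by
  have hsq : Zf G x U (fun I => (∑ v ∈ I, y v) ^ 2) / Z G x U
      = ∑ i ∈ U, ∑ j ∈ U, y i * y j * P2 G x U i j := by
    have : ∀ I ⊆ U, (∑ v ∈ I, y v) ^ 2 = ∑ i ∈ U, ∑ j ∈ U,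
        (y i * y j) * ((if i ∈ I then 1 else 0) * (if j ∈ I then 1 else 0)) := by
      intro I hI
      rw [sum_ind U I hI y, sq, sum_mul_sum]
      exact sum_congr rfl fun i _ => sum_congr rfl fun j _ => by ring
    rw [Zf_congr G this, Zf_sum, sum_div]
    refine sum_congr rfl fun i _ => ?_
    rw [Zf_sum, sum_div]
    refine sum_congr rfl fun j _ => ?_
    rw [Zf_mul, P2, mul_div_assoc]
  rw [hsq, mean_lin, sq, sum_mul_sum, ← sum_sub_distrib]
  set c : V → V → ℝ := fun i j => |P2 G x U i j - P G x U i * P G x U j| with hc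
  have hcs : ∀ i j, c i j = c j i := fun i j => by
    simp only [hc]
    rw [mul_comm (P G x U i)]
    congr 2
    unfold P2
    congr 1
    exact Zf_congr G fun I _ => mul_comm _ _
  have hrow : ∀ i ∈ U, ∑ j ∈ U, c i j ≤ KSI d δ := by
    intro i hi
    have hp := P_nonneg G hx U i
    have hp1 := P_lt_one G hx U i
    have hI := infl_bound G d hd hdeg δ hδ0 hδ1 hx hxl U i
    have hI0 : 0 ≤ Infl G x U i := add_nonneg zero_le_one (Dl_nonneg G _ _)
    calc ∑ j ∈ U, c i j ≤ ∑ j, c i j :=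
          sum_le_sum_of_subset_of_nonneg (subset_univ _) fun _ _ _ => abs_nonneg _
      _ = P G x U i * (1 - P G x U i) * Infl G x U i := cov_row G hx U hi
      _ ≤ 1 * Infl G x U i := by gcongr; nlinarith
      _ ≤ _ := by rwa [one_mul]
  calc ∑ i ∈ U, (∑ j ∈ U, y i * y j * P2 G x U i j
        - ∑ j ∈ U, y i * P G x U i * (y j * P G x U j))
      = ∑ i ∈ U, ∑ j ∈ U, (y i * y j) * (P2 G x U i j - P G x U i * P G x U j) := by
        refine sum_congr rfl fun i _ => ?_
        rw [← sum_sub_distrib]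
        exact sum_congr rfl fun j _ => by ring
    _ ≤ ∑ i ∈ U, ∑ j ∈ U, (y i ^ 2 / 2 * c i j + y j ^ 2 / 2 * c i j) := by
        refine sum_le_sum fun i _ => sum_le_sum fun j _ => ?_
        calc _ ≤ |(y i * y j) * (P2 G x U i j - P G x U i * P G x U j)| := le_abs_self _
          _ = |y i * y j| * c i j := abs_mul _ _
          _ ≤ (y i ^ 2 / 2 + y j ^ 2 / 2) * c i j := by
            have : 0 ≤ c i j := abs_nonneg _
            gcongr
            rw [abs_le]
            constructor <;> nlinarith [sq_nonneg (y i + y j), sq_nonneg (y i - y j)]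
          _ = _ := by ring
    _ = ∑ i ∈ U, y i ^ 2 * ∑ j ∈ U, c i j := by
        simp only [sum_add_distrib]
        have : ∑ i ∈ U, ∑ j ∈ U, y j ^ 2 / 2 * c i j = ∑ i ∈ U, ∑ j ∈ U, y i ^ 2 / 2 * c i j := by
          rw [sum_comm]
          exact sum_congr rfl fun i _ => sum_congr rfl fun j _ => by rw [hcs]
        rw [this, ← sum_add_distrib]
        refine sum_congr rfl fun i _ => ?_
        rw [← sum_add_distrib, mul_sum]
        exact sum_congr rfl fun j _ => by ring
    _ ≤ ∑ i ∈ U, y i ^ 2 * KSI d δ := by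
        refine sum_le_sum fun i hi => mul_le_mul_of_nonneg_left (hrow i hi) (sq_nonneg _)
    _ = _ := by rw [← sum_mul, mul_comm]

end HC

/-! ### Sub-Gaussian linear statistics -/

namespace HC

/-- Second-order Taylor bound at `t = 1` for the log-Laplace transform
`t ↦ log ∑ w i exp (t c i)`, whose second derivative is the variance of `c` under the tilted
weights. -/
lemma taylor {ι : Type} (s : Finset ι) (w c : ι → ℝ) (hw : ∀ i ∈ s, 0 ≤ w i)
    (hpos : ∃ i ∈ s, 0 < w i) (B : ℝ)
    (hB : ∀ t ∈ Set.Icc (0 : ℝ) 1,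
      (∑ i ∈ s, w i * Real.exp (t * c i) * c i ^ 2) / (∑ i ∈ s, w i * Real.exp (t * c i))
      - ((∑ i ∈ s, w i * Real.exp (t * c i) * c i) / (∑ i ∈ s, w i * Real.exp (t * c i))) ^ 2 ≤ B) :
    (∑ i ∈ s, w i * Real.exp (c i)) ≤
      (∑ i ∈ s, w i) * Real.exp ((∑ i ∈ s, w i * c i) / (∑ i ∈ s, w i) + B / 2) := by
  set M : ℝ → ℝ := fun t => ∑ i ∈ s, w i * Real.exp (t * c i) with hM
  set M1 : ℝ → ℝ := fun t => ∑ i ∈ s, w i * Real.exp (t * c i) * c i with hM1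
  set M2 : ℝ → ℝ := fun t => ∑ i ∈ s, w i * Real.exp (t * c i) * c i ^ 2 with hM2
  have hMpos : ∀ t, 0 < M t := fun t => by
    obtain ⟨i, hi, hwi⟩ := hpos
    exact sum_pos' (fun j hj => mul_nonneg (hw j hj) (Real.exp_pos _).le)
      ⟨i, hi, mul_pos hwi (Real.exp_pos _)⟩
  have he : ∀ (i : ι) (t : ℝ), HasDerivAt (fun t => Real.exp (t * c i)) (Real.exp (t * c i) * c i) t :=
    fun i t => by
      have := ((hasDerivAt_id t).mul_const (c i)).exp
      simpa using this
  have hd : ∀ t, HasDerivAt M (M1 t) t := fun t => by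
    refine (HasDerivAt.fun_sum (u := s) fun i _ => (he i t).const_mul (w i)).congr_deriv ?_
    exact sum_congr rfl fun i _ => by ring
  have hd1 : ∀ t, HasDerivAt M1 (M2 t) t := fun t => by
    refine (HasDerivAt.fun_sum (u := s) fun i _ =>
      ((he i t).const_mul (w i)).mul_const (c i)).congr_deriv ?_
    exact sum_congr rfl fun i _ => by ring
  have hq : ∀ t, HasDerivAt (fun t => M1 t / M t) (M2 t / M t - (M1 t / M t) ^ 2) t := fun t => by
    refine ((hd1 t).fun_div (hd t) (hMpos t).ne').congr_deriv ?_
    have := (hMpos t).ne'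
    field_simp
  have hl : ∀ t, HasDerivAt (fun t => Real.log (M t)) (M1 t / M t) t := fun t =>
    (hd t).log (hMpos t).ne'
  have h1 : AntitoneOn (fun t => M1 t / M t - B * t) (Set.Icc 0 1) := by
    have hD : ∀ t, HasDerivAt (fun t => M1 t / M t - B * t)
        (M2 t / M t - (M1 t / M t) ^ 2 - B) t := fun t =>
      ((hq t).sub ((hasDerivAt_id t).const_mul B)).congr_deriv (by simp)
    refine antitoneOn_of_deriv_nonpos (convex_Icc 0 1)
      (fun t _ => (hD t).continuousAt.continuousWithinAt)
      (fun t _ => (hD t).differentiableAt.differentiableWithinAt) fun t ht => ?_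
    rw [(hD t).deriv]
    have := hB t (interior_subset ht)
    linarith
  have h2 : AntitoneOn (fun t => Real.log (M t) - M1 0 / M 0 * t - B / 2 * t ^ 2)
      (Set.Icc 0 1) := by
    have hD : ∀ t, HasDerivAt (fun t => Real.log (M t) - M1 0 / M 0 * t - B / 2 * t ^ 2)
        (M1 t / M t - M1 0 / M 0 - B * t) t := fun t => by
      refine (((hl t).sub ((hasDerivAt_id t).const_mul (M1 0 / M 0))).sub
        (((hasDerivAt_id t).pow 2).const_mul (B / 2))).congr_deriv ?_
      simp; ring
    refine antitoneOn_of_deriv_nonpos (convex_Icc 0 1)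
      (fun t _ => (hD t).continuousAt.continuousWithinAt)
      (fun t _ => (hD t).differentiableAt.differentiableWithinAt) fun t ht => ?_
    rw [(hD t).deriv]
    have := h1 (by simp : (0 : ℝ) ∈ Set.Icc (0 : ℝ) 1) (interior_subset ht) (interior_subset ht).1
    simp only [mul_zero, sub_zero] at this
    linarith
  have h3 := h2 (by simp : (0 : ℝ) ∈ Set.Icc (0 : ℝ) 1) (by simp : (1 : ℝ) ∈ Set.Icc (0 : ℝ) 1)
    zero_le_one
  simp only [mul_zero, sub_zero, mul_one, one_pow, ne_eq, OfNat.ofNat_ne_zero, not_false_eq_true,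
    zero_pow] at h3
  have h4 : M 1 ≤ M 0 * Real.exp (M1 0 / M 0 + B / 2) := by
    rw [← Real.log_le_log_iff (hMpos 1) (mul_pos (hMpos 0) (Real.exp_pos _)),
      Real.log_mul (hMpos 0).ne' (Real.exp_pos _).ne', Real.log_exp]
    linarith
  simpa [hM, hM1] using h4

variable {V : Type} [Fintype V] [DecidableEq V] (G : SimpleGraph V) [DecidableRel G.Adj]

/-- An exponential tilt by a linear statistic is a change of fugacities. -/
lemma wt_tilt (lam t : ℝ) (y : V → ℝ) (I : Finset V) :
    wt G (fun v => lam * Real.exp (t * y v)) I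
      = wt G (fun _ => lam) I * Real.exp (t * ∑ v ∈ I, y v) := by
  unfold wt
  split_ifs
  · rw [prod_mul_distrib, mul_sum, Real.exp_sum]
  · simp

/-- Linear statistics of the hard-core model are sub-Gaussian, as long as all fugacities tilted by
`y` remain below the threshold. -/
lemma subgaussian (d : ℕ) (hd : 2 ≤ d) (hdeg : ∀ v, #(nbr G v) ≤ d + 1) (δ : ℝ) (hδ0 : 0 < δ)
    (hδ1 : δ < 1) (lam y0 : ℝ) (hlam : 0 < lam) (hy0 : lam * Real.exp y0 ≤ (1 - δ) * lamD d)
    (y : V → ℝ) (hy : ∀ v, |y v| ≤ y0) (U : Finset V) :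
    Zf G (fun _ => lam) U (fun I => Real.exp (∑ v ∈ I, y v)) ≤ Z G (fun _ => lam) U *
      Real.exp (Zf G (fun _ => lam) U (fun I => ∑ v ∈ I, y v) / Z G (fun _ => lam) U
        + KSI d δ * (∑ v ∈ U, y v ^ 2) / 2) := by
  have h := taylor U.powerset (wt G fun _ => lam) (fun I => ∑ v ∈ I, y v)
    (fun I _ => wt_nonneg G (fun _ => hlam) I) ⟨∅, by simp, by simp [wt, ind_empty]⟩
    (KSI d δ * ∑ v ∈ U, y v ^ 2) ?_
  · simpa [Zf, Z] using h
  · intro t ht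
    have := var_bound G d hd hdeg δ hδ0 hδ1 (x := fun v => lam * Real.exp (t * y v))
      (fun v => by positivity) (fun v => ?_) U y
    · simpa only [Zf, Z, wt_tilt, mul_one] using this
    · refine le_trans ?_ hy0
      have h1 : t * y v ≤ y0 := by
        have := hy v
        calc t * y v ≤ |t * y v| := le_abs_self _
          _ = t * |y v| := by rw [abs_mul, abs_of_nonneg ht.1]
          _ ≤ 1 * |y v| := by gcongr; exact ht.2
          _ ≤ y0 := by linarith
      gcongr

end HC

/-! ### Conditional expectations and entropic independence -/

namespace HC

section Cond
variable {Ω : Type} [Fintype Ω] {β γ : Type} [DecidableEq β] [DecidableEq γ]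

/-- Expectation with respect to the weights `μ`, which need not have total mass `1`. -/
def ex (μ f : Ω → ℝ) : ℝ := ∑ ω, μ ω * f ω

/-- Mass of the fibre of `π` through `ω`. -/
def den (μ : Ω → ℝ) (π : Ω → β) (ω : Ω) : ℝ := ∑ ω', if π ω' = π ω then μ ω' else 0

/-- Conditional expectation of `f` given `π`. -/
noncomputable def cE (μ : Ω → ℝ) (π : Ω → β) (f : Ω → ℝ) (ω : Ω) : ℝ :=
  (∑ ω', if π ω' = π ω then μ ω' * f ω' else 0) / den μ π ω

/-- `g` is a function of `π`. -/
def Meas (π : Ω → β) (g : Ω → ℝ) : Prop := ∀ ω ω', π ω = π ω' → g ω = g ω'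

variable {μ : Ω → ℝ} (hμ : ∀ ω, 0 < μ ω) {π : Ω → β} {π' : Ω → γ}
include hμ

lemma den_pos (ω : Ω) : 0 < den μ π ω :=
  sum_pos' (fun ω' _ => by split_ifs <;> simp [(hμ ω').le]) ⟨ω, mem_univ _, by simp [hμ ω]⟩

omit hμ in
lemma den_congr {ω ω' : Ω} (h : π ω = π ω') : den μ π ω = den μ π ω' := by
  unfold den; rw [h]

omit hμ in
lemma cE_meas (f : Ω → ℝ) : Meas π (cE μ π f) := fun ω ω' h => by
  unfold cE den; rw [h]

omit hμ in
lemma cE_mul {g : Ω → ℝ} (hg : Meas π g) (f : Ω → ℝ) (ω : Ω) :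
    cE μ π (fun ω => g ω * f ω) ω = g ω * cE μ π f ω := by
  unfold cE
  rw [← mul_div_assoc, mul_sum]
  congr 1
  refine sum_congr rfl fun ω' _ => ?_
  split_ifs with h
  · change μ ω' * (g ω' * f ω') = _
    rw [hg ω' ω h]; ring
  · simp

omit hμ in
lemma cE_cmul (c : ℝ) (f : Ω → ℝ) (ω : Ω) :
    cE μ π (fun ω => c * f ω) ω = c * cE μ π f ω := cE_mul (fun _ _ _ => rfl) f ω

lemma cE_one (ω : Ω) : cE μ π (fun _ => 1) ω = 1 := by
  have := (den_pos hμ (π := π) ω).ne'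
  unfold cE
  simp only [mul_one]
  exact div_self this

lemma cE_of_meas {g : Ω → ℝ} (hg : Meas π g) (ω : Ω) : cE μ π g ω = g ω := by
  have := cE_mul (μ := μ) hg (fun _ => 1) ω
  rw [cE_one hμ] at this
  simpa using this

omit hμ in
lemma cE_sum {ι : Type} (t : Finset ι) (f : ι → Ω → ℝ) (ω : Ω) :
    cE μ π (fun ω => ∑ i ∈ t, f i ω) ω = ∑ i ∈ t, cE μ π (f i) ω := by
  unfold cE
  rw [← sum_div, sum_comm]
  congr 1
  refine sum_congr rfl fun ω' _ => ?_
  split_ifs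
  · rw [mul_sum]
  · simp

omit hμ in
lemma cE_add (f g : Ω → ℝ) (ω : Ω) :
    cE μ π (fun ω => f ω + g ω) ω = cE μ π f ω + cE μ π g ω := by
  unfold cE
  rw [← add_div, ← sum_add_distrib]
  congr 1
  refine sum_congr rfl fun ω' _ => ?_
  split_ifs <;> ring

omit hμ in
lemma cE_sub (f g : Ω → ℝ) (ω : Ω) :
    cE μ π (fun ω => f ω - g ω) ω = cE μ π f ω - cE μ π g ω := by
  have := cE_add (μ := μ) (π := π) f (fun ω => -1 * g ω) ω
  rw [cE_cmul] at this
  simpa [← sub_eq_add_neg] using this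

lemma cE_mono' {f g : Ω → ℝ} {ω : Ω} (h : ∀ ω', π ω' = π ω → f ω' ≤ g ω') :
    cE μ π f ω ≤ cE μ π g ω := by
  unfold cE
  have := den_pos hμ (π := π) ω
  gcongr with ω' _
  split_ifs with hh
  · exact mul_le_mul_of_nonneg_left (h ω' hh) (hμ ω').le
  · exact le_rfl

lemma cE_mono {f g : Ω → ℝ} (h : ∀ ω, f ω ≤ g ω) (ω : Ω) : cE μ π f ω ≤ cE μ π g ω :=
  cE_mono' hμ fun ω' _ => h ω'

lemma cE_nonneg {f : Ω → ℝ} (h : ∀ ω, 0 ≤ f ω) (ω : Ω) : 0 ≤ cE μ π f ω := by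
  have := cE_mono hμ (π := π) (f := fun _ => 0 * 1) (g := f) (by simpa using h) ω
  rw [cE_cmul] at this
  simpa using this

lemma cE_pos {f : Ω → ℝ} (h : ∀ ω, 0 < f ω) (ω : Ω) : 0 < cE μ π f ω := by
  refine div_pos (sum_pos' (fun ω' _ => ?_) ⟨ω, mem_univ _, ?_⟩) (den_pos hμ ω)
  · split_ifs
    · exact (mul_pos (hμ ω') (h ω')).le
    · exact le_rfl
  · simp [mul_pos (hμ ω) (h ω)]

/-- A nonnegative function is at most its fibre mean divided by the conditional mass. -/
lemma le_cE {f : Ω → ℝ} (h : ∀ ω, 0 ≤ f ω) (ω : Ω) : μ ω * f ω ≤ den μ π ω * cE μ π f ω := by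
  unfold cE
  rw [mul_div_cancel₀ _ (den_pos hμ ω).ne']
  have := single_le_sum (f := fun ω' => if π ω' = π ω then μ ω' * f ω' else 0) (s := univ)
    (fun ω' _ => by
      split_ifs
      · exact mul_nonneg (hμ ω').le (h ω')
      · exact le_rfl) (mem_univ ω)
  simpa using this

/-- Defining property of the conditional expectation, against `π`-measurable test functions. -/
lemma ex_mul_cE {g : Ω → ℝ} (hg : Meas π g) (f : Ω → ℝ) :
    ex μ (fun ω => g ω * cE μ π f ω) = ex μ (fun ω => g ω * f ω) := by
  unfold ex cE
  have h1 : ∀ ω, μ ω * (g ω * ((∑ ω', if π ω' = π ω then μ ω' * f ω' else 0) / den μ π ω))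
      = ∑ ω', (if π ω = π ω' then μ ω else 0) * (μ ω' * f ω' * g ω' / den μ π ω') := by
    intro ω
    rw [sum_div, mul_sum, mul_sum]
    refine sum_congr rfl fun ω' _ => ?_
    by_cases h : π ω = π ω'
    · rw [if_pos h, if_pos h.symm, hg ω ω' h, den_congr h]; ring
    · rw [if_neg h, if_neg (Ne.symm h)]; ring
  simp only [h1]
  rw [sum_comm]
  refine sum_congr rfl fun ω' _ => ?_
  rw [← sum_mul]
  change den μ π ω' * _ = _
  have := (den_pos hμ (π := π) ω').ne'
  field_simp

lemma ex_cE (f : Ω → ℝ) : ex μ (cE μ π f) = ex μ f := by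
  have := ex_mul_cE hμ (π := π) (g := fun _ => 1) (fun _ _ _ => rfl) f
  simpa using this

/-- Tower property: `π` is a function of `π'`. -/
lemma tower (h : ∀ ω ω', π' ω = π' ω' → π ω = π ω') (f : Ω → ℝ) (ω : Ω) :
    cE μ π (cE μ π' f) ω = cE μ π f ω := by
  unfold cE
  congr 1
  have := ex_mul_cE hμ (π := π') (g := fun ω' => if π ω' = π ω then 1 else 0)
    (fun a b hab => by simp [h a b hab]) f
  simp only [ex] at this
  have e : ∀ g : Ω → ℝ, ∑ ω', μ ω' * ((if π ω' = π ω then 1 else 0) * g ω')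
      = ∑ ω', if π ω' = π ω then μ ω' * g ω' else 0 := fun g =>
    sum_congr rfl fun ω' _ => by split_ifs <;> simp
  rw [e, e] at this
  exact this

omit hμ in
lemma ex_sum {ι : Type} (t : Finset ι) (f : ι → Ω → ℝ) :
    ex μ (fun ω => ∑ i ∈ t, f i ω) = ∑ i ∈ t, ex μ (f i) := by
  unfold ex; simp only [mul_sum]; rw [sum_comm]

omit hμ in
lemma ex_cmul (c : ℝ) (f : Ω → ℝ) : ex μ (fun ω => c * f ω) = c * ex μ f := by
  unfold ex; rw [mul_sum]; exact sum_congr rfl fun _ _ => by ring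

omit hμ in
lemma ex_add (f g : Ω → ℝ) : ex μ (fun ω => f ω + g ω) = ex μ f + ex μ g := by
  unfold ex; rw [← sum_add_distrib]; exact sum_congr rfl fun _ _ => by ring

omit hμ in
lemma ex_sub (f g : Ω → ℝ) : ex μ (fun ω => f ω - g ω) = ex μ f - ex μ g := by
  unfold ex; rw [← sum_sub_distrib]; exact sum_congr rfl fun _ _ => by ring

lemma ex_mono {f g : Ω → ℝ} (h : ∀ ω, f ω ≤ g ω) : ex μ f ≤ ex μ g :=
  sum_le_sum fun ω _ => mul_le_mul_of_nonneg_left (h ω) (hμ ω).le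

lemma ex_nonneg {f : Ω → ℝ} (h : ∀ ω, 0 ≤ f ω) : 0 ≤ ex μ f :=
  sum_nonneg fun ω _ => mul_nonneg (hμ ω).le (h ω)

/-- The difference of entropies of two nested conditional expectations is a relative entropy. -/
lemma ent_incr (h : ∀ ω ω', π' ω = π' ω' → π ω = π ω') {f : Ω → ℝ} (hf : ∀ ω, 0 < f ω) :
    ex μ (fun ω => cE μ π' f ω * Real.log (cE μ π' f ω))
      - ex μ (fun ω => cE μ π f ω * Real.log (cE μ π f ω))
      = ex μ (fun ω => cE μ π' f ω * Real.log (cE μ π' f ω / cE μ π f ω)) := by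
  have h1 : ex μ (fun ω => cE μ π f ω * Real.log (cE μ π f ω))
      = ex μ (fun ω => cE μ π' f ω * Real.log (cE μ π f ω)) := by
    have := ex_mul_cE hμ (π := π) (g := fun ω => Real.log (cE μ π f ω))
      (fun a b hab => congrArg Real.log (cE_meas f a b hab)) (cE μ π' f)
    have h2 : cE μ π (cE μ π' f) = cE μ π f := funext (tower hμ h f)
    rw [h2] at this
    simpa only [mul_comm] using this
  rw [h1, ← ex_sub]
  congr 1
  funext ω
  rw [Real.log_div (cE_pos hμ hf ω).ne' (cE_pos hμ hf ω).ne']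
  ring

end Cond

section Ent
variable {Ω V : Type} [Fintype Ω] [Fintype V] [DecidableEq V]

/-- Conditional expectation given the spins in `R`, where `s ω` is the set of occupied vertices
of `ω`. -/
noncomputable def C (μ : Ω → ℝ) (s : Ω → Finset V) (R : Finset V) : (Ω → ℝ) → Ω → ℝ :=
  cE μ (fun ω => s ω ∩ R)

/-- Entropy of the conditional expectation of `f` given the spins in `R`, without the term in the
mean of `f`, which is the same for all `R`. -/
noncomputable def h (μ : Ω → ℝ) (s : Ω → Finset V) (f : Ω → ℝ) (R : Finset V) : ℝ :=
  ex μ fun ω => C μ s R f ω * Real.log (C μ s R f ω)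

/-- Mean conditional entropy given the spins in `R`. -/
noncomputable def phi (μ : Ω → ℝ) (s : Ω → Finset V) (f : Ω → ℝ) (R : Finset V) : ℝ :=
  h μ s f univ - h μ s f R

lemma inter_sub {R R' : Finset V} (hR : R ⊆ R') {A B : Finset V} (h : A ∩ R' = B ∩ R') :
    A ∩ R = B ∩ R := by
  rw [← inter_eq_right.2 hR, ← inter_assoc, ← inter_assoc, h]

variable {μ : Ω → ℝ} (hμ : ∀ ω, 0 < μ ω) {s : Ω → Finset V} (hs : Function.Injective s)
include hμ

lemma C_tower {R R' : Finset V} (hR : R ⊆ R') (f : Ω → ℝ) (ω : Ω) :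
    C μ s R (C μ s R' f) ω = C μ s R f ω :=
  tower hμ (fun _ _ h => inter_sub hR h) f ω

include hs in
lemma C_univ (f : Ω → ℝ) : C μ s univ f = f :=
  funext fun ω => cE_of_meas hμ (fun a b hab => by
    have e : a = b := hs (by simpa using hab)
    rw [e]) ω

lemma h_incr {R R' : Finset V} (hR : R ⊆ R') {f : Ω → ℝ} (hf : ∀ ω, 0 < f ω) :
    h μ s f R' - h μ s f R
      = ex μ (fun ω => C μ s R' f ω * Real.log (C μ s R' f ω / C μ s R f ω)) :=
  ent_incr hμ (fun _ _ h => inter_sub hR h) hf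

lemma h_mono {R R' : Finset V} (hR : R ⊆ R') {f : Ω → ℝ} (hf : ∀ ω, 0 < f ω) :
    h μ s f R ≤ h μ s f R' := by
  rw [← sub_nonneg, h_incr hμ hR hf]
  have h1 : ex μ (fun ω => C μ s R' f ω - C μ s R f ω) = 0 := by
    rw [ex_sub]; unfold C; rw [ex_cE hμ, ex_cE hμ, sub_self]
  rw [← h1]
  refine ex_mono hμ fun ω => ?_
  have a := cE_pos hμ (π := fun ω => s ω ∩ R') hf ω
  have b := cE_pos hμ (π := fun ω => s ω ∩ R) hf ω
  have := Real.one_sub_inv_le_log_of_pos (div_pos a b)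
  rw [inv_div] at this
  change C μ s R' f ω - C μ s R f ω ≤ _
  calc C μ s R' f ω - C μ s R f ω = C μ s R' f ω * (1 - C μ s R f ω / C μ s R' f ω) := by
        have := a.ne'
        unfold C; field_simp
    _ ≤ _ := mul_le_mul_of_nonneg_left this a.le

/-- Marginal boundedness: given the spins in `R`, every feasible spin at `v` has conditional
probability at least `c`. -/
def MB (μ : Ω → ℝ) (s : Ω → Finset V) (c : ℝ) : Prop :=
  ∀ (R : Finset V) (v : V) (ω : Ω),
    c * den μ (fun ω => s ω ∩ R) ω ≤ den μ (fun ω => s ω ∩ insert v R) ω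

/-- Conditional sub-Gaussianity: given the spins in `R`, a sum of centred one-site functions bounded
by `y0` has conditional exponential moment at most the exponential of `K` times the sum of the
conditional variances. -/
def SG (μ : Ω → ℝ) (s : Ω → Finset V) (y0 K : ℝ) : Prop :=
  ∀ (R : Finset V) (u : V → Ω → ℝ), (∀ v, Meas (fun ω => s ω ∩ insert v R) (u v)) →
    (∀ v ω, |u v ω| ≤ y0) → (∀ v ω, C μ s R (u v) ω = 0) → ∀ ω,
    C μ s R (fun ω => Real.exp (∑ v ∈ univ \ R, u v ω)) ω
      ≤ Real.exp (K * ∑ v ∈ univ \ R, C μ s R (fun ω => u v ω ^ 2) ω)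

omit hμ in
lemma C_meas {R R' : Finset V} (hR : R ⊆ R') (f : Ω → ℝ) :
    Meas (fun ω => s ω ∩ R') (C μ s R f) :=
  fun a b hab => cE_meas f a b (inter_sub hR hab)

/-- Revealing one more spin increases the conditional mean of a nonnegative function at most by the
factor `1 / c`. -/
lemma MB_le {c : ℝ} (hMB : MB μ s c) (hc : 0 < c) {f : Ω → ℝ} (hf : ∀ ω, 0 ≤ f ω)
    (R : Finset V) (v : V) (ω : Ω) : C μ s (insert v R) f ω ≤ C μ s R f ω / c := by
  unfold C cE
  have h1 := den_pos hμ (π := fun ω => s ω ∩ R) ω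
  have h2 := den_pos hμ (π := fun ω => s ω ∩ insert v R) ω
  have h3 := hMB R v ω
  rw [div_div]
  refine div_le_div₀ ?_ ?_ (by positivity) (by linarith)
  · exact sum_nonneg fun ω' _ => by
      split_ifs
      · exact mul_nonneg (hμ ω').le (hf ω')
      · exact le_rfl
  · refine sum_le_sum fun ω' _ => ?_
    have := mul_nonneg (hμ ω').le (hf ω')
    split_ifs with h4 h5 h5
    · exact le_rfl
    · exact absurd (inter_sub (subset_insert _ _) h4) h5
    · exact this
    · exact le_rfl

include hs in
/-- Entropic independence from conditional sub-Gaussianity. With `F v` the density of `f`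
conditioned on the spin at `v`, relative to its conditional mean given `R`, the variational
principle is applied to the test function `∑ ε (F v - 1)`. Its mean under `f` is `ε` times the sum
of the one-site chi-square divergences, and its log-Laplace transform is of order `ε²` times the
same sum; chi-square dominates entropy. -/
lemma entropic_independence {c y0 K ε : ℝ} (hc : 0 < c) (hc1 : c ≤ 1) (hMB : MB μ s c)
    (hSG : SG μ s y0 K) (hε : 0 < ε) (hε1 : ε ≤ c * y0) (hε2 : K * ε ≤ 1 / 2)
    {f : Ω → ℝ} (hf : ∀ ω, 0 < f ω) (R : Finset V) :
    ∑ v ∈ univ \ R, (h μ s f (insert v R) - h μ s f R) ≤ 2 / ε * phi μ s f R := by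
  set g0 := C μ s R f with hg0
  have hg0pos : ∀ ω, 0 < g0 ω := cE_pos hμ hf
  have hg0m : Meas (fun ω => s ω ∩ R) g0 := C_meas subset_rfl f
  set F : V → Ω → ℝ := fun v ω => C μ s (insert v R) f ω / g0 ω with hF
  have hFpos : ∀ v ω, 0 < F v ω := fun v ω => div_pos (cE_pos hμ hf ω) (hg0pos ω)
  have hFle : ∀ v ω, F v ω ≤ 1 / c := fun v ω => by
    rw [div_le_iff₀ (hg0pos ω)]
    have := MB_le hμ hMB hc (fun ω => (hf ω).le) R v ω
    rw [one_div, inv_mul_eq_div]; exact this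
  have hFm : ∀ v, Meas (fun ω => s ω ∩ insert v R) (F v) := fun v a b hab => by
    simp only [hF]
    rw [C_meas subset_rfl f a b hab, hg0m a b (inter_sub (subset_insert _ _) hab)]
  have hinv : Meas (fun ω => s ω ∩ R) (fun ω => (g0 ω)⁻¹) := fun a b hab => by
    simp only [hg0m a b hab]
  have hCF : ∀ v ω, C μ s R (F v) ω = 1 := fun v ω => by
    have : F v = fun ω => (g0 ω)⁻¹ * C μ s (insert v R) f ω := by
      funext ω; simp only [hF]; rw [div_eq_inv_mul]
    rw [this]
    unfold C
    rw [cE_mul hinv]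
    have := C_tower hμ (s := s) (subset_insert v R) f ω
    unfold C at this
    rw [this]
    exact inv_mul_cancel₀ (hg0pos ω).ne'
  set u : V → Ω → ℝ := fun v ω => ε * (F v ω - 1) with hu
  have hSG' := hSG R u
    (fun v a b hab => by simp only [hu]; rw [hFm v a b hab])
    (fun v ω => by
      simp only [hu]
      rw [abs_mul, abs_of_pos hε]
      have h1 : |F v ω - 1| ≤ 1 / c := by
        have h2 : 1 ≤ 1 / c := by rw [le_div_iff₀ hc]; linarith
        rw [abs_le]
        constructor
        · linarith [hFpos v ω]
        · linarith [hFle v ω]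
      calc ε * |F v ω - 1| ≤ (c * y0) * (1 / c) := by
            have : 0 ≤ c * y0 := hε.le.trans hε1
            gcongr
        _ = y0 := by field_simp)
    (fun v ω => by
      simp only [hu]
      unfold C
      rw [cE_cmul, cE_sub, cE_one hμ]
      have := hCF v ω
      unfold C at this
      rw [this]; ring)
  set Q : Ω → ℝ := fun ω => K * ∑ v ∈ univ \ R, C μ s R (fun ω => u v ω ^ 2) ω with hQ
  have hQm : Meas (fun ω => s ω ∩ R) Q := fun a b hab => by
    simp only [hQ]
    congr 1
    exact sum_congr rfl fun v _ => C_meas subset_rfl _ a b hab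
  set g : Ω → ℝ := fun ω => ∑ v ∈ univ \ R, u v ω with hg
  -- chi-square quantities
  set χ : V → ℝ := fun v => ex μ (fun ω => g0 ω * F v ω ^ 2) - ex μ f with hχ
  have hexg0 : ex μ g0 = ex μ f := ex_cE hμ f
  have hfF : ∀ v, ex μ (fun ω => F v ω * f ω) = ex μ (fun ω => g0 ω * F v ω ^ 2) := fun v => by
    rw [← ex_mul_cE hμ (hFm v) f]
    congr 1; funext ω
    have : C μ s (insert v R) f ω = F v ω * g0 ω := by
      simp only [hF]; rw [div_mul_cancel₀ _ (hg0pos ω).ne']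
    change F v ω * C μ s (insert v R) f ω = _
    rw [this]; ring
  have h1 : ex μ (fun ω => f ω * g ω) = ε * ∑ v ∈ univ \ R, χ v := by
    simp only [hg, mul_sum]
    rw [ex_sum]
    refine sum_congr rfl fun v _ => ?_
    simp only [hχ, ← hfF, ← ex_sub, ← ex_cmul, hu]
    congr 1; funext ω; ring
  have hCu : ∀ v ω, C μ s R (fun ω => u v ω ^ 2) ω
      = ε ^ 2 * (C μ s R (fun ω => F v ω ^ 2) ω - 1) := fun v ω => by
    have e : (fun ω => u v ω ^ 2) = fun ω => ε ^ 2 * (F v ω ^ 2 - (2 * F v ω - 1)) := by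
      funext ω; simp only [hu]; ring
    rw [e]
    have := hCF v ω
    unfold C at this ⊢
    rw [cE_cmul, cE_sub, cE_sub, cE_cmul, this, cE_one hμ]; ring
  have h2 : ex μ (fun ω => f ω * Q ω) = K * ε ^ 2 * ∑ v ∈ univ \ R, χ v := by
    have e1 : ex μ (fun ω => f ω * Q ω) = ex μ (fun ω => Q ω * g0 ω) := by
      rw [hg0, C, ex_mul_cE hμ hQm]
      congr 1; funext ω; ring
    have e2 : ∀ v, ex μ (fun ω => g0 ω * C μ s R (fun ω => F v ω ^ 2) ω)
        = ex μ (fun ω => g0 ω * F v ω ^ 2) := fun v => ex_mul_cE hμ hg0m _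
    rw [e1]
    simp only [hQ, hCu]
    have e4 : (fun ω => (K * ∑ v ∈ univ \ R, ε ^ 2 * (C μ s R (fun ω => F v ω ^ 2) ω - 1)) * g0 ω)
        = fun ω => ∑ v ∈ univ \ R,
          (K * ε ^ 2) * (g0 ω * C μ s R (fun ω => F v ω ^ 2) ω - g0 ω) := by
      funext ω
      rw [mul_sum, sum_mul]
      exact sum_congr rfl fun v _ => by ring
    rw [e4, ex_sum, mul_sum]
    refine sum_congr rfl fun v _ => ?_
    rw [ex_cmul, ex_sub, e2, hexg0]
  have h3 : ex μ (fun ω => g0 ω * Real.exp (g ω - Q ω)) ≤ ex μ f := by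
    have hqm : Meas (fun ω => s ω ∩ R) (fun ω => g0 ω * Real.exp (-Q ω)) := fun a b hab => by
      simp only [hg0m a b hab, hQm a b hab]
    have e1 := ex_mul_cE hμ hqm (fun ω => Real.exp (g ω))
    have e2 : (fun ω => g0 ω * Real.exp (g ω - Q ω))
        = fun ω => g0 ω * Real.exp (-Q ω) * Real.exp (g ω) := by
      funext ω; rw [sub_eq_add_neg, Real.exp_add]; ring
    rw [e2, ← e1, ← hexg0]
    refine ex_mono hμ fun ω => ?_
    have e3 := hSG' ω
    calc g0 ω * Real.exp (-Q ω) * cE μ (fun ω => s ω ∩ R) (fun ω => Real.exp (g ω)) ω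
        ≤ g0 ω * Real.exp (-Q ω) * Real.exp (Q ω) := by
          have := hg0pos ω
          gcongr
          exact e3
      _ = g0 ω := by rw [mul_assoc, ← Real.exp_add]; simp
  have h4 : (ε - K * ε ^ 2) * ∑ v ∈ univ \ R, χ v ≤ phi μ s f R := by
    unfold phi
    rw [h_incr hμ (subset_univ R) hf, C_univ hμ hs]
    calc (ε - K * ε ^ 2) * ∑ v ∈ univ \ R, χ v
        = ex μ (fun ω => f ω * g ω) - ex μ (fun ω => f ω * Q ω) := by rw [h1, h2]; ring
      _ ≤ ex μ (fun ω => f ω * g ω) - ex μ (fun ω => f ω * Q ω)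
          + (ex μ f - ex μ (fun ω => g0 ω * Real.exp (g ω - Q ω))) := by linarith
      _ = ex μ (fun ω => (f ω * g ω - f ω * Q ω) + (f ω - g0 ω * Real.exp (g ω - Q ω))) := by
          rw [ex_add, ex_sub, ex_sub]
      _ ≤ _ := by
          refine ex_mono hμ fun ω => ?_
          have a := hf ω
          have b := hg0pos ω
          have hx : 0 < f ω / g0 ω / Real.exp (g ω - Q ω) := by positivity
          have := Real.one_sub_inv_le_log_of_pos hx
          rw [Real.log_div (by positivity) (by positivity), Real.log_exp] at this
          have h5 : f ω * (1 - (f ω / g0 ω / Real.exp (g ω - Q ω))⁻¹)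
              = f ω - g0 ω * Real.exp (g ω - Q ω) := by
            have := (Real.exp_pos (g ω - Q ω)).ne'
            field_simp
          have h6 := mul_le_mul_of_nonneg_left this a.le
          rw [h5] at h6
          change _ ≤ f ω * Real.log (f ω / g0 ω)
          linarith
  have h5 : ∀ v, h μ s f (insert v R) - h μ s f R ≤ χ v := fun v => by
    rw [h_incr hμ (subset_insert v R) hf]
    simp only [hχ]
    rw [← hfF v, ← ex_mul_cE hμ (hFm v) f]
    have e : ex μ f = ex μ (C μ s (insert v R) f) := (ex_cE hμ f).symm
    rw [e, ← ex_sub]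
    refine ex_mono hμ fun ω => ?_
    have a : 0 < C μ s (insert v R) f ω := cE_pos hμ hf ω
    have := Real.log_le_sub_one_of_pos (hFpos v ω)
    have := mul_le_mul_of_nonneg_left this a.le
    change C μ s (insert v R) f ω * Real.log (F v ω)
      ≤ F v ω * C μ s (insert v R) f ω - C μ s (insert v R) f ω
    linarith
  have h6 : 0 ≤ ∑ v ∈ univ \ R, χ v := sum_nonneg fun v _ =>
    (sub_nonneg.2 (h_mono hμ (subset_insert v R) hf)).trans (h5 v)
  have h7 : ε / 2 ≤ ε - K * ε ^ 2 := by nlinarith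
  calc ∑ v ∈ univ \ R, (h μ s f (insert v R) - h μ s f R) ≤ ∑ v ∈ univ \ R, χ v :=
        sum_le_sum fun v _ => h5 v
    _ = 2 / ε * (ε / 2 * ∑ v ∈ univ \ R, χ v) := by field_simp
    _ ≤ 2 / ε * ((ε - K * ε ^ 2) * ∑ v ∈ univ \ R, χ v) := by gcongr
    _ ≤ _ := by gcongr

end Ent
end HC

/-! ### Factorization over random blocks -/

namespace HC
section Block
variable {V : Type} [Fintype V] [DecidableEq V]

/-- Probability that the set of vertices left unrevealed is exactly `univ \ R` when each
vertex is left unrevealed independently with probability `t`. -/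
def bw (t : ℝ) (R : Finset V) : ℝ := t ^ #(univ \ R) * (1 - t) ^ #R

lemma bw_nonneg {t : ℝ} (h0 : 0 ≤ t) (h1 : t ≤ 1) (R : Finset V) : 0 ≤ bw t R :=
  mul_nonneg (pow_nonneg h0 _) (pow_nonneg (by linarith) _)

/-- Exchange of the roles of a revealed and an unrevealed vertex under the product weights. -/
lemma bw_reindex (t : ℝ) (φ : Finset V → ℝ) :
    (1 - t) * ∑ R, ∑ v ∈ univ \ R, bw t R * φ (insert v R) = t * ∑ R, #R * (bw t R * φ R) := by
  have e : ∑ R : Finset V, ∑ v ∈ univ \ R, (1 - t) * (bw t R * φ (insert v R))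
      = ∑ R : Finset V, ∑ v ∈ R, t * (bw t R * φ R) := by
    rw [sum_sigma', sum_sigma']
    refine sum_bij' (fun x _ => ⟨insert x.2 x.1, x.2⟩) (fun x _ => ⟨x.1.erase x.2, x.2⟩)
      ?_ ?_ ?_ ?_ ?_
    · rintro ⟨R, v⟩ h; simp
    · rintro ⟨R, v⟩ h; simp
    · rintro ⟨R, v⟩ h
      simp only [mem_sigma, mem_univ, mem_sdiff, true_and] at h
      simp [erase_insert h]
    · rintro ⟨R, v⟩ h
      simp only [mem_sigma, mem_univ, true_and] at h
      simp [insert_erase h]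
    · rintro ⟨R, v⟩ h
      simp only [mem_sigma, mem_univ, mem_sdiff, true_and] at h
      simp only [bw]
      have e1 : univ \ R = insert v (univ \ insert v R) := by
        ext x; simp only [mem_sdiff, mem_univ, true_and, mem_insert]
        by_cases hx : x = v
        · subst hx; simp [h]
        · simp [hx]
      rw [card_insert_of_notMem h, e1, card_insert_of_notMem (by simp)]
      ring
  simp only [mul_sum]
  rw [e]
  refine sum_congr rfl fun R _ => ?_
  rw [sum_const, nsmul_eq_mul]; ring

/-- If `φ` loses on average at most a fraction `K / #Rᶜ` of its value when one more vertex is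
revealed, then `φ ∅` is controlled by the mean of `φ` over random blocks of density `θ`: with `q t`
the mean over blocks of density `t`, the hypothesis says `t q' ≤ K q`, so `q t / t ^ K` decreases. -/
lemma block_factor (φ : Finset V → ℝ) (K : ℕ)
    (hφ : ∀ R, ∑ v ∈ univ \ R, (φ R - φ (insert v R)) ≤ K * φ R) {θ : ℝ} (h0 : 0 < θ) (h1 : θ ≤ 1) :
    φ ∅ * θ ^ K ≤ ∑ R, bw θ R * φ R := by
  set q : ℝ → ℝ := fun t => ∑ R : Finset V, bw t R * φ R with hq
  set q' : ℝ → ℝ := fun t => ∑ R : Finset V,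
    ((#(univ \ R) * t ^ (#(univ \ R) - 1)) * (1 - t) ^ #R
      + t ^ #(univ \ R) * (#R * (1 - t) ^ (#R - 1) * (-1))) * φ R with hq'
  have hd : ∀ t, HasDerivAt q (q' t) t := fun t => by
    refine HasDerivAt.fun_sum fun R _ => ?_
    refine HasDerivAt.mul_const ?_ _
    refine HasDerivAt.mul (hasDerivAt_pow _ _) ?_
    have := ((hasDerivAt_id t).const_sub 1).fun_pow #R
    simpa using this
  have hkey : ∀ t, 0 < t → t < 1 → t * q' t ≤ K * q t := by
    intro t t0 t1
    have h2 : t * (1 - t) * q' t = (1 - t) * ∑ R, bw t R * ∑ v ∈ univ \ R, (φ R - φ (insert v R)) := by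
      have e1 : (1 - t) * ∑ R, bw t R * ∑ v ∈ univ \ R, (φ R - φ (insert v R))
        = (1 - t) * ∑ R : Finset V, #(univ \ R) * (bw t R * φ R)
          - (1 - t) * ∑ R, ∑ v ∈ univ \ R, bw t R * φ (insert v R) := by
        rw [← mul_sub, ← sum_sub_distrib]
        congr 1
        refine sum_congr rfl fun R _ => ?_
        rw [sum_sub_distrib, sum_const, nsmul_eq_mul, mul_sub, mul_sum]
        ring
      rw [e1, bw_reindex, mul_sum, mul_sum, mul_sum, ← sum_sub_distrib]
      refine sum_congr rfl fun R _ => ?_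
      have p1 : ∀ (x : ℝ) (k : ℕ), x * (k * x ^ (k - 1)) = k * x ^ k := by
        intro x k
        cases k with
        | zero => simp
        | succ k => simp [pow_succ]; ring
      have a := p1 t #(univ \ R)
      have b := p1 (1 - t) #R
      simp only [bw]
      linear_combination (1 - t) * (1 - t) ^ #R * φ R * a - t * t ^ #(univ \ R) * φ R * b
    have h3 : ∑ R, bw t R * ∑ v ∈ univ \ R, (φ R - φ (insert v R)) ≤ K * q t := by
      simp only [hq]
      rw [mul_sum]
      refine sum_le_sum fun R _ => ?_
      calc _ ≤ bw t R * (K * φ R) := mul_le_mul_of_nonneg_left (hφ R) (bw_nonneg t0.le t1.le R)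
        _ = _ := by ring
    have h4 : 0 < 1 - t := by linarith
    have h5 : (1 - t) * (t * q' t) = (1 - t) * ∑ R, bw t R * ∑ v ∈ univ \ R, (φ R - φ (insert v R)) := by
      rw [← h2]; ring
    rw [mul_left_cancel₀ h4.ne' h5]
    exact h3
  have hanti : AntitoneOn (fun t => q t / t ^ K) (Set.Icc θ 1) := by
    have hdd : ∀ t, 0 < t → HasDerivAt (fun t => q t / t ^ K)
        ((q' t * t ^ K - q t * (K * t ^ (K - 1))) / (t ^ K) ^ 2) t := fun t ht =>
      (hd t).div (hasDerivAt_pow K t) (by positivity)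
    refine antitoneOn_of_deriv_nonpos (convex_Icc _ _) ?_ ?_ ?_
    · exact fun t ht => (hdd t (h0.trans_le ht.1)).continuousAt.continuousWithinAt
    · intro t ht
      rw [interior_Icc] at ht
      exact (hdd t (h0.trans ht.1)).differentiableAt.differentiableWithinAt
    · intro t ht
      rw [interior_Icc] at ht
      have t0 := h0.trans ht.1
      rw [(hdd t t0).deriv]
      refine div_nonpos_of_nonpos_of_nonneg ?_ (by positivity)
      have := hkey t t0 ht.2
      cases K with
      | zero =>
        simp only [Nat.cast_zero, zero_mul] at this
        have : q' t ≤ 0 := by nlinarith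
        simpa using this
      | succ K =>
        simp only [Nat.add_sub_cancel]
        have e : q' t * t ^ (K + 1) - q t * (↑(K + 1) * t ^ K)
          = t ^ K * (t * q' t - ↑(K + 1) * q t) := by ring
        rw [e]
        exact mul_nonpos_of_nonneg_of_nonpos (by positivity) (by linarith)
  have h2 := hanti (Set.left_mem_Icc.2 h1) (Set.right_mem_Icc.2 h1) h1
  have h3 : q 1 = φ ∅ := by
    simp only [hq, bw]
    rw [sum_eq_single ∅]
    · simp
    · intro R _ hR
      have : #R ≠ 0 := by simpa using hR
      simp [this]
    · simp
  simp only [one_pow, div_one, h3] at h2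
  rwa [le_div_iff₀ (by positivity)] at h2

end Block
end HC

/-! ### Crude tensorization on a block -/

namespace HC

section Crude
variable {Ω V : Type} [Fintype Ω] [Fintype V] [DecidableEq V]
variable {μ : Ω → ℝ} (hμ : ∀ ω, 0 < μ ω) {s : Ω → Finset V} (hs : Function.Injective s)

/-- The Bregman remainder `f log (f / m) - f + m`, where `m` is the conditional mean of `f`
given the spins in `R`. -/
noncomputable def breg (μ : Ω → ℝ) (s : Ω → Finset V) (f : Ω → ℝ) (R : Finset V) (ω : Ω) : ℝ :=
  f ω * Real.log (f ω / C μ s R f ω) - f ω + C μ s R f ω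

/-- The Bregman remainder of `x log x` dominates the squared Hellinger distance. -/
lemma breg_ge {x m : ℝ} (hx : 0 < x) (hm : 0 < m) :
    (√x - √m) ^ 2 ≤ x * Real.log (x / m) - x + m := by
  have h1 : 0 < √m / √x := div_pos (Real.sqrt_pos.2 hm) (Real.sqrt_pos.2 hx)
  have h2 := Real.log_le_sub_one_of_pos h1
  have e : Real.log (√m / √x) = - (1 / 2) * Real.log (x / m) := by
    rw [Real.log_div (Real.sqrt_pos.2 hm).ne' (Real.sqrt_pos.2 hx).ne', Real.log_sqrt hm.le,
      Real.log_sqrt hx.le, Real.log_div hx.ne' hm.ne']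
    ring
  rw [e] at h2
  have h3 : x * (√m / √x) = √x * √m := by
    have := (Real.sqrt_pos.2 hx).ne'
    field_simp
    rw [Real.sq_sqrt hx.le]
  have h4 := mul_le_mul_of_nonneg_left h2 hx.le
  rw [mul_sub, h3] at h4
  have h5 := Real.sq_sqrt hx.le
  have h6 := Real.sq_sqrt hm.le
  nlinarith

include hμ

lemma breg_nonneg {f : Ω → ℝ} (hf : ∀ ω, 0 < f ω) (R : Finset V) (ω : Ω) :
    0 ≤ breg μ s f R ω :=
  (sq_nonneg _).trans (breg_ge (hf ω) (cE_pos hμ hf ω))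

include hs in
lemma ex_breg {f : Ω → ℝ} (hf : ∀ ω, 0 < f ω) (R : Finset V) :
    ex μ (breg μ s f R) = phi μ s f R := by
  unfold phi
  rw [h_incr hμ (subset_univ R) hf, C_univ hμ hs]
  unfold breg
  rw [ex_add, ex_sub]
  have : ex μ (fun ω => C μ s R f ω) = ex μ (fun ω => f ω) := ex_cE hμ f
  rw [this]; ring

/-- Revealing the spins of a set `T` costs at most `c ^ #T`. -/
lemma MB_iter {c : ℝ} (hc : 0 < c) (hMB : MB μ s c) (B T : Finset V) (ω : Ω) :
    c ^ #T * den μ (fun ω => s ω ∩ B) ω ≤ den μ (fun ω => s ω ∩ (B ∪ T)) ω := by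
  induction T using Finset.induction_on with
  | empty => simp
  | insert v T hv ih =>
    rw [card_insert_of_notMem hv, union_insert]
    refine le_trans ?_ (hMB (B ∪ T) v ω)
    rw [pow_succ, mul_comm (c ^ #T) c, mul_assoc]
    gcongr

/-- Entropy of a block is controlled by the largest jump of `√f` on the block. -/
lemma ent_le_osc {f : Ω → ℝ} (hf : ∀ ω, 0 < f ω) (B : Finset V) (ω₀ : Ω) {D : ℝ}
    (hD : ∀ ω ω', s ω ∩ B = s ω₀ ∩ B → s ω' ∩ B = s ω₀ ∩ B → (√(f ω) - √(f ω')) ^ 2 ≤ D) :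
    C μ s B (fun ω => f ω * Real.log (f ω / C μ s B f ω)) ω₀ ≤ 2 * D := by
  set M := C μ s B f ω₀ with hM
  have hMpos : 0 < M := cE_pos hμ hf ω₀
  have hconst : ∀ ω, s ω ∩ B = s ω₀ ∩ B → C μ s B f ω = M := fun ω h => cE_meas f ω ω₀ h
  have hD0 : 0 ≤ D := by simpa using hD ω₀ ω₀ rfl rfl
  -- pairwise comparison of `f` values through their square roots
  have h1 : ∀ ω ω', s ω ∩ B = s ω₀ ∩ B → s ω' ∩ B = s ω₀ ∩ B →
      (f ω - f ω') ^ 2 ≤ D * (2 * (f ω + f ω')) := fun ω ω' h h' => by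
    have e := Real.sq_sqrt (hf ω).le
    have e' := Real.sq_sqrt (hf ω').le
    have h2 : (f ω - f ω') ^ 2 = (√(f ω) - √(f ω')) ^ 2 * (√(f ω) + √(f ω')) ^ 2 := by
      rw [← mul_pow]; congr 1; linear_combination e' - e
    rw [h2]
    have h3 : (√(f ω) + √(f ω')) ^ 2 ≤ 2 * (f ω + f ω') := by
      nlinarith [sq_nonneg (√(f ω) - √(f ω'))]
    have := hf ω
    have := hf ω'
    gcongr
    exact hD ω ω' h h'
  have h2 : ∀ ω, s ω ∩ B = s ω₀ ∩ B →
      f ω ^ 2 - 2 * f ω * M + C μ s B (fun ω => f ω ^ 2) ω₀ ≤ D * (2 * (f ω + M)) := fun ω hω => by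
    have h3 := cE_mono' hμ (π := fun ω => s ω ∩ B) (ω := ω₀)
      (f := fun ω' => f ω ^ 2 * 1 - (2 * f ω) * f ω' + f ω' ^ 2)
      (g := fun ω' => (D * 2 * f ω) * 1 + D * 2 * f ω')
      (fun ω' h' => by have := h1 ω ω' hω h'; nlinarith)
    rw [cE_add, cE_sub, cE_add, cE_cmul, cE_cmul, cE_cmul, cE_cmul, cE_one hμ] at h3
    change f ω ^ 2 * 1 - 2 * f ω * M + C μ s B (fun ω => f ω ^ 2) ω₀ ≤
      D * 2 * f ω * 1 + D * 2 * M at h3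
    linarith
  have h3 : C μ s B (fun ω => f ω ^ 2) ω₀ - M ^ 2 ≤ 2 * D * M := by
    have h4 := cE_mono' hμ (π := fun ω => s ω ∩ B) (ω := ω₀)
      (f := fun ω => f ω ^ 2 - (2 * M) * f ω + C μ s B (fun ω => f ω ^ 2) ω₀ * 1)
      (g := fun ω => (D * 2) * f ω + (D * 2 * M) * 1)
      (fun ω h' => by have := h2 ω h'; nlinarith)
    rw [cE_add, cE_sub, cE_add, cE_cmul, cE_cmul, cE_cmul, cE_cmul, cE_one hμ] at h4
    change C μ s B (fun ω => f ω ^ 2) ω₀ - 2 * M * M + C μ s B (fun ω => f ω ^ 2) ω₀ * 1 ≤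
      D * 2 * M + D * 2 * M * 1 at h4
    nlinarith
  have h4 := cE_mono' hμ (π := fun ω => s ω ∩ B) (ω := ω₀)
      (f := fun ω => f ω * Real.log (f ω / C μ s B f ω))
      (g := fun ω => M⁻¹ * f ω ^ 2 - f ω) (fun ω h' => by
        rw [hconst ω h']
        have := Real.log_le_sub_one_of_pos (div_pos (hf ω) hMpos)
        have := mul_le_mul_of_nonneg_left this (hf ω).le
        calc _ ≤ _ := this
          _ = _ := by field_simp)
  rw [cE_sub, cE_cmul] at h4
  refine h4.trans ?_
  change M⁻¹ * C μ s B (fun ω => f ω ^ 2) ω₀ - M ≤ 2 * D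
  rw [inv_mul_eq_div, sub_le_iff_le_add, div_le_iff₀ hMpos]
  nlinarith

/-- The family of supports is closed under removing vertices. -/
def Her (s : Ω → Finset V) : Prop := ∀ ω v, ∃ ω', s ω' = (s ω).erase v

include hs in
/-- Crude approximate tensorization of entropy on a block `T`: any two configurations that agree
outside `T` are joined by a path of single-vertex changes inside `T`, and the jump of `√f` across
each of them is bounded by a one-site entropy, at the cost of the minimal probability `c ^ #T`. -/
lemma crude {c : ℝ} (hc : 0 < c) (hMB : MB μ s c) (hH : Her s) {f : Ω → ℝ} (hf : ∀ ω, 0 < f ω)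
    (T : Finset V) :
    phi μ s f (univ \ T) ≤ 32 * (#T : ℝ) ^ 2 / c ^ #T * ∑ u ∈ T, phi μ s f (univ \ {u}) := by
  set B := univ \ T with hB
  have hBT : B ∪ T = univ := by simp [hB]
  -- squared jump of `√f` across one vertex, bounded by averages of Bregman remainders
  set J : Ω → ℝ := fun ω => ∑ u ∈ T, C μ s B (breg μ s f (univ \ {u})) ω with hJ
  have hJm : ∀ ω ω', s ω ∩ B = s ω' ∩ B → J ω = J ω' := fun ω ω' h =>
    sum_congr rfl fun u _ => cE_meas _ ω ω' h
  have hJ0 : ∀ ω, 0 ≤ J ω := fun ω => sum_nonneg fun u _ =>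
    cE_nonneg hμ (breg_nonneg hμ hf _) ω
  have hcT : 0 < c ^ #T := by positivity
  have hden : ∀ ω, c ^ #T * den μ (fun ω => s ω ∩ B) ω ≤ μ ω := fun ω => by
    have := MB_iter hμ hc hMB B T ω
    rw [hBT] at this
    refine this.trans (le_of_eq ?_)
    unfold den
    simp only [inter_univ]
    rw [sum_eq_single ω (fun ω' _ h => if_neg fun e => h (hs e)) (by simp), if_pos rfl]
  have h1 : ∀ u ∈ T, ∀ ω, breg μ s f (univ \ {u}) ω ≤ J ω / c ^ #T := fun u hu ω => by
    have h2 := le_cE hμ (π := fun ω => s ω ∩ B) (breg_nonneg hμ hf (univ \ {u}) (s := s)) ω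
    have h3 : C μ s B (breg μ s f (univ \ {u})) ω ≤ J ω :=
      single_le_sum (f := fun u => C μ s B (breg μ s f (univ \ {u})) ω)
        (fun u _ => cE_nonneg hμ (breg_nonneg hμ hf _) ω) hu
    have h4 := den_pos hμ (π := fun ω => s ω ∩ B) ω
    have h5 := hden ω
    rw [le_div_iff₀ hcT]
    have h6 := breg_nonneg hμ hf (univ \ {u}) ω (s := s)
    refine le_trans ?_ h3
    refine le_of_mul_le_mul_left ?_ h4
    refine le_trans ?_ h2
    calc den μ (fun ω => s ω ∩ B) ω * (breg μ s f (univ \ {u}) ω * c ^ #T)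
        = (c ^ #T * den μ (fun ω => s ω ∩ B) ω) * breg μ s f (univ \ {u}) ω := by ring
      _ ≤ _ := by gcongr
  have hjump : ∀ u ∈ T, ∀ ω ω', s ω' = (s ω).erase u →
      |√(f ω) - √(f ω')| ≤ 2 * √(J ω / c ^ #T) := fun u hu ω ω' h => by
    set R := univ \ {u} with hR
    have hin : s ω ∩ R = s ω' ∩ R := by
      rw [h]; ext x; simp [hR]
    have hm : C μ s R f ω = C μ s R f ω' := cE_meas f ω ω' hin
    have hJJ : J ω = J ω' := hJm ω ω' (inter_sub (by
      intro x hx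
      simp only [hB, hR, mem_sdiff, mem_univ, true_and, mem_singleton] at hx ⊢
      rintro rfl; exact hx hu) hin)
    have key : ∀ ω, |√(f ω) - √(C μ s R f ω)| ≤ √(J ω / c ^ #T) := fun ω =>
      Real.abs_le_sqrt ((breg_ge (hf ω) (cE_pos hμ hf ω)).trans (h1 u hu ω))
    have k1 := key ω
    have k2 := key ω'
    rw [← hm, ← hJJ] at k2
    have := abs_sub_le (√(f ω)) (√(C μ s R f ω)) (√(f ω'))
    rw [abs_sub_comm (√(C μ s R f ω))] at this
    linarith
  have hpath : ∀ U ⊆ T, ∀ ω, ∃ ω', s ω' = s ω \ U ∧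
      |√(f ω) - √(f ω')| ≤ #U * (2 * √(J ω / c ^ #T)) := by
    intro U
    induction U using Finset.induction_on with
    | empty => exact fun _ ω => ⟨ω, by simp, by simp⟩
    | insert v U hv ih =>
      intro hU ω
      obtain ⟨ω', e', h'⟩ := ih ((subset_insert _ _).trans hU) ω
      obtain ⟨ω'', e''⟩ := hH ω' v
      refine ⟨ω'', by rw [e'', e', sdiff_insert], ?_⟩
      have h2 := hjump v (hU (mem_insert_self _ _)) ω' ω'' e''
      have hJJ : J ω' = J ω := hJm ω' ω (by
        rw [e']; ext x
        simp only [hB, mem_inter, mem_sdiff, mem_univ, true_and]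
        have hx : x ∈ U → x ∈ T := fun hx => hU (mem_insert_of_mem hx)
        tauto)
      rw [hJJ] at h2
      rw [card_insert_of_notMem hv]
      push_cast
      have := abs_sub_le (√(f ω)) (√(f ω')) (√(f ω''))
      linarith
  have hosc : ∀ ω₀, C μ s B (fun ω => f ω * Real.log (f ω / C μ s B f ω)) ω₀ ≤
      2 * (16 * (#T : ℝ) ^ 2 * (J ω₀ / c ^ #T)) := fun ω₀ => by
    refine ent_le_osc hμ hf B ω₀ fun ω ω' h h' => ?_
    obtain ⟨a, ea, ha⟩ := hpath T subset_rfl ω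
    obtain ⟨b, eb, hb⟩ := hpath T subset_rfl ω'
    have hab : a = b := hs (by
      rw [ea, eb]
      have e : ∀ X : Finset V, X \ T = X ∩ B := fun X => by ext x; simp [hB]
      rw [e, e, h, h'])
    subst hab
    rw [hJm ω ω₀ h] at ha
    rw [hJm ω' ω₀ h'] at hb
    set q := √(J ω₀ / c ^ #T) with hq
    have hq2 : q ^ 2 = J ω₀ / c ^ #T := Real.sq_sqrt (div_nonneg (hJ0 ω₀) hcT.le)
    rw [← hq2]
    have := abs_sub_le (√(f ω)) (√(f a)) (√(f ω'))
    rw [abs_sub_comm (√(f a))] at this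
    rw [← sq_abs]
    calc |√(f ω) - √(f ω')| ^ 2 ≤ (4 * #T * q) ^ 2 := by
          gcongr; linarith
      _ = _ := by ring
  have hphi : phi μ s f B = ex μ (C μ s B (fun ω => f ω * Real.log (f ω / C μ s B f ω))) := by
    unfold phi
    rw [h_incr hμ (subset_univ B) hf, C_univ hμ hs]
    unfold C; rw [ex_cE hμ]
  rw [hphi]
  refine (ex_mono hμ hosc).trans (le_of_eq ?_)
  have e : (fun ω => 2 * (16 * (#T : ℝ) ^ 2 * (J ω / c ^ #T)))
      = fun ω => (32 * (#T : ℝ) ^ 2 / c ^ #T) * J ω := by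
    funext ω; ring
  rw [e, ex_cmul]
  congr 1
  simp only [hJ]
  rw [ex_sum]
  refine sum_congr rfl fun u _ => ?_
  rw [← ex_breg hμ hs hf]
  exact ex_cE hμ _

end Crude
end HC

/-! ### Percolation clusters and approximate tensorization -/

namespace HC

section Perc
variable {V : Type} [Fintype V] [DecidableEq V] (G : SimpleGraph V) [DecidableRel G.Adj]

/-- The connected component of `v` in the subgraph of `G` induced by `S`. -/
noncomputable def comp (S : Finset V) (v : V) : Finset V :=
  @Finset.filter V (fun u => Relation.ReflTransGen (fun a b => G.Adj a b ∧ b ∈ S) v u)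
    (Classical.decPred _) univ

variable {G}

lemma mem_comp {S : Finset V} {v u : V} :
    u ∈ comp G S v ↔ Relation.ReflTransGen (fun a b => G.Adj a b ∧ b ∈ S) v u := by
  simp [comp]

lemma self_mem_comp (S : Finset V) (v : V) : v ∈ comp G S v := mem_comp.2 .refl

lemma comp_adj {S : Finset V} {v a b : V} (ha : a ∈ comp G S v) (hab : G.Adj a b) (hb : b ∈ S) :
    b ∈ comp G S v := mem_comp.2 ((mem_comp.1 ha).tail ⟨hab, hb⟩)

lemma comp_subset_of_closed {S T : Finset V} {v : V} (hv : v ∈ T)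
    (hT : ∀ a ∈ T, ∀ b ∈ S, G.Adj a b → b ∈ T) : comp G S v ⊆ T := fun u hu => by
  have := mem_comp.1 hu
  clear hu
  induction this with
  | refl => exact hv
  | tail _ h ih => exact hT _ ih _ h.2 h.1

lemma comp_subset {S : Finset V} {v : V} (hv : v ∈ S) : comp G S v ⊆ S :=
  comp_subset_of_closed hv fun _ _ _ hb _ => hb

lemma comp_symm {S : Finset V} {v u : V} (hv : v ∈ S) (hu : u ∈ comp G S v) :
    v ∈ comp G S u := by
  have := mem_comp.1 hu
  clear hu
  have hus : u ∈ S ∧ v ∈ comp G S u := by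
    induction this with
    | refl => exact ⟨hv, self_mem_comp _ _⟩
    | @tail b c _ h ih =>
      refine ⟨h.2, mem_comp.2 (.head ⟨h.1.symm, ih.1⟩ (mem_comp.1 ih.2))⟩
  exact hus.2

lemma comp_eq {S : Finset V} {v u : V} (hv : v ∈ S) (hu : u ∈ comp G S v) :
    comp G S u = comp G S v := by
  have h := comp_symm hv hu
  ext x
  exact ⟨fun hx => mem_comp.2 ((mem_comp.1 hu).trans (mem_comp.1 hx)),
    fun hx => mem_comp.2 ((mem_comp.1 h).trans (mem_comp.1 hx))⟩

/-- Exploration bound: for site percolation of density `θ` on `U`, the exponential moment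
of the union of the open clusters meeting `W` is at most `2 ^ #W`. -/
lemma explore {D : ℕ} (hdeg : ∀ v, #(nbr G v) ≤ D) {θ B : ℝ} (h0 : 0 ≤ θ) (h1 : θ ≤ 1)
    (hB : 1 ≤ B) (hθ : θ * B * 2 ^ D ≤ 1) :
    ∀ (n : ℕ) (U W : Finset V), #U = n → W ⊆ U → ∃ T : Finset V → Finset V,
      (∀ S ⊆ U, W ∩ S ⊆ T S ∧ ∀ a ∈ T S, ∀ b ∈ S, G.Adj a b → b ∈ T S) ∧
      ∑ S ∈ U.powerset, θ ^ #S * (1 - θ) ^ #(U \ S) * B ^ #(T S) ≤ 2 ^ #W := by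
  intro n
  induction n with
  | zero =>
    intro U W hU hW
    obtain rfl := card_eq_zero.1 hU
    obtain rfl := subset_empty.1 hW
    exact ⟨fun _ => ∅, by simp, by simp⟩
  | succ n ih =>
    intro U W hU hW
    obtain rfl | ⟨w, hw⟩ := W.eq_empty_or_nonempty
    · refine ⟨fun _ => ∅, by simp, ?_⟩
      simp only [card_empty, pow_zero, mul_one]
      have := prod_add (fun _ : V => θ) (fun _ => 1 - θ) U
      simp only [add_sub_cancel, prod_const, one_pow] at this
      rw [← this]
    · have hwU := hW hw
      set U' := U.erase w with hU'
      have hwU' : w ∉ U' := notMem_erase _ _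
      have hUU : insert w U' = U := insert_erase hwU
      have hc : #U' = n := by rw [card_erase_of_mem hwU, hU]; rfl
      obtain ⟨T1, c1, b1⟩ := ih U' (W.erase w) hc (erase_subset_erase _ hW)
      obtain ⟨T2, c2, b2⟩ := ih U' (W.erase w ∪ (nbr G w ∩ U')) hc
        (union_subset (erase_subset_erase _ hW) inter_subset_right)
      refine ⟨fun S => if w ∈ S then insert w (T2 (S.erase w)) else T1 S, ?_, ?_⟩
      · intro S hS
        beta_reduce
        by_cases hwS : w ∈ S
        · rw [if_pos hwS]
          obtain ⟨p, q⟩ := c2 (S.erase w) (erase_subset_erase _ hS)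
          constructor
          · intro x hx
            rw [mem_inter] at hx
            by_cases hxw : x = w
            · simp [hxw]
            · exact mem_insert_of_mem (p (by simp [hxw, hx]))
          · intro a ha b hb hab
            by_cases hbw : b = w
            · simp [hbw]
            refine mem_insert_of_mem ?_
            rcases mem_insert.1 ha with rfl | ha
            · refine p ?_
              have : b ∈ U' := mem_erase.2 ⟨hbw, hS hb⟩
              simp [hbw, hb, mem_nbr, hab, this]
            · exact q a ha b (mem_erase.2 ⟨hbw, hb⟩) hab
        · rw [if_neg hwS]
          obtain ⟨p, q⟩ := c1 S (fun x hx => mem_erase.2 ⟨fun e => hwS (e ▸ hx), hS hx⟩)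
          refine ⟨fun x hx => p ?_, q⟩
          rw [mem_inter] at hx ⊢
          exact ⟨mem_erase.2 ⟨fun e => hwS (e ▸ hx.2), hx.1⟩, hx.2⟩
      · rw [← hUU, sum_powerset_insert hwU']
        have e1 : ∑ S ∈ U'.powerset, θ ^ #S * (1 - θ) ^ #(insert w U' \ S) *
            B ^ #(if w ∈ S then insert w (T2 (S.erase w)) else T1 S)
            = (1 - θ) * ∑ S ∈ U'.powerset, θ ^ #S * (1 - θ) ^ #(U' \ S) * B ^ #(T1 S) := by
          rw [mul_sum]
          refine sum_congr rfl fun S hS => ?_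
          have hwS : w ∉ S := fun h => hwU' (mem_powerset.1 hS h)
          rw [if_neg hwS, insert_sdiff_of_notMem _ hwS,
            card_insert_of_notMem (fun h => hwU' (mem_sdiff.1 h).1)]
          ring
        have e2 : ∑ S ∈ U'.powerset, θ ^ #(insert w S) * (1 - θ) ^ #(insert w U' \ insert w S) *
            B ^ #(if w ∈ insert w S then insert w (T2 ((insert w S).erase w)) else T1 (insert w S))
            ≤ (θ * B) * ∑ S ∈ U'.powerset, θ ^ #S * (1 - θ) ^ #(U' \ S) * B ^ #(T2 S) := by
          rw [mul_sum]
          refine sum_le_sum fun S hS => ?_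
          have hwS : w ∉ S := fun h => hwU' (mem_powerset.1 hS h)
          rw [if_pos (mem_insert_self _ _), erase_insert hwS, insert_sdiff_insert,
            sdiff_insert_of_notMem hwU', card_insert_of_notMem hwS]
          have h2 : B ^ #(insert w (T2 S)) ≤ B ^ (#(T2 S) + 1) :=
            pow_le_pow_right₀ hB (card_insert_le _ _)
          have h3 : 0 ≤ 1 - θ := by linarith
          calc _ ≤ θ ^ (#S + 1) * (1 - θ) ^ #(U' \ S) * B ^ (#(T2 S) + 1) := by gcongr
            _ = _ := by ring
        rw [e1]
        refine (add_le_add le_rfl e2).trans ?_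
        have hW1 : #W = #(W.erase w) + 1 := (card_erase_add_one hw).symm
        have h3 : #(W.erase w ∪ (nbr G w ∩ U')) ≤ #(W.erase w) + D :=
          (card_union_le _ _).trans (Nat.add_le_add_left
            ((card_le_card inter_subset_left).trans (hdeg w)) _)
        have h4 : (2 : ℝ) ^ #(W.erase w ∪ (nbr G w ∩ U')) ≤ 2 ^ (#(W.erase w) + D) :=
          pow_le_pow_right₀ (by norm_num) h3
        have h5 : 0 ≤ 1 - θ := by linarith
        calc _ ≤ (1 - θ) * 2 ^ #(W.erase w) + θ * B * 2 ^ (#(W.erase w) + D) := by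
              gcongr
              exact b2.trans h4
          _ = (1 - θ) * 2 ^ #(W.erase w) + (θ * B * 2 ^ D) * 2 ^ #(W.erase w) := by
              rw [pow_add]; ring
          _ ≤ 1 * 2 ^ #(W.erase w) + 1 * 2 ^ #(W.erase w) := by
              gcongr; linarith
          _ = 2 ^ #W := by rw [hW1, pow_succ]; ring

/-- Exponential moment of the size of the cluster of a vertex in a random block of density `θ`. -/
lemma comp_moment {D : ℕ} (hdeg : ∀ v, #(nbr G v) ≤ D) {θ B : ℝ} (h0 : 0 ≤ θ) (h1 : θ ≤ 1)
    (hB : 1 ≤ B) (hθ : θ * B * 2 ^ D ≤ 1) (u : V) :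
    ∑ R, bw θ R * (if u ∈ univ \ R then B ^ #(comp G (univ \ R) u) else 0) ≤ 2 := by
  obtain ⟨T, hT, hb⟩ := explore hdeg h0 h1 hB hθ _ univ {u} rfl (subset_univ _)
  rw [card_singleton, pow_one] at hb
  refine le_trans ?_ hb
  rw [powerset_univ, ← (Equiv.sum_comp (compl_involutive (α := Finset V)).toPerm)]
  refine sum_le_sum fun R _ => ?_
  change bw θ Rᶜ * (if u ∈ univ \ Rᶜ then B ^ #(comp G (univ \ Rᶜ) u) else 0) ≤ _
  have e : univ \ Rᶜ = R := by rw [← compl_eq_univ_sdiff, compl_compl]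
  unfold bw
  rw [e, compl_eq_univ_sdiff, mul_assoc, mul_assoc]
  have h5 : 0 ≤ 1 - θ := by linarith
  gcongr
  split_ifs with hu
  · obtain ⟨p, q⟩ := hT R (subset_univ _)
    exact pow_le_pow_right₀ hB (card_le_card (comp_subset_of_closed (p (by simp [hu])) q))
  · positivity

end Perc

section AT
variable {Ω V : Type} [Fintype Ω] [Fintype V] [DecidableEq V]
variable {μ : Ω → ℝ} (hμ : ∀ ω, 0 < μ ω) {s : Ω → Finset V} (hs : Function.Injective s)
  {G : SimpleGraph V} [DecidableRel G.Adj]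

/-- Spatial Markov property: if no edge joins the complement of `B` to `B \ R`, then revealing
the spin at a vertex outside `B` does not change the conditional law of the spins in `B`
given those in `R`. -/
def Mk (μ : Ω → ℝ) (s : Ω → Finset V) (G : SimpleGraph V) : Prop :=
  ∀ R B : Finset V, R ⊆ B → (∀ a ∈ univ \ B, ∀ b ∈ B \ R, ¬ G.Adj a b) → ∀ v ∉ B,
    ∀ g, Meas (fun ω => s ω ∩ B) g → C μ s (insert v R) g = C μ s R g

include hμ hs

lemma phi_nonneg {f : Ω → ℝ} (hf : ∀ ω, 0 < f ω) (R : Finset V) : 0 ≤ phi μ s f R :=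
  sub_nonneg.2 (h_mono hμ (subset_univ R) hf)

/-- Supermodularity of entropy at conditionally independent blocks, through the log-sum
inequality. -/
lemma supermod (hMk : Mk μ s G) {f : Ω → ℝ} (hf : ∀ ω, 0 < f ω) {R B : Finset V} (hRB : R ⊆ B)
    (hno : ∀ a ∈ univ \ B, ∀ b ∈ B \ R, ¬ G.Adj a b) {v : V} (hv : v ∉ B) :
    h μ s f (insert v R) - h μ s f R ≤ phi μ s f B := by
  unfold phi
  rw [h_incr hμ (subset_univ B) hf, C_univ hμ hs, h_incr hμ (subset_insert v R) hf]
  set a := C μ s (insert v R) f with ha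
  set b := C μ s R f with hb
  set y := C μ s B f with hy
  have ap : ∀ ω, 0 < a ω := cE_pos hμ hf
  have bp : ∀ ω, 0 < b ω := cE_pos hμ hf
  have yp : ∀ ω, 0 < y ω := cE_pos hμ hf
  have hb2 : C μ s (insert v R) y = b := by
    rw [hMk R B hRB hno v hv y (C_meas subset_rfl f)]
    funext ω
    exact C_tower hμ hRB f ω
  have am : Meas (fun ω => s ω ∩ insert v R) a := C_meas subset_rfl f
  have bm : Meas (fun ω => s ω ∩ insert v R) b := C_meas (subset_insert _ _) f
  have e1 : ex μ (fun ω => a ω * Real.log (a ω / b ω))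
      = ex μ (fun ω => Real.log (a ω / b ω) * f ω) := by
    rw [← ex_mul_cE hμ (π := fun ω => s ω ∩ insert v R)
      (fun p q hpq => by rw [am p q hpq, bm p q hpq]) f]
    congr 1; funext ω
    exact mul_comm _ _
  have e2 : ex μ (fun ω => (a ω / b ω) * y ω) = ex μ f := by
    rw [← ex_mul_cE hμ (π := fun ω => s ω ∩ insert v R)
      (fun p q hpq => by rw [am p q hpq, bm p q hpq]) y]
    have : cE μ (fun ω => s ω ∩ insert v R) y = b := hb2
    rw [this, ← ex_cE hμ (π := fun ω => s ω ∩ insert v R) f]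
    congr 1; funext ω
    exact div_mul_cancel₀ _ (bp ω).ne'
  have e3 : ex μ (fun ω => a ω * Real.log (a ω / b ω))
      = ex μ (fun ω => Real.log (a ω / b ω) * f ω + f ω - (a ω / b ω) * y ω) := by
    rw [ex_sub, ex_add, e2, ← e1]
    ring
  rw [e3]
  refine ex_mono hμ fun ω => ?_
  have hz : 0 < (f ω / y ω) / (a ω / b ω) :=
    div_pos (div_pos (hf ω) (yp ω)) (div_pos (ap ω) (bp ω))
  have h1 := Real.one_sub_inv_le_log_of_pos hz
  rw [Real.log_div (div_pos (hf ω) (yp ω)).ne' (div_pos (ap ω) (bp ω)).ne'] at h1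
  have h2 := mul_le_mul_of_nonneg_left h1 (hf ω).le
  have h3 : f ω * (1 - ((f ω / y ω) / (a ω / b ω))⁻¹) = f ω - (a ω / b ω) * y ω := by
    have := (hf ω).ne'
    have := (yp ω).ne'
    have := (ap ω).ne'
    have := (bp ω).ne'
    field_simp
  rw [h3] at h2
  linarith

/-- The conditional entropy given `R` is at most the sum over unrevealed vertices of the
conditional entropies of their components. -/
lemma phi_le_comp (hMk : Mk μ s G) {f : Ω → ℝ} (hf : ∀ ω, 0 < f ω) (R : Finset V) :
    phi μ s f R ≤ ∑ v ∈ univ \ R, phi μ s f (univ \ comp G (univ \ R) v) := by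
  have key : ∀ (n : ℕ) (R1 : Finset V), R ⊆ R1 → #(univ \ R1) = n →
      phi μ s f R1 ≤ ∑ v ∈ univ \ R1, phi μ s f (univ \ comp G (univ \ R) v) := by
    intro n
    induction n with
    | zero =>
      intro R1 _ h0
      have h1 : univ \ R1 = ∅ := card_eq_zero.1 h0
      have h2 : R1 = univ := univ_subset_iff.1 (sdiff_eq_empty_iff_subset.1 h1)
      rw [h1, h2]; simp [phi]
    | succ n ih =>
      intro R1 hR1 hn
      obtain ⟨v, hv⟩ : (univ \ R1).Nonempty := card_pos.1 (by omega)
      have hvR1 : v ∉ R1 := (mem_sdiff.1 hv).2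
      have e : univ \ insert v R1 = (univ \ R1).erase v := by
        ext x; simp [not_or]
      have h1 := ih (insert v R1) (hR1.trans (subset_insert _ _)) (by
        rw [e, card_erase_of_mem hv, hn]; rfl)
      rw [e] at h1
      rw [← add_sum_erase _ _ hv]
      set T := comp G (univ \ R) v with hT
      have h2 : h μ s f (insert v R1) - h μ s f R1 ≤ phi μ s f (univ \ (T \ R1)) := by
        refine supermod hμ hs hMk hf ?_ ?_ ?_
        · intro x hx; simp [hx]
        · intro a ha b hb hab
          simp only [mem_sdiff, mem_univ, true_and, not_and, not_not] at ha hb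
          have ha' : a ∈ T ∧ a ∉ R1 := by tauto
          refine hb.2 (hb.1 (comp_adj ha'.1 hab ?_))
          simp only [mem_sdiff, mem_univ, true_and]
          exact fun hbR => hb.2 (hR1 hbR)
        · simp [hvR1, hT, self_mem_comp]
      have h3 : phi μ s f (univ \ (T \ R1)) ≤ phi μ s f (univ \ T) := by
        unfold phi
        have := h_mono hμ (s := s) (sdiff_subset_sdiff subset_rfl (sdiff_subset : T \ R1 ⊆ T)
          : univ \ T ⊆ univ \ (T \ R1)) hf
        linarith
      unfold phi at h1 h2 h3 ⊢
      linarith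
  exact key _ R subset_rfl rfl

/-- Approximate tensorization of entropy. The condition on `θ` makes the exponential moment with base
`8 / c` finite: `c` comes from the crude tensorization constant and `8 ^ k` absorbs the factor
`k ^ 3`. -/
lemma approx_tensor {c : ℝ} (hc : 0 < c) (hc1 : c ≤ 1) (hMB : MB μ s c) (hH : Her s)
    (hMk : Mk μ s G) {D : ℕ} (hdeg : ∀ v, #(nbr G v) ≤ D) {θ : ℝ} (h0 : 0 < θ) (h1 : θ ≤ 1)
    (hθ : θ * (8 / c) * 2 ^ D ≤ 1) (K : ℕ) {f : Ω → ℝ} (hf : ∀ ω, 0 < f ω)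
    (hEI : ∀ R, ∑ v ∈ univ \ R, (h μ s f (insert v R) - h μ s f R) ≤ K * phi μ s f R) :
    phi μ s f ∅ * θ ^ K ≤ 64 * ∑ u, phi μ s f (univ \ {u}) := by
  have hB1 : (1 : ℝ) ≤ 8 / c := by rw [le_div_iff₀ hc]; linarith
  have hcube : ∀ k : ℕ, (k : ℝ) * (32 * (k : ℝ) ^ 2 / c ^ k) ≤ 32 * (8 / c) ^ k := fun k => by
    have hk : (k : ℝ) ≤ 2 ^ k := by exact_mod_cast (Nat.lt_two_pow_self (n := k)).le
    have hk3 : (k : ℝ) ^ 3 ≤ 8 ^ k := by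
      calc (k : ℝ) ^ 3 ≤ (2 ^ k) ^ 3 := by gcongr
        _ = 8 ^ k := by rw [← pow_mul, mul_comm, pow_mul]; norm_num
    rw [div_pow]
    calc (k : ℝ) * (32 * (k : ℝ) ^ 2 / c ^ k) = 32 * ((k : ℝ) ^ 3 / c ^ k) := by ring
      _ ≤ 32 * (8 ^ k / c ^ k) := by gcongr
  have step : ∀ R, phi μ s f R ≤ ∑ u, phi μ s f (univ \ {u}) *
      (32 * (if u ∈ univ \ R then (8 / c) ^ #(comp G (univ \ R) u) else 0)) := fun R => by
    set S := univ \ R with hS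
    set A : ℕ → ℝ := fun k => 32 * (k : ℝ) ^ 2 / c ^ k with hA
    calc phi μ s f R ≤ ∑ v ∈ S, phi μ s f (univ \ comp G S v) := phi_le_comp hμ hs hMk hf R
      _ ≤ ∑ v ∈ S, A #(comp G S v) * ∑ u ∈ comp G S v, phi μ s f (univ \ {u}) :=
          sum_le_sum fun v _ => crude hμ hs hc hMB hH hf _
      _ = ∑ v ∈ S, ∑ u ∈ S, if u ∈ comp G S v then
            A #(comp G S u) * phi μ s f (univ \ {u}) else 0 := by
          refine sum_congr rfl fun v hv => ?_
          rw [mul_sum, ← sum_filter]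
          have e : S.filter (· ∈ comp G S v) = comp G S v := by
            ext x; simp only [mem_filter, and_iff_right_iff_imp]
            exact fun hx => comp_subset hv hx
          rw [e]
          exact sum_congr rfl fun u hu => by rw [comp_eq hv hu]
      _ = ∑ u ∈ S, ∑ v ∈ S, if v ∈ comp G S u then
            A #(comp G S u) * phi μ s f (univ \ {u}) else 0 := by
          rw [sum_comm]
          refine sum_congr rfl fun u hu => sum_congr rfl fun v hv => ?_
          exact if_congr ⟨comp_symm hv, comp_symm hu⟩ rfl rfl
      _ = ∑ u ∈ S, #(comp G S u) * (A #(comp G S u) * phi μ s f (univ \ {u})) := by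
          refine sum_congr rfl fun u hu => ?_
          rw [← sum_filter]
          have e : S.filter (· ∈ comp G S u) = comp G S u := by
            ext x; simp only [mem_filter, and_iff_right_iff_imp]
            exact fun hx => comp_subset hu hx
          rw [e, sum_const, nsmul_eq_mul]
      _ ≤ ∑ u ∈ S, phi μ s f (univ \ {u}) * (32 * (8 / c) ^ #(comp G S u)) := by
          refine sum_le_sum fun u _ => ?_
          have := phi_nonneg hμ hs hf (univ \ {u}) (s := s)
          rw [← mul_assoc, mul_comm]
          exact mul_le_mul_of_nonneg_left (hcube _) this
      _ = _ := by
          rw [← sum_subset (subset_univ S)]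
          · exact sum_congr rfl fun u hu => by rw [if_pos hu]
          · intro u _ hu; rw [if_neg hu]; ring
  refine (block_factor (phi μ s f) K (fun R => ?_) h0 h1).trans ?_
  · refine le_trans (le_of_eq ?_) (hEI R)
    exact sum_congr rfl fun v _ => by unfold phi; ring
  · calc ∑ R, bw θ R * phi μ s f R
        ≤ ∑ R, bw θ R * ∑ u, phi μ s f (univ \ {u}) *
          (32 * (if u ∈ univ \ R then (8 / c) ^ #(comp G (univ \ R) u) else 0)) :=
          sum_le_sum fun R _ => mul_le_mul_of_nonneg_left (step R) (bw_nonneg h0.le h1 R)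
      _ = ∑ u, phi μ s f (univ \ {u}) * (32 * ∑ R, bw θ R *
          (if u ∈ univ \ R then (8 / c) ^ #(comp G (univ \ R) u) else 0)) := by
          simp only [mul_sum]
          rw [sum_comm]
          exact sum_congr rfl fun u _ => sum_congr rfl fun R _ => by ring
      _ ≤ ∑ u, phi μ s f (univ \ {u}) * (32 * 2) := by
          refine sum_le_sum fun u _ => ?_
          have := phi_nonneg hμ hs hf (univ \ {u}) (s := s)
          have := comp_moment hdeg h0.le h1 hB1 hθ u
          gcongr
      _ = _ := by rw [← sum_mul]; ring

end AT
end HC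

/-! ### The hard-core measure: Markov property and marginal bounds -/

namespace HC

section HCI
variable {V : Type} [Fintype V] [DecidableEq V] (G : SimpleGraph V) [DecidableRel G.Adj]

/-- The state space: independent sets of `G`. -/
abbrev Om : Type := {I : Finset V // Ind G I}

/-- The hard-core measure on independent sets. -/
noncomputable def hc (lam : ℝ) (ω : Om G) : ℝ := lam ^ #ω.1 / Z G (fun _ => lam) univ

/-- Extension by zero of a function on independent sets. -/
def ext0 (F : Om G → ℝ) (I : Finset V) : ℝ := if hI : Ind G I then F ⟨I, hI⟩ else 0

/-- The vertices outside `R` that are not blocked by a vertex of `a`. -/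
def free (R a : Finset V) : Finset V := univ.filter fun v => v ∉ R ∧ ∀ u ∈ a, ¬ G.Adj u v

variable {G} {lam : ℝ} (hlam : 0 < lam)

include hlam in
lemma hc_pos (ω : Om G) : 0 < hc G lam ω := div_pos (pow_pos hlam _) (Z_pos G (fun _ => hlam) _)

lemma mem_free {R a : Finset V} {v : V} : v ∈ free G R a ↔ v ∉ R ∧ ∀ u ∈ a, ¬ G.Adj u v := by
  simp [free]

lemma ind_union {R a J : Finset V} (ha : Ind G a) (hJ : J ⊆ free G R a) (h : Ind G J) :
    Ind G (a ∪ J) := by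
  intro u hu v hv huv
  rcases mem_union.1 hu with hu | hu <;> rcases mem_union.1 hv with hv | hv
  · exact ha u hu v hv huv
  · exact (mem_free.1 (hJ hv)).2 u hu huv
  · exact (mem_free.1 (hJ hu)).2 v hv huv.symm
  · exact h u hu v hv huv

/-- Sums over a fibre are partition functions of the free vertices. -/
lemma fibre (R : Finset V) (ω₀ : Om G) (F : Om G → ℝ) :
    (∑ ω : Om G, if ω.1 ∩ R = ω₀.1 ∩ R then hc G lam ω * F ω else 0)
      = lam ^ #(ω₀.1 ∩ R) / Z G (fun _ => lam) univ *
        Zf G (fun _ => lam) (free G R (ω₀.1 ∩ R)) (fun J => ext0 G F (ω₀.1 ∩ R ∪ J)) := by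
  set a := ω₀.1 ∩ R with ha
  have haI : Ind G a := ind_mono G inter_subset_left ω₀.2
  rw [← sum_filter]
  have e : Zf G (fun _ => lam) (free G R a) (fun J => ext0 G F (a ∪ J))
      = ∑ J ∈ (free G R a).powerset.filter (Ind G), lam ^ #J * ext0 G F (a ∪ J) := by
    unfold Zf wt
    rw [sum_filter]
    refine sum_congr rfl fun J _ => ?_
    split_ifs <;> simp
  rw [e, mul_sum]
  have hdis : ∀ J ⊆ free G R a, Disjoint a J := fun J hJ => disjoint_left.2 fun x hx hxJ =>
    (mem_free.1 (hJ hxJ)).1 (mem_inter.1 hx).2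
  refine sum_bij (fun (ω : Om G) _ => ω.1 \ R) ?_ ?_ ?_ ?_
  · intro ω hω
    have hω := (mem_filter.1 hω).2
    rw [mem_filter, mem_powerset]
    refine ⟨fun x hx => mem_free.2 ⟨(mem_sdiff.1 hx).2, fun u hu huv => ?_⟩,
      ind_mono G sdiff_subset ω.2⟩
    rw [← hω] at hu
    exact ω.2 u (mem_inter.1 hu).1 x (mem_sdiff.1 hx).1 huv
  · intro ω hω ω' hω' h
    have hω := (mem_filter.1 hω).2
    have hω' := (mem_filter.1 hω').2
    apply Subtype.ext
    rw [← sdiff_union_inter ω.1 R, ← sdiff_union_inter ω'.1 R, hω, hω', h]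
  · intro J hJ
    rw [mem_filter, mem_powerset] at hJ
    have h1 : J ∩ R = ∅ := by
      ext x; simp only [mem_inter, notMem_empty, iff_false, not_and]
      exact fun hx => (mem_free.1 (hJ.1 hx)).1
    have h2 : a ⊆ R := inter_subset_right
    refine ⟨⟨a ∪ J, ind_union haI hJ.1 hJ.2⟩, ?_, ?_⟩
    · simp only [mem_filter, mem_univ, true_and]
      rw [union_inter_distrib_right, h1, union_empty, inter_eq_left.2 h2]
    · simp only
      rw [union_sdiff_distrib, sdiff_eq_empty_iff_subset.2 h2, empty_union]
      exact sdiff_eq_self_of_disjoint (disjoint_iff_inter_eq_empty.2 h1)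
  · intro ω hω
    have hω := (mem_filter.1 hω).2
    have e : a ∪ ω.1 \ R = ω.1 := by rw [← hω, union_comm, sdiff_union_inter]
    have e2 : #ω.1 = #a + #(ω.1 \ R) := by
      rw [← hω, ← card_inter_add_card_sdiff]
    rw [e]
    unfold hc ext0
    rw [dif_pos ω.2, e2, pow_add]; ring

/-- The mass of a fibre is, up to the weight of the revealed part, the partition function of the free
vertices. -/
lemma den_hc (R : Finset V) (ω₀ : Om G) :
    den (hc G lam) (fun ω => ω.1 ∩ R) ω₀ = lam ^ #(ω₀.1 ∩ R) / Z G (fun _ => lam) univ *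
        Z G (fun _ => lam) (free G R (ω₀.1 ∩ R)) := by
  have := fibre (lam := lam) R ω₀ (fun _ => 1)
  simp only [mul_one] at this
  unfold den
  rw [this]
  unfold Z Zf
  congr 1
  refine sum_congr rfl fun J hJ => ?_
  unfold wt ext0
  split_ifs with h1
  · beta_reduce
    rw [dif_pos (ind_union (ind_mono G inter_subset_left ω₀.2) (mem_powerset.1 hJ) h1)]
  · simp

include hlam in
/-- Spatial Markov property in explicit form: given the spins in `R`, the rest is a hard-core model
on the free vertices. -/
lemma C_hc (R : Finset V) (ω₀ : Om G) (F : Om G → ℝ) :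
    C (hc G lam) Subtype.val R F ω₀
      = Zf G (fun _ => lam) (free G R (ω₀.1 ∩ R)) (fun J => ext0 G F (ω₀.1 ∩ R ∪ J))
        / Z G (fun _ => lam) (free G R (ω₀.1 ∩ R)) := by
  unfold C cE
  rw [fibre, den_hc]
  have h1 := (pow_pos hlam #(ω₀.1 ∩ R)).ne'
  have h2 := (Z_pos G (fun _ : V => hlam) univ).ne'
  have h3 := (Z_pos G (fun _ : V => hlam) (free G R (ω₀.1 ∩ R))).ne'
  field_simp

include hlam in
lemma Z_mono {U U' : Finset V} (h : U ⊆ U') : Z G (fun _ => lam) U ≤ Z G (fun _ => lam) U' :=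
  sum_le_sum_of_subset_of_nonneg (powerset_mono.2 h) fun I _ _ => by
    simpa using wt_nonneg G (fun _ => hlam) I

include hlam in
/-- Deleting a vertex decreases the partition function at most by a factor `1 + lam`. -/
lemma Z_erase (U : Finset V) (w : V) :
    Z G (fun _ => lam) U ≤ (1 + lam) * Z G (fun _ => lam) (U.erase w) := by
  by_cases hw : w ∈ U
  · rw [Z_rec G hw]
    have := Z_mono (G := G) hlam (sdiff_subset : U.erase w \ nbr G w ⊆ U.erase w)
    nlinarith
  · rw [erase_eq_of_notMem hw]
    have := Z_pos G (fun _ : V => hlam) U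
    nlinarith

include hlam in
lemma Z_sdiff (U Q : Finset V) :
    Z G (fun _ => lam) U ≤ (1 + lam) ^ #Q * Z G (fun _ => lam) (U \ Q) := by
  induction Q using Finset.induction_on with
  | empty => simp
  | insert w Q hw ih =>
    rw [card_insert_of_notMem hw, sdiff_insert, pow_succ, mul_assoc]
    refine ih.trans ?_
    have := Z_erase (G := G) hlam (U \ Q) w
    gcongr

/-- Lower bound for conditional one-site probabilities. -/
noncomputable def cM (lam : ℝ) (D : ℕ) : ℝ := min lam 1 / (1 + lam) ^ (D + 1)

include hlam in
lemma cM_pos (D : ℕ) : 0 < cM lam D := div_pos (lt_min hlam one_pos) (by positivity)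

include hlam in
lemma cM_le_one (D : ℕ) : cM lam D ≤ 1 := by
  unfold cM
  rw [div_le_one (by positivity)]
  exact (min_le_right _ _).trans (one_le_pow₀ (by linarith))

include hlam in
lemma MB_hc {D : ℕ} (hdeg : ∀ v, #(nbr G v) ≤ D) :
    MB (hc G lam) (Subtype.val : Om G → Finset V) (cM lam D) := by
  intro R v ω
  by_cases hvR : v ∈ R
  · rw [insert_eq_self.2 hvR]
    have := den_pos (hc_pos hlam) (π := fun ω : Om G => ω.1 ∩ R) ω
    nlinarith [cM_le_one hlam D]
  rw [den_hc, den_hc]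
  set a := ω.1 ∩ R with ha
  set U := free G R a with hU
  have hk : 0 < lam ^ #a / Z G (fun _ : V => lam) univ :=
    div_pos (pow_pos hlam _) (Z_pos G (fun _ => hlam) _)
  have hc0 := cM_pos hlam D
  have hp : 0 < (1 + lam) ^ (D + 1) := by positivity
  have hm : cM lam D * (1 + lam) ^ (D + 1) = min lam 1 := by
    unfold cM; field_simp
  by_cases hvω : v ∈ ω.1
  · have e1 : ω.1 ∩ insert v R = insert v a := by rw [inter_insert_of_mem hvω]
    have hva : v ∉ a := fun h => hvR (mem_inter.1 h).2
    have e2 : free G (insert v R) (insert v a) = U.erase v \ nbr G v := by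
      ext x
      simp only [hU, mem_free, mem_insert, mem_sdiff, mem_erase, mem_nbr, not_or,
        forall_eq_or_imp]
      tauto
    rw [e1, e2, card_insert_of_notMem hva, pow_succ]
    have h1 : Z G (fun _ => lam) U
        ≤ (1 + lam) ^ (D + 1) * Z G (fun _ => lam) (U.erase v \ nbr G v) := by
      refine (Z_erase hlam U v).trans ?_
      rw [pow_succ', mul_assoc]
      have h2 := Z_sdiff (G := G) hlam (U.erase v) (nbr G v)
      have h3 : (1 + lam) ^ #(nbr G v) ≤ (1 + lam) ^ D :=
        pow_le_pow_right₀ (by linarith) (hdeg v)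
      have h4 := Z_pos G (fun _ : V => hlam) (U.erase v \ nbr G v)
      have : 0 ≤ 1 + lam := by linarith
      exact mul_le_mul_of_nonneg_left (h2.trans (mul_le_mul_of_nonneg_right h3 h4.le)) this
    have h4 := Z_pos G (fun _ : V => hlam) (U.erase v \ nbr G v)
    calc cM lam D * (lam ^ #a / Z G (fun _ => lam) univ * Z G (fun _ => lam) U)
        ≤ cM lam D * (lam ^ #a / Z G (fun _ => lam) univ *
          ((1 + lam) ^ (D + 1) * Z G (fun _ => lam) (U.erase v \ nbr G v))) := by gcongr
      _ = (lam ^ #a / Z G (fun _ => lam) univ) * (cM lam D * (1 + lam) ^ (D + 1)) *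
            Z G (fun _ => lam) (U.erase v \ nbr G v) := by ring
      _ ≤ (lam ^ #a / Z G (fun _ => lam) univ) * lam *
            Z G (fun _ => lam) (U.erase v \ nbr G v) := by
          rw [hm]
          have := min_le_left lam 1
          gcongr
      _ = _ := by ring
  · have e1 : ω.1 ∩ insert v R = a := by rw [inter_insert_of_notMem hvω]
    have e2 : free G (insert v R) a = U.erase v := by
      ext x
      simp only [hU, mem_free, mem_insert, mem_erase, not_or]
      tauto
    rw [e1, e2]
    have h4 := Z_pos G (fun _ : V => hlam) (U.erase v)
    have h5 : cM lam D * (1 + lam) ≤ 1 := by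
      calc cM lam D * (1 + lam) ≤ cM lam D * (1 + lam) ^ (D + 1) := by
            have : 1 + lam ≤ (1 + lam) ^ (D + 1) := le_self_pow₀ (by linarith) (by omega)
            gcongr
        _ ≤ 1 := by rw [hm]; exact min_le_right _ _
    calc cM lam D * (lam ^ #a / Z G (fun _ => lam) univ * Z G (fun _ => lam) U)
        ≤ cM lam D * (lam ^ #a / Z G (fun _ => lam) univ *
          ((1 + lam) * Z G (fun _ => lam) (U.erase v))) := by
          have := Z_erase (G := G) hlam U v
          gcongr
      _ = (cM lam D * (1 + lam)) *
          (lam ^ #a / Z G (fun _ => lam) univ * Z G (fun _ => lam) (U.erase v)) := by ring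
      _ ≤ 1 * (lam ^ #a / Z G (fun _ => lam) univ * Z G (fun _ => lam) (U.erase v)) := by
          gcongr
      _ = _ := one_mul _

lemma Her_hc : Her (Subtype.val : Om G → Finset V) := fun ω v =>
  ⟨⟨ω.1.erase v, ind_mono G (erase_subset _ _) ω.2⟩, rfl⟩

omit [Fintype V] [DecidableEq V] in
/-- If an involution of pairs exchanges the two entries as far as `g` is concerned and preserves the
product weight, then `g` has the same weighted mean over both sets. -/
lemma swap_sum {Ω : Type} (X Y : Finset Ω) (μ g : Ω → ℝ) (sw : Ω → Ω → Ω)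
    (hsw : ∀ p ∈ X, ∀ q ∈ Y, sw p q ∈ X ∧ sw q p ∈ Y ∧ sw (sw p q) (sw q p) = p ∧
      sw (sw q p) (sw p q) = q ∧ μ (sw p q) * μ (sw q p) = μ p * μ q ∧ g (sw p q) = g q) :
    (∑ p ∈ X, μ p * g p) * ∑ q ∈ Y, μ q = (∑ q ∈ Y, μ q * g q) * ∑ p ∈ X, μ p := by
  rw [mul_comm (∑ q ∈ Y, μ q * g q), sum_mul_sum, sum_mul_sum, ← sum_product', ← sum_product']
  refine sum_nbij' (i := fun z => (sw z.1 z.2, sw z.2 z.1)) (j := fun z => (sw z.1 z.2, sw z.2 z.1))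
    ?_ ?_ ?_ ?_ ?_
  · intro z hz
    obtain ⟨h1, h2⟩ := mem_product.1 hz
    exact mem_product.2 ⟨(hsw _ h1 _ h2).1, (hsw _ h1 _ h2).2.1⟩
  · intro z hz
    obtain ⟨h1, h2⟩ := mem_product.1 hz
    exact mem_product.2 ⟨(hsw _ h1 _ h2).1, (hsw _ h1 _ h2).2.1⟩
  · intro z hz
    obtain ⟨h1, h2⟩ := mem_product.1 hz
    exact Prod.ext (hsw _ h1 _ h2).2.2.1 (hsw _ h1 _ h2).2.2.2.1
  · intro z hz
    obtain ⟨h1, h2⟩ := mem_product.1 hz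
    exact Prod.ext (hsw _ h1 _ h2).2.2.1 (hsw _ h1 _ h2).2.2.2.1
  · intro z hz
    obtain ⟨h1, h2⟩ := mem_product.1 hz
    obtain ⟨a, b, c, d, e, k⟩ := hsw _ h1 _ h2
    obtain ⟨a', b', c', d', e', k'⟩ := hsw _ a _ b
    rw [c] at k'
    simp only
    rw [← k', ← mul_assoc, e]
    ring

include hlam in
lemma Mk_hc : Mk (hc G lam) (Subtype.val : Om G → Finset V) G := by
  intro R B hRB hno v hv g hg
  funext ω₀
  unfold C cE
  rw [div_eq_div_iff (den_pos (hc_pos hlam) ω₀).ne' (den_pos (hc_pos hlam) ω₀).ne']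
  unfold den
  simp only [← sum_filter]
  set X := univ.filter fun ω : Om G => ω.1 ∩ insert v R = ω₀.1 ∩ insert v R with hX
  set Y := univ.filter fun ω : Om G => ω.1 ∩ R = ω₀.1 ∩ R with hY
  -- exchange the two configurations on `B`
  have hind : ∀ p q : Om G, p.1 ∩ R = ω₀.1 ∩ R → q.1 ∩ R = ω₀.1 ∩ R →
      Ind G (p.1 \ B ∪ q.1 ∩ B) := by
    have cross : ∀ p q : Om G, p.1 ∩ R = ω₀.1 ∩ R → q.1 ∩ R = ω₀.1 ∩ R →
        ∀ x ∈ p.1 \ B, ∀ y ∈ q.1 ∩ B, ¬ G.Adj x y := by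
      intro p q hp hq x hx y hy hxy
      rw [mem_sdiff] at hx
      rw [mem_inter] at hy
      by_cases hyR : y ∈ R
      · have : y ∈ p.1 ∩ R := by rw [hp, ← hq]; exact mem_inter.2 ⟨hy.1, hyR⟩
        exact p.2 x hx.1 y (mem_inter.1 this).1 hxy
      · exact hno x (by simp [hx.2]) y (mem_sdiff.2 ⟨hy.2, hyR⟩) hxy
    intro p q hp hq x hx y hy hxy
    rcases mem_union.1 hx with hx | hx <;> rcases mem_union.1 hy with hy | hy
    · exact p.2 x (mem_sdiff.1 hx).1 y (mem_sdiff.1 hy).1 hxy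
    · exact cross p q hp hq x hx y hy hxy
    · exact cross p q hp hq y hy x hx hxy.symm
    · exact q.2 x (mem_inter.1 hx).1 y (mem_inter.1 hy).1 hxy
  have hXY : ∀ ω ∈ X, ω.1 ∩ R = ω₀.1 ∩ R := fun ω h =>
    inter_sub (subset_insert v R) (mem_filter.1 h).2
  have hYY : ∀ ω ∈ Y, ω.1 ∩ R = ω₀.1 ∩ R := fun ω h => (mem_filter.1 h).2
  have inB : ∀ p q : Finset V, (p \ B ∪ q ∩ B) ∩ B = q ∩ B := fun p q => by
    ext x; simp only [mem_inter, mem_union, mem_sdiff]; tauto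
  have inX : ∀ p ∈ X, ∀ q ∈ Y, (p.1 \ B ∪ q.1 ∩ B) ∩ insert v R = ω₀.1 ∩ insert v R := by
    intro p hp q hq
    have h1 := (mem_filter.1 hp).2
    have h2 := hYY q hq
    rw [Finset.ext_iff] at h1 h2 ⊢
    intro x
    have k1 := h1 x
    have k2 := h2 x
    simp only [mem_inter, mem_union, mem_sdiff, mem_insert] at k1 k2 ⊢
    by_cases hxB : x ∈ B
    · have k4 : x ≠ v := fun e => hv (e ▸ hxB)
      simp only [k4, hxB, false_or, not_true, and_false, and_true] at k2 ⊢
      exact k2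
    · have k3 : x ∉ R := fun h => hxB (hRB h)
      simp only [hxB, not_false_iff, and_true, and_false, or_false]
      exact k1
  have inY : ∀ p ∈ X, ∀ q ∈ Y, (q.1 \ B ∪ p.1 ∩ B) ∩ R = ω₀.1 ∩ R := by
    intro p hp q hq
    have h1 := hXY p hp
    rw [Finset.ext_iff] at h1 ⊢
    intro x
    have k1 := h1 x
    simp only [mem_inter, mem_union, mem_sdiff] at k1 ⊢
    by_cases hxR : x ∈ R
    · have := hRB hxR
      simpa [this, hxR] using k1
    · simp [hxR]
  have back : ∀ p q : Finset V, (p \ B ∪ q ∩ B) \ B ∪ (q \ B ∪ p ∩ B) ∩ B = p := fun p q => by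
    ext x; simp only [mem_inter, mem_union, mem_sdiff]; tauto
  have cardeq : ∀ p q : Finset V, #(p \ B ∪ q ∩ B) + #(q \ B ∪ p ∩ B) = #p + #q := fun p q => by
    have d : ∀ p q : Finset V, Disjoint (p \ B) (q ∩ B) := fun p q =>
      disjoint_left.2 fun x hx hy => (mem_sdiff.1 hx).2 (mem_inter.1 hy).2
    rw [card_union_of_disjoint (d p q), card_union_of_disjoint (d q p),
      ← card_sdiff_add_card_inter p B, ← card_sdiff_add_card_inter q B]
    ring
  let sw : Om G → Om G → Om G := fun p q =>
    if hI : Ind G (p.1 \ B ∪ q.1 ∩ B) then ⟨p.1 \ B ∪ q.1 ∩ B, hI⟩ else p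
  have swv : ∀ p q : Om G, p.1 ∩ R = ω₀.1 ∩ R → q.1 ∩ R = ω₀.1 ∩ R →
      (sw p q).1 = p.1 \ B ∪ q.1 ∩ B := fun p q hp hq => by
    simp only [sw]; rw [dif_pos (hind p q hp hq)]
  have swX : ∀ p ∈ X, ∀ q ∈ Y, sw p q ∈ X := fun p hp q hq =>
    mem_filter.2 ⟨mem_univ _, by rw [swv p q (hXY p hp) (hYY q hq)]; exact inX p hp q hq⟩
  have swY : ∀ p ∈ X, ∀ q ∈ Y, sw q p ∈ Y := fun p hp q hq =>
    mem_filter.2 ⟨mem_univ _, by rw [swv q p (hYY q hq) (hXY p hp)]; exact inY p hp q hq⟩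
  have swb : ∀ p ∈ X, ∀ q ∈ Y, sw (sw p q) (sw q p) = p ∧ sw (sw q p) (sw p q) = q := by
    intro p hp q hq
    have a := hXY _ (swX p hp q hq)
    have b := hYY _ (swY p hp q hq)
    have e1 := swv p q (hXY p hp) (hYY q hq)
    have e2 := swv q p (hYY q hq) (hXY p hp)
    exact ⟨Subtype.ext (by rw [swv _ _ a b, e1, e2, back]),
      Subtype.ext (by rw [swv _ _ b a, e1, e2, back])⟩
  refine swap_sum X Y _ g sw fun p hp q hq => ?_
  have e1 := swv p q (hXY p hp) (hYY q hq)
  have e2 := swv q p (hYY q hq) (hXY p hp)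
  refine ⟨swX p hp q hq, swY p hp q hq, (swb p hp q hq).1, (swb p hp q hq).2, ?_, ?_⟩
  · unfold hc
    rw [div_mul_div_comm, div_mul_div_comm, ← pow_add, ← pow_add, e1, e2, cardeq]
  · refine hg _ _ ?_
    change (sw p q).1 ∩ B = q.1 ∩ B
    rw [e1, inB]

end HCI
end HC

/-! ### Approximate tensorization for the hard-core model -/

namespace HC

section HCJ
variable {V : Type} [Fintype V] [DecidableEq V] (G : SimpleGraph V) [DecidableRel G.Adj]
variable {G} {lam : ℝ} (hlam : 0 < lam)

include hlam in
/-- Conditional sub-Gaussianity for the hard-core model. Given the spins in `R`, a sum of one-site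
functions is a constant plus a linear statistic whose coefficient at `v` is the difference `y v` of
the two values at `v`. As `u v` is centred and both spins at a free vertex have probability at
least `c`, `y v ^ 2` is bounded by a multiple of the conditional variance of `u v`. -/
lemma SG_hc (d : ℕ) (hd : 2 ≤ d) (hdeg : ∀ v, #(nbr G v) ≤ d + 1) (δ : ℝ) (hδ0 : 0 < δ)
    (hδ1 : δ < 1) {y0 : ℝ} (hy0 : lam * Real.exp (2 * y0) ≤ (1 - δ) * lamD d) {c : ℝ} (hc0 : 0 < c)
    (hMB : MB (hc G lam) (Subtype.val : Om G → Finset V) c) :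
    SG (hc G lam) (Subtype.val : Om G → Finset V) y0 (2 * KSI d δ / c) := by
  intro R u hu hub hu0 ω₀
  have hμ := hc_pos (G := G) hlam
  set a := ω₀.1 ∩ R with ha
  set U := free G R a with hU
  have haI : Ind G a := ind_mono G inter_subset_left ω₀.2
  have haR : a ⊆ R := inter_subset_right
  have haav : ∀ v ∈ U, Ind G (insert v a) := fun v hv => by
    rw [ind_insert]
    refine ⟨haI, fun x hx => ?_⟩
    rw [mem_nbr]
    exact fun h => (mem_free.1 hv).2 x hx h.symm
  -- the configuration that agrees with `ω₀` on `R` and is empty elsewhere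
  let ωb : Om G := ⟨a, haI⟩
  let ωv : V → Om G := fun v => if hv : v ∈ U then ⟨insert v a, haav v hv⟩ else ωb
  have hωv : ∀ v (hv : v ∈ U), (ωv v).1 = insert v a := fun v hv => by simp only [ωv]; rw [dif_pos hv]
  have hωvn : ∀ v, v ∉ U → ωv v = ωb := fun v hv => by simp only [ωv]; rw [dif_neg hv]
  have hbR : ωb.1 ∩ R = ω₀.1 ∩ R := by
    change a ∩ R = a
    exact inter_eq_left.2 haR
  have hvR : ∀ v, (ωv v).1 ∩ R = ω₀.1 ∩ R := fun v => by
    by_cases hv : v ∈ U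
    · rw [hωv v hv, insert_inter_of_notMem (mem_free.1 hv).1]; exact hbR
    · rw [hωvn v hv]; exact hbR
  set y : V → ℝ := fun v => u v (ωv v) - u v ωb with hy
  set A : ℝ := ∑ v ∈ univ \ R, u v ωb with hA
  have hUR : U ⊆ univ \ R := fun v hv => by simp [(mem_free.1 hv).1]
  have hsum : ∀ J ⊆ U, ∀ hJ : Ind G (a ∪ J),
      ∑ v ∈ univ \ R, u v ⟨a ∪ J, hJ⟩ = A + ∑ v ∈ J, y v := by
    intro J hJU hJ
    have hJR : J ∩ R = ∅ := by
      ext x; simp only [mem_inter, notMem_empty, iff_false, not_and]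
      exact fun hx => (mem_free.1 (hJU hx)).1
    have e : ∀ v ∈ univ \ R, u v ⟨a ∪ J, hJ⟩ = u v ωb + if v ∈ J then y v else 0 := by
      intro v hv
      have hvR' : v ∉ R := (mem_sdiff.1 hv).2
      have hva : v ∉ a := fun h => hvR' (haR h)
      split_ifs with hvJ
      · have e1 : u v ⟨a ∪ J, hJ⟩ = u v (ωv v) := hu v _ _ (by
          change (a ∪ J) ∩ insert v R = (ωv v).1 ∩ insert v R
          rw [hωv v (hJU hvJ), inter_insert_of_mem (mem_union_right _ hvJ),
            inter_insert_of_mem (mem_insert_self _ _), union_inter_distrib_right, hJR,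
            insert_inter_of_notMem hvR', union_empty])
        rw [e1, hy]; ring
      · rw [add_zero]
        exact hu v _ _ (by
          change (a ∪ J) ∩ insert v R = a ∩ insert v R
          rw [inter_insert_of_notMem (by simp [hva, hvJ]), inter_insert_of_notMem hva,
            union_inter_distrib_right, hJR, union_empty])
    rw [sum_congr rfl e, sum_add_distrib, ← sum_filter]
    congr 2
    ext x; simp only [mem_filter, and_iff_right_iff_imp]
    exact fun hx => hUR (hJU hx)
  have hZ := Z_pos G (fun _ : V => hlam) U
  have hmean : A + Zf G (fun _ => lam) U (fun J => ∑ v ∈ J, y v) / Z G (fun _ => lam) U = 0 := by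
    have h0 : C (hc G lam) Subtype.val R (fun ω : Om G => ∑ v ∈ univ \ R, u v ω) ω₀ = 0 := by
      unfold C
      rw [cE_sum]
      exact sum_eq_zero fun v _ => hu0 v ω₀
    rw [C_hc hlam] at h0
    rw [div_eq_zero_iff, or_iff_left hZ.ne'] at h0
    have h1 : Zf G (fun _ => lam) U (fun J => ext0 G (fun ω : Om G => ∑ v ∈ univ \ R, u v ω) (a ∪ J))
        = Zf G (fun _ => lam) U (fun J => A * 1 + ∑ v ∈ J, y v) := by
      unfold Zf
      refine sum_congr rfl fun J hJ => ?_
      rw [mem_powerset] at hJ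
      by_cases hJI : Ind G J
      · have := ind_union haI hJ hJI
        unfold ext0
        beta_reduce
        rw [dif_pos this, hsum J hJ this, mul_one]
      · unfold wt; rw [if_neg hJI]; ring
    rw [h1] at h0
    have h2 : Zf G (fun _ => lam) U (fun J => A * 1 + ∑ v ∈ J, y v)
        = A * Z G (fun _ => lam) U + Zf G (fun _ => lam) U (fun J => ∑ v ∈ J, y v) := by
      unfold Z Zf
      rw [mul_sum, ← sum_add_distrib]
      exact sum_congr rfl fun J _ => by ring
    rw [h2] at h0
    field_simp
    linarith
  have hexp : C (hc G lam) Subtype.val R (fun ω : Om G => Real.exp (∑ v ∈ univ \ R, u v ω)) ω₀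
      = Real.exp A * Zf G (fun _ => lam) U (fun J => Real.exp (∑ v ∈ J, y v))
        / Z G (fun _ => lam) U := by
    rw [C_hc hlam]
    congr 1
    unfold Zf
    rw [mul_sum]
    refine sum_congr rfl fun J hJ => ?_
    rw [mem_powerset] at hJ
    by_cases hJI : Ind G J
    · have := ind_union haI hJ hJI
      unfold ext0
      beta_reduce
      rw [← ha, dif_pos this, hsum J hJ this, Real.exp_add]; ring
    · unfold wt; rw [if_neg hJI]; ring
  have hyb : ∀ v, |y v| ≤ 2 * y0 := fun v => by
    have h1 := hub v (ωv v)
    have h2 := hub v ωb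
    rw [abs_le] at h1 h2 ⊢
    simp only [hy]
    constructor <;> linarith
  have hsg := subgaussian G d hd hdeg δ hδ0 hδ1 lam (2 * y0) hlam hy0 y hyb U
  -- each value of `u v` is controlled by its conditional second moment
  have hsq : ∀ v ω, ω.1 ∩ R = ω₀.1 ∩ R →
      u v ω ^ 2 ≤ C (hc G lam) Subtype.val R (fun ω => u v ω ^ 2) ω₀ / c := fun v ω hω => by
    have h1 := MB_le hμ hMB hc0 (f := fun ω => u v ω ^ 2) (fun ω => sq_nonneg _) R v ω
    have h2 : C (hc G lam) Subtype.val (insert v R) (fun ω => u v ω ^ 2) ω = u v ω ^ 2 :=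
      cE_of_meas hμ (fun p q hpq => by rw [hu v p q hpq]) ω
    have h3 : C (hc G lam) Subtype.val R (fun ω => u v ω ^ 2) ω
        = C (hc G lam) Subtype.val R (fun ω => u v ω ^ 2) ω₀ := cE_meas _ _ _ hω
    rw [h2, h3] at h1
    exact h1
  have hK : 0 ≤ KSI d δ := by
    have := epsD_pos hd hδ0
    unfold KSI; positivity
  have hy2 : ∑ v ∈ U, y v ^ 2 ≤ ∑ v ∈ univ \ R, 4 / c * C (hc G lam) Subtype.val R (fun ω => u v ω ^ 2) ω₀ := by
    refine (sum_le_sum_of_subset_of_nonneg hUR fun v _ _ => sq_nonneg _).trans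
      (sum_le_sum fun v _ => ?_)
    have h1 := hsq v (ωv v) (hvR v)
    have h2 := hsq v ωb hbR
    have h3 : y v ^ 2 ≤ 2 * (u v (ωv v) ^ 2 + u v ωb ^ 2) := by
      simp only [hy]; nlinarith [sq_nonneg (u v (ωv v) + u v ωb)]
    calc y v ^ 2 ≤ _ := h3
      _ ≤ 2 * (C (hc G lam) Subtype.val R (fun ω => u v ω ^ 2) ω₀ / c
          + C (hc G lam) Subtype.val R (fun ω => u v ω ^ 2) ω₀ / c) := by gcongr
      _ = _ := by ring
  rw [hexp, div_le_iff₀ hZ]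
  set M := Zf G (fun _ => lam) U (fun J => ∑ v ∈ J, y v) / Z G (fun _ => lam) U with hM
  calc Real.exp A * Zf G (fun _ => lam) U (fun J => Real.exp (∑ v ∈ J, y v))
      ≤ Real.exp A * (Z G (fun _ => lam) U * Real.exp (M + KSI d δ * (∑ v ∈ U, y v ^ 2) / 2)) := by
        gcongr
    _ = Real.exp ((A + M) + KSI d δ * (∑ v ∈ U, y v ^ 2) / 2) * Z G (fun _ => lam) U := by
        rw [add_assoc, Real.exp_add A]; ring
    _ ≤ Real.exp (2 * KSI d δ / c * ∑ v ∈ univ \ R, C (hc G lam) Subtype.val R (fun ω => u v ω ^ 2) ω₀)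
          * Z G (fun _ => lam) U := by
        gcongr
        rw [hmean, zero_add]
        calc KSI d δ * (∑ v ∈ U, y v ^ 2) / 2
            ≤ KSI d δ * (∑ v ∈ univ \ R, 4 / c *
              C (hc G lam) Subtype.val R (fun ω => u v ω ^ 2) ω₀) / 2 := by gcongr
          _ = _ := by rw [← mul_sum]; ring

/-- Approximate tensorization of entropy for the hard-core model, uniformly over graphs and over
fugacities bounded away from `0` and from the uniqueness threshold. -/
theorem at_hc (d : ℕ) (hd : 2 ≤ d) (δ : ℝ) (hδ0 : 0 < δ) (hδ1 : δ < 1) (lam0 : ℝ)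
    (h0 : 0 < lam0) : ∃ A : ℝ, 0 < A ∧
    ∀ (V : Type) [Fintype V] [DecidableEq V] (G : SimpleGraph V) [DecidableRel G.Adj],
      (∀ v, #(nbr G v) ≤ d + 1) → ∀ lam : ℝ, lam0 ≤ lam → lam ≤ (1 - δ) * lamD d →
      ∀ f : Om G → ℝ, (∀ ω, 0 < f ω) →
      phi (hc G lam) Subtype.val f ∅ ≤ A * ∑ u, phi (hc G lam) Subtype.val f (univ \ {u}) := by
  set L := lamD d with hL
  have hLp : 0 < L := lamD_pos hd
  set c : ℝ := min lam0 1 / (1 + L) ^ (d + 2) with hcdef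
  have hc0 : 0 < c := div_pos (lt_min h0 one_pos) (by positivity)
  have hc1 : c ≤ 1 := by
    rw [hcdef, div_le_one (by positivity)]
    exact (min_le_right _ _).trans (one_le_pow₀ (by linarith))
  have hδ2 : 0 < 1 - δ := by linarith
  set y0 : ℝ := Real.log ((1 - δ / 2) / (1 - δ)) / 2 with hy0
  have hy0p : 0 < y0 := by
    refine half_pos (Real.log_pos ?_)
    rw [lt_div_iff₀ hδ2]; linarith
  set K : ℝ := 2 * KSI d (δ / 2) / c with hK
  have hKp : 0 < K := by
    have := epsD_pos hd (half_pos hδ0)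
    unfold KSI at hK
    rw [hK]; positivity
  set ε : ℝ := min (c * y0) (1 / (2 * K)) with hε
  have hεp : 0 < ε := lt_min (by positivity) (by positivity)
  have hε2 : K * ε ≤ 1 / 2 := by
    calc K * ε ≤ K * (1 / (2 * K)) := by gcongr; exact min_le_right _ _
      _ = 1 / 2 := by field_simp
  set θ : ℝ := c / (8 * 2 ^ (d + 1)) with hθ
  have hθp : 0 < θ := by positivity
  have hθ1 : θ ≤ 1 := by
    rw [hθ, div_le_one (by positivity)]
    have : (1 : ℝ) ≤ 2 ^ (d + 1) := one_le_pow₀ (by norm_num)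
    linarith
  set N : ℕ := ⌈2 / ε⌉₊ with hN
  refine ⟨64 / θ ^ N, by positivity, ?_⟩
  intro V _ _ G _ hdeg lam hl0 hl1 f hf
  have hlam : 0 < lam := h0.trans_le hl0
  have hlL : lam ≤ L := hl1.trans (by nlinarith)
  have hμ := hc_pos (G := G) hlam
  have hs : Function.Injective (Subtype.val : Om G → Finset V) := Subtype.val_injective
  have hccM : c ≤ cM lam (d + 1) := by
    unfold cM
    rw [hcdef]
    have : 0 ≤ min lam0 1 := (lt_min h0 one_pos).le
    have : min lam0 1 ≤ min lam 1 := min_le_min_right _ hl0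
    gcongr
  have hMB : MB (hc G lam) (Subtype.val : Om G → Finset V) c := fun R v ω =>
    (mul_le_mul_of_nonneg_right hccM (den_pos hμ ω).le).trans (MB_hc hlam hdeg R v ω)
  have hSG := SG_hc (G := G) hlam d hd hdeg (δ / 2) (half_pos hδ0) (by linarith) (y0 := y0) (by
    have : 2 * y0 = Real.log ((1 - δ / 2) / (1 - δ)) := by rw [hy0]; ring
    rw [this, Real.exp_log (div_pos (by linarith) hδ2)]
    calc lam * ((1 - δ / 2) / (1 - δ)) ≤ ((1 - δ) * L) * ((1 - δ / 2) / (1 - δ)) := by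
          have : 0 ≤ (1 - δ / 2) / (1 - δ) := (div_pos (by linarith) hδ2).le
          gcongr
      _ = (1 - δ / 2) * L := by field_simp) hc0 hMB
  have hAT := approx_tensor hμ hs hc0 hc1 hMB Her_hc (Mk_hc hlam) hdeg hθp hθ1 (by
    rw [hθ]; refine le_of_eq ?_; field_simp) N hf (fun R => by
      refine (entropic_independence hμ hs hc0 hc1 hMB hSG hεp (min_le_left _ _) hε2 hf R).trans ?_
      have := phi_nonneg hμ hs hf R
      have := Nat.le_ceil (2 / ε)
      gcongr)
  rw [div_mul_eq_mul_div, le_div_iff₀ (by positivity)]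
  exact hAT

end HCJ
end HC

/-! ### Entropy decay of the Glauber dynamics -/

namespace HC

section HCH
variable {Ω V : Type} [Fintype Ω] [Fintype V] [DecidableEq V]

/-- The Glauber dynamics as an averaging operator on functions: resample a uniform vertex. -/
noncomputable def Pop (μ : Ω → ℝ) (s : Ω → Finset V) (f : Ω → ℝ) (ω : Ω) : ℝ :=
  (Fintype.card V : ℝ)⁻¹ * ∑ v, C μ s (univ \ {v}) f ω

variable {μ : Ω → ℝ} {s : Ω → Finset V} (hμ : ∀ ω, 0 < μ ω)
include hμ

lemma ex_mul_C (R : Finset V) (f g : Ω → ℝ) :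
    ex μ (fun ω => f ω * C μ s R g ω) = ex μ (fun ω => C μ s R f ω * g ω) := by
  have h1 := ex_mul_cE (π := fun ω => s ω ∩ R) hμ (cE_meas (π := fun ω => s ω ∩ R) (μ := μ) g) f
  have h2 := ex_mul_cE (π := fun ω => s ω ∩ R) hμ (cE_meas (π := fun ω => s ω ∩ R) (μ := μ) f) g
  unfold C
  rw [← h2]
  simp only [mul_comm (f _)]
  rw [← h1]
  simp only [mul_comm]

/-- Reversibility: the dynamics is self-adjoint in `L²(μ)`. -/
lemma ex_mul_Pop (f g : Ω → ℝ) :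
    ex μ (fun ω => f ω * Pop μ s g ω) = ex μ (fun ω => Pop μ s f ω * g ω) := by
  unfold Pop
  have e1 : (fun ω => f ω * ((Fintype.card V : ℝ)⁻¹ * ∑ v, C μ s (univ \ {v}) g ω))
      = fun ω => (Fintype.card V : ℝ)⁻¹ * ∑ v, f ω * C μ s (univ \ {v}) g ω := by
    funext ω; rw [mul_sum, mul_sum, mul_sum]; exact sum_congr rfl fun v _ => by ring
  have e2 : (fun ω => (Fintype.card V : ℝ)⁻¹ * (∑ v, C μ s (univ \ {v}) f ω) * g ω)
      = fun ω => (Fintype.card V : ℝ)⁻¹ * ∑ v, C μ s (univ \ {v}) f ω * g ω := by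
    funext ω; rw [mul_assoc, sum_mul]
  rw [e1, e2, ex_cmul, ex_cmul, ex_sum, ex_sum]
  congr 1
  exact sum_congr rfl fun v _ => ex_mul_C hμ _ f g

lemma ex_mul_Pop_iter (t : ℕ) (f g : Ω → ℝ) :
    ex μ (fun ω => f ω * (Pop μ s)^[t] g ω) = ex μ (fun ω => (Pop μ s)^[t] f ω * g ω) := by
  induction t generalizing f g with
  | zero => rfl
  | succ t ih =>
    rw [Function.iterate_succ_apply, Function.iterate_succ_apply', ih, ex_mul_Pop hμ]

variable [Nonempty V]

lemma Pop_one : Pop μ s (fun _ => 1) = fun _ => 1 := by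
  funext ω
  unfold Pop C
  simp_rw [cE_one hμ]
  simp

lemma Pop_one_iter (t : ℕ) : (Pop μ s)^[t] (fun _ => 1) = fun _ => 1 := by
  induction t with
  | zero => rfl
  | succ t ih => rw [Function.iterate_succ_apply', ih, Pop_one hμ]

lemma ex_Pop_iter (t : ℕ) (f : Ω → ℝ) : ex μ ((Pop μ s)^[t] f) = ex μ f := by
  have := ex_mul_Pop_iter (s := s) hμ t (fun _ => 1) f
  simpa [Pop_one_iter hμ] using this

lemma Pop_pos {f : Ω → ℝ} (hf : ∀ ω, 0 < f ω) (ω : Ω) : 0 < Pop μ s f ω := by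
  unfold Pop
  have : 0 < (Fintype.card V : ℝ) := by exact_mod_cast Fintype.card_pos
  exact mul_pos (inv_pos.2 this) (sum_pos (fun v _ => cE_pos hμ hf ω) univ_nonempty)

lemma Pop_iter_pos (t : ℕ) {f : Ω → ℝ} (hf : ∀ ω, 0 < f ω) (ω : Ω) :
    0 < (Pop μ s)^[t] f ω := by
  induction t generalizing f with
  | zero => exact hf ω
  | succ t ih => rw [Function.iterate_succ_apply]; exact ih (Pop_pos hμ hf)

variable (hs : Function.Injective s) (h1 : ∑ ω, μ ω = 1)
include h1

lemma C_empty (f : Ω → ℝ) (ω : Ω) : C μ s ∅ f ω = ex μ f := by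
  unfold C
  have : ∀ ω ω', (fun ω => s ω ∩ (∅ : Finset V)) ω = (fun ω => s ω ∩ ∅) ω' := fun _ _ => by simp
  unfold cE den ex
  simp [h1]

include hs

lemma phi_empty (f : Ω → ℝ) :
    phi μ s f ∅ = ex μ (fun ω => f ω * Real.log (f ω)) - ex μ f * Real.log (ex μ f) := by
  unfold phi h
  rw [C_univ hμ hs]
  simp_rw [C_empty hμ h1]
  congr 1
  unfold ex
  rw [← sum_mul, h1, one_mul]

/-- One step of the dynamics decreases the entropy by the average single-site entropy: convexity
of `x log x` applied to the average over the resampled vertex. -/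
lemma phi_Pop {f : Ω → ℝ} (hf : ∀ ω, 0 < f ω) :
    phi μ s (Pop μ s f) ∅
      ≤ phi μ s f ∅ - (Fintype.card V : ℝ)⁻¹ * ∑ v, phi μ s f (univ \ {v}) := by
  have hn : 0 < (Fintype.card V : ℝ) := by exact_mod_cast Fintype.card_pos
  have hw : ∑ _v : V, (Fintype.card V : ℝ)⁻¹ = 1 := by simp [hn.ne']
  have e1 : phi μ s (Pop μ s f) ∅
      = ex μ (fun ω => Pop μ s f ω * Real.log (Pop μ s f ω)) - h μ s f ∅ := by
    rw [phi_empty hμ hs h1]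
    congr 1
    have := ex_Pop_iter (s := s) hμ 1 f
    rw [Function.iterate_one] at this
    rw [this]
    unfold h
    simp_rw [C_empty hμ h1]
    unfold ex
    rw [← sum_mul, h1, one_mul]
  have e2 : ex μ (fun ω => Pop μ s f ω * Real.log (Pop μ s f ω))
      ≤ (Fintype.card V : ℝ)⁻¹ * ∑ v, h μ s f (univ \ {v}) := by
    unfold h
    rw [← ex_sum, ← ex_cmul]
    refine ex_mono hμ fun ω => ?_
    have := Real.convexOn_mul_log.map_sum_le (t := (univ : Finset V))
      (w := fun _ => (Fintype.card V : ℝ)⁻¹) (p := fun v => C μ s (univ \ {v}) f ω)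
      (fun v _ => (inv_pos.2 hn).le) hw (fun v _ => (cE_pos hμ hf ω).le)
    simp only [smul_eq_mul, ← mul_sum] at this
    exact this
  have e3 : (Fintype.card V : ℝ)⁻¹ * ∑ v, phi μ s f (univ \ {v})
      = h μ s f univ - (Fintype.card V : ℝ)⁻¹ * ∑ v, h μ s f (univ \ {v}) := by
    unfold phi
    rw [sum_sub_distrib, mul_sub]
    simp [hn.ne']
  rw [e1, e3]
  unfold phi
  linarith

/-- Approximate tensorization gives exponential decay of entropy at rate `1 / (A n)`. -/
lemma phi_Pop_iter {A : ℝ} (hA : 0 < A)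
    (hAT : ∀ f : Ω → ℝ, (∀ ω, 0 < f ω) → phi μ s f ∅ ≤ A * ∑ u, phi μ s f (univ \ {u}))
    {f : Ω → ℝ} (hf : ∀ ω, 0 < f ω) (t : ℕ) :
    phi μ s ((Pop μ s)^[t] f) ∅ ≤ Real.exp (-(t / (A * Fintype.card V))) * phi μ s f ∅ := by
  have hn : 0 < (Fintype.card V : ℝ) := by exact_mod_cast Fintype.card_pos
  induction t with
  | zero => simp
  | succ t ih =>
    rw [Function.iterate_succ_apply']
    set g := (Pop μ s)^[t] f
    have hg : ∀ ω, 0 < g ω := Pop_iter_pos hμ t hf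
    have a1 := phi_Pop hμ hs h1 hg
    have a2 := hAT g hg
    have a3 : 0 ≤ phi μ s g ∅ := phi_nonneg hμ hs hg ∅
    have a4 : phi μ s g ∅ / (A * Fintype.card V)
        ≤ (Fintype.card V : ℝ)⁻¹ * ∑ v, phi μ s g (univ \ {v}) := by
      rw [div_le_iff₀ (by positivity)]
      calc _ ≤ _ := a2
        _ = _ := by field_simp
    have a5 := Real.add_one_le_exp (-(1 / (A * (Fintype.card V : ℝ))))
    calc phi μ s (Pop μ s g) ∅ ≤ (-(1 / (A * (Fintype.card V : ℝ))) + 1) * phi μ s g ∅ := by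
          have : phi μ s g ∅ / (A * Fintype.card V)
            = 1 / (A * (Fintype.card V : ℝ)) * phi μ s g ∅ := by ring
          linarith
      _ ≤ Real.exp (-(1 / (A * (Fintype.card V : ℝ)))) * (Real.exp (-(t / (A * Fintype.card V))) * phi μ s f ∅) :=
          mul_le_mul a5 ih a3 (Real.exp_pos _).le
      _ = _ := by
          rw [← mul_assoc, ← Real.exp_add]
          congr 2
          push_cast
          ring

omit hs h1 [Nonempty V] [Fintype V] [DecidableEq V] hμ in
/-- A weak Pinsker inequality, pointwise. -/
lemma abs_sub_one_le {x : ℝ} (hx : 0 < x) :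
    |x - 1| ≤ 1 / 8 + 8 * (x * Real.log x - x + 1) := by
  -- Young's inequality for the convex conjugate pair `x log x - x`, `exp y`
  have hY : ∀ y : ℝ, x * y ≤ x * Real.log x - x + Real.exp y := fun y => by
    have h2 := Real.add_one_le_exp (y - Real.log x)
    rw [Real.exp_sub, Real.exp_log hx, le_div_iff₀ hx] at h2
    linarith
  have b1 := hY (1 / 8)
  have b2 := hY (-(1 / 8))
  have c1 := abs_le.1 (Real.abs_exp_sub_one_sub_id_le (x := 1 / 8) (by norm_num [abs_le]))
  have c2 := abs_le.1 (Real.abs_exp_sub_one_sub_id_le (x := -(1 / 8)) (by norm_num [abs_le]))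
  rw [abs_le]
  constructor <;> linarith [c1.2, c2.2]

/-- Approximate tensorization implies convergence of the averages of test functions. The starting
density is `(δ_x / μ x + 1) / 2`, which is positive and has entropy at most `log (1 / μ x)`. -/
lemma mix_entropy {A : ℝ} (hA : 0 < A)
    (hAT : ∀ f : Ω → ℝ, (∀ ω, 0 < f ω) → phi μ s f ∅ ≤ A * ∑ u, phi μ s f (univ \ {u}))
    (x : Ω) {K : ℝ} (hK : Real.log (1 / μ x) ≤ K) {t : ℕ}
    (ht : Real.exp (-(t / (A * Fintype.card V))) * K ≤ 1 / 64)
    {g : Ω → ℝ} (hg : ∀ ω, |g ω| ≤ 1) :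
    (Pop μ s)^[t] g x - ex μ g ≤ 1 / 2 := by
  classical
  set f0 : Ω → ℝ := fun ω => 1 / 2 * ((if ω = x then 1 / μ x else 0) + 1) with hf0
  have hfp : ∀ ω, 0 < f0 ω := fun ω => by
    have := hμ x
    simp only [hf0]; split_ifs <;> positivity
  have hex : ∀ F : Ω → ℝ, ex μ (fun ω => f0 ω * F ω) = 1 / 2 * F x + 1 / 2 * ex μ F := fun F => by
    have e : (fun ω => f0 ω * F ω)
        = fun ω => 1 / 2 * ((if ω = x then 1 / μ x else 0) * F ω) + 1 / 2 * F ω := by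
      funext ω; simp only [hf0]; ring
    rw [e, ex_add, ex_cmul, ex_cmul]
    congr 2
    unfold ex
    have hx := (hμ x).ne'
    simp [hx]
  have hex1 : ex μ f0 = 1 := by
    have h2 := hex (fun _ => 1)
    have h3 : ex μ (fun _ => (1 : ℝ)) = 1 := by simpa [ex] using h1
    rw [h3] at h2
    simp only [mul_one] at h2
    rw [show f0 = fun ω => f0 ω from rfl, h2]; norm_num
  have hμ1 : μ x ≤ 1 := h1 ▸ single_le_sum (fun ω _ => (hμ ω).le) (mem_univ x)
  have hfle : ∀ ω, f0 ω ≤ 1 / μ x := fun ω => by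
    have h2 : 1 ≤ 1 / μ x := by rw [le_div_iff₀ (hμ x)]; linarith
    simp only [hf0]; split_ifs <;> linarith
  have hphi0 : phi μ s f0 ∅ ≤ K := by
    rw [phi_empty hμ hs h1, hex1, Real.log_one, mul_zero, sub_zero]
    calc ex μ (fun ω => f0 ω * Real.log (f0 ω)) ≤ ex μ (fun ω => K * f0 ω) :=
          ex_mono hμ fun ω => by
            rw [mul_comm]
            exact mul_le_mul_of_nonneg_right
              ((Real.log_le_log (hfp ω) (hfle ω)).trans hK) (hfp ω).le
      _ = K := by rw [ex_cmul, hex1, mul_one]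
  set ft := (Pop μ s)^[t] f0 with hft
  have hftp : ∀ ω, 0 < ft ω := Pop_iter_pos hμ t hfp
  have hft1 : ex μ ft = 1 := by rw [hft, ex_Pop_iter hμ, hex1]
  have hphit : ex μ (fun ω => ft ω * Real.log (ft ω)) ≤ 1 / 64 := by
    have h2 := phi_Pop_iter hμ hs h1 hA hAT hfp t
    rw [← hft, phi_empty hμ hs h1, hft1, Real.log_one, mul_zero, sub_zero] at h2
    exact h2.trans ((mul_le_mul_of_nonneg_left hphi0 (Real.exp_pos _).le).trans ht)
  have hdual := ex_mul_Pop_iter (s := s) hμ t f0 g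
  rw [hex, ex_Pop_iter hμ, ← hft] at hdual
  have hfin : ex μ (fun ω => ft ω * g ω) - ex μ g ≤ 1 / 4 := by
    rw [← ex_sub]
    calc ex μ (fun ω => ft ω * g ω - g ω)
        ≤ ex μ (fun ω => 1 / 8 * 1 + 8 * ((ft ω * Real.log (ft ω) - ft ω) + 1)) :=
          ex_mono hμ fun ω => by
            have h2 := abs_sub_one_le (hftp ω)
            have h3 : (ft ω - 1) * g ω ≤ |ft ω - 1| * 1 := by
              refine (le_abs_self _).trans ?_
              rw [abs_mul]
              exact mul_le_mul_of_nonneg_left (hg ω) (abs_nonneg _)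
            linarith
      _ ≤ 1 / 4 := by
          have h3 : ex μ (fun _ => (1 : ℝ)) = 1 := by simpa [ex] using h1
          rw [ex_add, ex_cmul, ex_cmul, ex_add, ex_sub, h3, hft1]
          linarith
  linarith

end HCH
end HC

/-! ### Small fugacity: contraction of Lipschitz functions -/

namespace HC

section HCK
variable {V : Type} [Fintype V] [DecidableEq V] (G : SimpleGraph V) [DecidableRel G.Adj]
  {lam : ℝ}

/-- Explicit form of the resampling step at `v`: a weighted average of the two possible values if no
neighbour of `v` is occupied, and the value with `v` empty otherwise. -/
lemma C_site (hlam : 0 < lam) (f : Om G → ℝ) (v : V) (ω : Om G) :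
    C (hc G lam) Subtype.val (univ \ {v}) f ω
      = if ∀ u ∈ ω.1.erase v, ¬ G.Adj u v then
          (ext0 G f (ω.1.erase v) + lam * ext0 G f (insert v (ω.1.erase v))) / (1 + lam)
        else ext0 G f (ω.1.erase v) := by
  rw [C_hc hlam]
  have e : ω.1 ∩ (univ \ {v}) = ω.1.erase v := by ext; simp [and_comm]
  rw [e]
  split_ifs with hfree
  · have hU : free G (univ \ {v}) (ω.1.erase v) = {v} := by
      ext x
      rw [mem_free, mem_singleton]
      constructor
      · rintro ⟨h, -⟩; simpa using h
      · rintro rfl; exact ⟨by simp, hfree⟩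
    have hv : Ind G {v} := fun a ha b hb => by
      rw [mem_singleton] at ha hb; subst ha; subst hb; exact G.loopless.irrefl _
    rw [hU]
    unfold Z Zf wt
    rw [← insert_empty_eq, sum_powerset_insert (notMem_empty v), sum_powerset_insert (notMem_empty v)]
    simp [ind_empty, hv]
  · have hU : free G (univ \ {v}) (ω.1.erase v) = ∅ := by
      ext x
      rw [mem_free]
      simp only [notMem_empty, iff_false, not_and]
      intro h
      have : x = v := by simpa using h
      subst this; exact hfree
    rw [hU]
    unfold Z Zf wt
    simp [ind_empty]

/-- Adding one vertex changes `f` by at most `L`. -/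
def Lip (f : Om G → ℝ) (L : ℝ) : Prop :=
  ∀ (I : Finset V) (w : V) (hI : Ind G I) (hI' : Ind G (insert w I)),
    |f ⟨insert w I, hI'⟩ - f ⟨I, hI⟩| ≤ L

variable {G}

lemma ext0_ind {f : Om G → ℝ} {I : Finset V} (hI : Ind G I) : ext0 G f I = f ⟨I, hI⟩ := by
  unfold ext0; rw [dif_pos hI]

lemma Lip.ext0_le {f : Om G → ℝ} {L : ℝ} (hf : Lip G f L) {I : Finset V} {w : V}
    (hIw : Ind G (insert w I)) : |ext0 G f (insert w I) - ext0 G f I| ≤ L := by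
  have hI := ind_mono G (subset_insert w I) hIw
  rw [ext0_ind hI, ext0_ind hIw]
  exact hf I w hI hIw

/-- Path coupling, on the dual side of test functions: for small fugacity a step of the dynamics
contracts the Lipschitz constant. -/
lemma Lip_Pop {D : ℕ} (hD : ∀ v, #(nbr G v) ≤ D) (hlam : 0 < lam) (hsmall : 2 * D * lam ≤ 1)
    [Nonempty V] {f : Om G → ℝ} {L : ℝ} (hL : 0 ≤ L) (hf : Lip G f L) :
    Lip G (Pop (hc G lam) Subtype.val f) ((1 - 1 / (2 * Fintype.card V)) * L) := by
  intro I w hI hI'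
  have hn : 0 < (Fintype.card V : ℝ) := by exact_mod_cast Fintype.card_pos
  by_cases hwI : w ∈ I
  · have e : (⟨insert w I, hI'⟩ : Om G) = ⟨I, hI⟩ := Subtype.ext (insert_eq_of_mem hwI)
    rw [e, sub_self, abs_zero]
    refine mul_nonneg (sub_nonneg.2 ?_) hL
    rw [div_le_one (by positivity)]
    have : (1 : ℝ) ≤ Fintype.card V := by exact_mod_cast Fintype.card_pos
    linarith
  have key : ∀ v, |C (hc G lam) Subtype.val (univ \ {v}) f ⟨insert w I, hI'⟩
      - C (hc G lam) Subtype.val (univ \ {v}) f ⟨I, hI⟩|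
      ≤ L - (if v = w then L else 0) + (if v ∈ nbr G w then lam * L else 0) := by
    intro v
    rw [C_site G hlam, C_site G hlam]
    dsimp only
    by_cases hvw : v = w
    · subst hvw
      rw [erase_insert hwI, erase_eq_of_notMem hwI]
      have : v ∉ nbr G v := by rw [mem_nbr]; exact G.loopless.irrefl _
      simp [this]
    rw [if_neg hvw, sub_zero, erase_insert_of_ne (Ne.symm hvw)]
    set a := I.erase v with ha
    have haI : Ind G (insert w a) := ind_mono G (insert_subset_insert _ (erase_subset _ _)) hI'
    have hb := hf.ext0_le haI
    by_cases hadj : v ∈ nbr G w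
    · rw [if_pos hadj, if_neg (fun h => h w (mem_insert_self _ _) ((mem_nbr G).1 hadj))]
      have hlL : 0 ≤ lam * L := mul_nonneg hlam.le hL
      split_ifs with h
      · have hva : Ind G (insert v a) := by
          rw [ind_insert]
          refine ⟨ind_mono G (subset_insert _ _) haI, fun u hu hun => h u hu ?_⟩
          exact ((mem_nbr G).1 hun).symm
        have hb2 := hf.ext0_le hva
        have e : ext0 G f (insert w a) - (ext0 G f a + lam * ext0 G f (insert v a)) / (1 + lam)
            = (ext0 G f (insert w a) - ext0 G f a)
              - lam / (1 + lam) * (ext0 G f (insert v a) - ext0 G f a) := by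
          field_simp; ring
        rw [e]
        refine (abs_sub _ _).trans (add_le_add hb ?_)
        rw [abs_mul, abs_of_nonneg (by positivity)]
        have : lam / (1 + lam) ≤ lam := div_le_self hlam.le (by linarith)
        exact mul_le_mul this hb2 (abs_nonneg _) hlam.le
      · linarith
    · rw [if_neg hadj, add_zero]
      have hiff : (∀ u ∈ insert w a, ¬ G.Adj u v) ↔ ∀ u ∈ a, ¬ G.Adj u v := by
        rw [forall_mem_insert]
        exact and_iff_right (fun h => hadj ((mem_nbr G).2 h))
      simp only [hiff]
      split_ifs with h
      · have hva : Ind G (insert w (insert v a)) := by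
          rw [insert_comm, ind_insert]
          refine ⟨haI, fun u hu hun => hiff.2 h u hu ?_⟩
          exact ((mem_nbr G).1 hun).symm
        have hb2 := hf.ext0_le hva
        rw [insert_comm v w a]
        have e : (ext0 G f (insert w a) + lam * ext0 G f (insert w (insert v a))) / (1 + lam)
            - (ext0 G f a + lam * ext0 G f (insert v a)) / (1 + lam)
            = ((ext0 G f (insert w a) - ext0 G f a)
              + lam * (ext0 G f (insert w (insert v a)) - ext0 G f (insert v a))) / (1 + lam) := by
          ring
        rw [e, abs_div, abs_of_pos (show 0 < 1 + lam by linarith), div_le_iff₀ (by linarith)]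
        refine (abs_add_le _ _).trans ?_
        rw [abs_mul, abs_of_pos hlam]
        have := mul_le_mul_of_nonneg_left hb2 hlam.le
        linarith
      · exact hb
  unfold Pop
  rw [← mul_sub, ← sum_sub_distrib, abs_mul, abs_of_pos (inv_pos.2 hn), inv_mul_le_iff₀ hn]
  refine (abs_sum_le_sum_abs _ _).trans ((sum_le_sum fun v _ => key v).trans ?_)
  rw [sum_add_distrib, sum_sub_distrib, sum_ite_eq' univ w, if_pos (mem_univ w),
    sum_ite_mem, univ_inter]
  simp only [sum_const, card_univ, nsmul_eq_mul]
  have h2 : (#(nbr G w) : ℝ) ≤ D := by exact_mod_cast hD w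
  have h3 : (#(nbr G w) : ℝ) * (lam * L) ≤ D * (lam * L) :=
    mul_le_mul_of_nonneg_right h2 (mul_nonneg hlam.le hL)
  have h4 : (Fintype.card V : ℝ) * ((1 - 1 / (2 * Fintype.card V)) * L)
      = Fintype.card V * L - L / 2 := by field_simp
  rw [h4]
  nlinarith

lemma Lip_Pop_iter {D : ℕ} (hD : ∀ v, #(nbr G v) ≤ D) (hlam : 0 < lam) (hsmall : 2 * D * lam ≤ 1)
    [Nonempty V] {f : Om G → ℝ} {L : ℝ} (hL : 0 ≤ L) (hf : Lip G f L) (t : ℕ) :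
    Lip G ((Pop (hc G lam) Subtype.val)^[t] f) ((1 - 1 / (2 * Fintype.card V)) ^ t * L) := by
  have hn : (1 : ℝ) ≤ Fintype.card V := by exact_mod_cast Fintype.card_pos
  have h0 : 0 ≤ 1 - 1 / (2 * (Fintype.card V : ℝ)) := by
    rw [sub_nonneg, div_le_one (by positivity)]; linarith
  induction t with
  | zero => simpa using hf
  | succ t ih =>
    rw [Function.iterate_succ_apply', pow_succ', mul_assoc]
    exact Lip_Pop hD hlam hsmall (mul_nonneg (pow_nonneg h0 _) hL) ih

/-- A Lipschitz function varies by at most `n * L` from its value at the empty set. -/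
lemma Lip.osc {f : Om G → ℝ} {L : ℝ} (hf : Lip G f L) (I : Finset V) (hI : Ind G I) :
    |f ⟨I, hI⟩ - f ⟨∅, ind_empty G⟩| ≤ #I * L := by
  induction I using Finset.induction_on with
  | empty => simp
  | insert w I hw ih =>
    have hI' := ind_mono G (subset_insert w I) hI
    have h1 := ih hI'
    have h2 := hf I w hI' hI
    rw [card_insert_of_notMem hw]
    push_cast
    calc _ ≤ |f ⟨insert w I, hI⟩ - f ⟨I, hI'⟩| + |f ⟨I, hI'⟩ - f ⟨∅, ind_empty G⟩| :=
          abs_sub_le _ _ _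
      _ ≤ _ := by linarith

lemma hc_sum (hlam : 0 < lam) : ∑ ω : Om G, hc G lam ω = 1 := by
  have h := fibre (lam := lam) (G := G) ∅ ⟨∅, ind_empty G⟩ (fun _ => 1)
  have hU : free G ∅ (∅ : Finset V) = univ := by ext; simp [free]
  simp only [inter_empty, if_true, mul_one, hU, card_empty, pow_zero, empty_union] at h
  rw [h]
  have e : Zf G (fun _ => lam) univ (fun J => ext0 G (fun _ => 1) J) = Z G (fun _ => lam) univ := by
    unfold Z Zf
    refine sum_congr rfl fun J _ => ?_
    by_cases hJ : Ind G J
    · beta_reduce; rw [ext0_ind hJ]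
    · unfold wt; rw [if_neg hJ]; ring
  rw [e]
  have := Z_pos G (fun _ : V => hlam) univ
  field_simp

/-- After `t` steps a test function has Lipschitz constant at most `2 exp (-t / (2n))`, hence is
nearly constant. -/
lemma mix_small {D : ℕ} (hD : ∀ v, #(nbr G v) ≤ D) (hlam : 0 < lam) (hsmall : 2 * D * lam ≤ 1)
    [Nonempty V] (x : Om G) {t : ℕ}
    (ht : 4 * Fintype.card V * Real.exp (-(t / (2 * Fintype.card V))) ≤ 1 / 2)
    {g : Om G → ℝ} (hg : ∀ ω, |g ω| ≤ 1) :
    (Pop (hc G lam) Subtype.val)^[t] g x - ex (hc G lam) g ≤ 1 / 2 := by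
  have hn : (1 : ℝ) ≤ Fintype.card V := by exact_mod_cast Fintype.card_pos
  have hμ := hc_pos (G := G) hlam
  have h1 := hc_sum (G := G) hlam
  have hgL : Lip G g 2 := fun I w hI hI' => by
    have a := hg ⟨insert w I, hI'⟩
    have b := hg ⟨I, hI⟩
    rw [abs_le] at a b ⊢
    constructor <;> linarith
  have hL := Lip_Pop_iter hD hlam hsmall (by norm_num : (0:ℝ) ≤ 2) hgL t
  set F := (Pop (hc G lam) Subtype.val)^[t] g with hF
  set L := (1 - 1 / (2 * (Fintype.card V : ℝ))) ^ t * 2 with hLd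
  have h0 : 0 ≤ 1 - 1 / (2 * (Fintype.card V : ℝ)) := by
    rw [sub_nonneg, div_le_one (by positivity)]; linarith
  have hL0 : 0 ≤ L := by positivity
  have hLe : L ≤ Real.exp (-(t / (2 * Fintype.card V))) * 2 := by
    rw [hLd]
    have h2 := Real.add_one_le_exp (-(1 / (2 * (Fintype.card V : ℝ))))
    have h3 : (1 - 1 / (2 * (Fintype.card V : ℝ))) ^ t
        ≤ Real.exp (-(1 / (2 * (Fintype.card V : ℝ)))) ^ t :=
      pow_le_pow_left₀ h0 (by linarith) t
    rw [← Real.exp_nat_mul] at h3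
    have e : (t : ℝ) * -(1 / (2 * (Fintype.card V : ℝ))) = -(t / (2 * Fintype.card V)) := by ring
    rw [e] at h3
    linarith
  have hosc : ∀ ω : Om G, |F ω - F ⟨∅, ind_empty G⟩| ≤ Fintype.card V * L := fun ω =>
    (Lip.osc hL ω.1 ω.2).trans (mul_le_mul_of_nonneg_right
      (by exact_mod_cast card_le_univ _) hL0)
  have hex : ex (hc G lam) g = ex (hc G lam) F := (ex_Pop_iter hμ t g).symm
  have hE : F ⟨∅, ind_empty G⟩ - Fintype.card V * L ≤ ex (hc G lam) F := by
    have : ex (hc G lam) (fun _ => F ⟨∅, ind_empty G⟩ - Fintype.card V * L)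
        = F ⟨∅, ind_empty G⟩ - Fintype.card V * L := by
      unfold ex; rw [← sum_mul, h1, one_mul]
    rw [← this]
    exact ex_mono hμ fun ω => by linarith [(abs_le.1 (hosc ω)).1]
  have := (abs_le.1 (hosc x)).2
  rw [hex]
  nlinarith

lemma Z_le (hlam : 0 < lam) : Z G (fun _ => lam) univ ≤ (1 + lam) ^ Fintype.card V := by
  have h := prod_add (fun _ : V => lam) (fun _ : V => (1 : ℝ)) univ
  rw [prod_const, card_univ] at h
  rw [add_comm, h]
  unfold Z Zf wt
  refine sum_le_sum fun I _ => ?_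
  have : 0 < ∏ _v ∈ I, lam := prod_pos fun _ _ => hlam
  split_ifs
  · simp
  · simp only [prod_const_one, mul_one]; exact this.le

/-- For fugacities in `[a, b]` every configuration has probability exponential in the number of
vertices at worst. -/
lemma log_inv_hc (hlam : 0 < lam) {a b : ℝ} (ha : 0 < a) (ha1 : a ≤ 1) (hal : a ≤ lam)
    (hb : lam ≤ b) (ω : Om G) :
    Real.log (1 / hc G lam ω) ≤ Fintype.card V * ((1 + b) / a) := by
  have hZ := Z_pos G (fun _ : V => hlam) univ
  have hp : a ^ Fintype.card V ≤ lam ^ #ω.1 :=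
    (pow_le_pow_of_le_one ha.le ha1 (card_le_univ ω.1)).trans (pow_le_pow_left₀ ha.le hal _)
  have h1 : 1 / hc G lam ω ≤ ((1 + b) / a) ^ Fintype.card V := by
    unfold hc
    rw [one_div_div, div_pow]
    refine div_le_div₀ (by have : 0 < b := by linarith
                           positivity) ((Z_le hlam).trans ?_) (by positivity) hp
    exact pow_le_pow_left₀ (by linarith) (by linarith) _
  have hr : 0 < (1 + b) / a := div_pos (by linarith) ha
  calc Real.log (1 / hc G lam ω) ≤ Real.log (((1 + b) / a) ^ Fintype.card V) :=
        Real.log_le_log (one_div_pos.2 (hc_pos hlam ω)) h1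
    _ = Fintype.card V * Real.log ((1 + b) / a) := Real.log_pow _ _
    _ ≤ _ := mul_le_mul_of_nonneg_left (by linarith [Real.log_le_sub_one_of_pos hr])
        (Nat.cast_nonneg _)

end HCK
end HC

/-! ### Transfer to the transition matrix -/

namespace HC

section HCT
variable {V : Type} [Fintype V] [DecidableEq V]

/-- The set of vertices of spin `1`. -/
def supp (σ : V → Bool) : Finset V := univ.filter fun v => σ v = true

/-- The indicator configuration of a set. -/
def conf (I : Finset V) : V → Bool := fun v => decide (v ∈ I)

lemma supp_conf (I : Finset V) : supp (conf I) = I := by ext; simp [supp, conf]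

lemma conf_supp (σ : V → Bool) : conf (supp σ) = σ := by ext; simp [supp, conf]

variable (G : SimpleGraph V) [DecidableRel G.Adj] {lam : ℝ}

lemma isIndep_conf (I : Finset V) : IsIndep G (conf I) ↔ Ind G I := by
  constructor
  · intro h u hu v hv huv
    exact h u v huv (by simp [conf, hu, hv])
  · intro h u v huv huv'
    simp only [conf, decide_eq_true_eq] at huv'
    exact h u huv'.1 v huv'.2 huv

/-- Sums over configurations supported on independent sets. -/
lemma sum_conf (H : (V → Bool) → ℝ) (hH : ∀ σ, ¬ IsIndep G σ → H σ = 0) :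
    ∑ σ, H σ = ∑ ω : Om G, H (conf ω.1) := by
  rw [← sum_filter_add_sum_filter_not univ (IsIndep G) H,
    sum_eq_zero (s := univ.filter fun σ => ¬ IsIndep G σ) (fun σ hσ => hH σ (mem_filter.1 hσ).2),
    add_zero]
  symm
  refine sum_bij (fun (ω : Om G) _ => conf ω.1) ?_ ?_ ?_ ?_
  · intro ω _
    exact mem_filter.2 ⟨mem_univ _, (isIndep_conf G _).2 ω.2⟩
  · intro a _ b _ hab
    apply Subtype.ext
    rw [← supp_conf a.1, hab, supp_conf]
  · intro σ hσ
    have := (mem_filter.1 hσ).2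
    rw [← conf_supp σ, isIndep_conf] at this
    exact ⟨⟨supp σ, this⟩, mem_univ _, conf_supp σ⟩
  · intro _ _; rfl

lemma gibbs_zero {σ : V → Bool} (h : ¬ IsIndep G σ) : hardCoreGibbs G lam σ = 0 := by
  unfold hardCoreGibbs hardCoreWeight; rw [if_neg h, zero_div]

lemma weight_conf (ω : Om G) : hardCoreWeight G lam (conf ω.1) = lam ^ #ω.1 := by
  unfold hardCoreWeight
  rw [if_pos ((isIndep_conf G _).2 ω.2)]
  congr 1
  change #(supp (conf ω.1)) = _
  rw [supp_conf]

lemma gibbs_conf (hlam : 0 < lam) (ω : Om G) : hardCoreGibbs G lam (conf ω.1) = hc G lam ω := by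
  have h1 := hc_sum (G := G) hlam
  have hZ := Z_pos G (fun _ : V => hlam) univ
  unfold hc at h1 ⊢
  rw [← sum_div, div_eq_iff hZ.ne', one_mul] at h1
  unfold hardCoreGibbs
  rw [weight_conf, sum_conf G _ (fun σ h => by unfold hardCoreWeight; rw [if_neg h])]
  simp_rw [weight_conf]
  rw [h1]

lemma sum_update (σ : V → Bool) (v : V) (H : (V → Bool) → ℝ) :
    ∑ j : Bool, H (Function.update σ v j)
      = ∑ σ', if ∀ u, u ≠ v → σ' u = σ u then H σ' else 0 := by
  rw [← sum_filter]
  refine sum_bij (fun j _ => Function.update σ v j) ?_ ?_ ?_ ?_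
  · intro j _
    exact mem_filter.2 ⟨mem_univ _, fun u hu => Function.update_of_ne hu _ _⟩
  · intro a _ b _ hab
    have := congrFun hab v
    simpa using this
  · intro σ' hσ'
    refine ⟨σ' v, mem_univ _, ?_⟩
    ext u
    by_cases hu : u = v
    · subst hu; simp
    · rw [Function.update_of_ne hu, (mem_filter.1 hσ').2 u hu]
  · intro _ _; rfl

lemma agree_iff (I J : Finset V) (v : V) :
    (∀ u, u ≠ v → conf J u = conf I u) ↔ J ∩ (univ \ {v}) = I ∩ (univ \ {v}) := by
  rw [Finset.ext_iff]
  refine forall_congr' fun u => ?_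
  simp only [conf, mem_inter, mem_sdiff, mem_univ, mem_singleton, true_and, ne_eq, decide_eq_decide]
  by_cases h : u = v <;> simp [h]

/-- On feasible configurations the transition matrix acts on functions as the operator `Pop`. -/
lemma glauber_mulVec (hlam : 0 < lam) (F : (V → Bool) → ℝ) (ω : Om G) :
    (glauberMatrix (hardCoreGibbs G lam)).mulVec F (conf ω.1)
      = Pop (hc G lam) Subtype.val (fun ω : Om G => F (conf ω.1)) ω := by
  have hsite : ∀ (v : V) (H : (V → Bool) → ℝ),
      (∑ σ', if ∀ u, u ≠ v → σ' u = conf ω.1 u then hardCoreGibbs G lam σ' * H σ' else 0)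
      = ∑ ω' : Om G, if ω'.1 ∩ (univ \ {v}) = ω.1 ∩ (univ \ {v}) then
          hc G lam ω' * H (conf ω'.1) else 0 := fun v H => by
    rw [sum_conf G _ (fun σ h => by rw [gibbs_zero G h]; simp)]
    refine sum_congr rfl fun ω' _ => ?_
    rw [gibbs_conf G hlam]
    simp only [agree_iff]
  have hden : ∀ v, ∑ j : Bool, hardCoreGibbs G lam (Function.update (conf ω.1) v j)
      = den (hc G lam) (fun ω : Om G => ω.1 ∩ (univ \ {v})) ω := fun v => by
    rw [sum_update]
    have := hsite v (fun _ => 1)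
    simp only [mul_one] at this
    exact this
  unfold Pop Matrix.mulVec dotProduct glauberMatrix
  simp only [Matrix.of_apply]
  simp_rw [mul_assoc, sum_mul]
  rw [← mul_sum, sum_comm]
  congr 1
  refine sum_congr rfl fun v _ => ?_
  unfold C cE
  rw [← hsite v F, ← hden v, sum_div]
  refine sum_congr rfl fun σ' _ => ?_
  split_ifs
  · ring
  · simp

lemma glauber_pow_mulVec (hlam : 0 < lam) (t : ℕ) (F : (V → Bool) → ℝ) (ω : Om G) :
    ((glauberMatrix (hardCoreGibbs G lam)) ^ t).mulVec F (conf ω.1)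
      = (Pop (hc G lam) Subtype.val)^[t] (fun ω : Om G => F (conf ω.1)) ω := by
  induction t generalizing F with
  | zero => simp
  | succ t ih =>
    rw [pow_succ, ← Matrix.mulVec_mulVec, ih, Function.iterate_succ_apply]
    exact congrArg (fun f => (Pop (hc G lam) Subtype.val)^[t] f ω)
      (funext fun ω => glauber_mulVec G hlam F ω)

/-- A mixing time bound from uniform convergence of averages of bounded test functions. -/
lemma mixingTime_le (hlam : 0 < lam) (t : ℕ)
    (h : ∀ (x : Om G) (g : Om G → ℝ), (∀ ω, |g ω| ≤ 1) →
      (Pop (hc G lam) Subtype.val)^[t] g x - ex (hc G lam) g ≤ 1 / 2) :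
    mixingTime (hardCoreGibbs G lam) (glauberMatrix (hardCoreGibbs G lam)) (1 / 4) ≤ t := by
  unfold mixingTime
  refine Finset.sup_le fun σ hσ => Nat.sInf_le ?_
  have hσI : IsIndep G σ := by
    by_contra hn
    have := (mem_filter.1 hσ).2
    rw [gibbs_zero G hn] at this
    exact lt_irrefl _ this
  rw [← conf_supp σ, isIndep_conf] at hσI
  have e : σ = conf (⟨supp σ, hσI⟩ : Om G).1 := (conf_supp σ).symm
  generalize (⟨supp σ, hσI⟩ : Om G) = x at e
  subst e
  set M := glauberMatrix (hardCoreGibbs G lam) ^ t with hM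
  -- the total variation distance is attained by the sign of the difference
  set F : (V → Bool) → ℝ := fun y => if 0 ≤ M (conf x.1) y - hardCoreGibbs G lam y then 1 else -1
    with hF
  have habs : ∀ y, |M (conf x.1) y - hardCoreGibbs G lam y|
      = M (conf x.1) y * F y - hardCoreGibbs G lam y * F y := fun y => by
    rw [← sub_mul]
    simp only [hF]
    split_ifs with h0
    · rw [abs_of_nonneg h0, mul_one]
    · rw [abs_of_neg (not_le.1 h0)]; ring
  have h1 := h x (fun ω => F (conf ω.1)) (fun ω => by simp only [hF]; split_ifs <;> simp)
  rw [← glauber_pow_mulVec G hlam t F x] at h1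
  have h2 : ∑ y, hardCoreGibbs G lam y * F y = ex (hc G lam) (fun ω => F (conf ω.1)) := by
    rw [sum_conf G _ (fun σ h => by rw [gibbs_zero G h, zero_mul])]
    unfold ex
    exact sum_congr rfl fun ω _ => by rw [gibbs_conf G hlam]
  change tvDist (fun y => M (conf x.1) y) _ ≤ _
  unfold tvDist
  simp only [habs, sum_sub_distrib]
  rw [h2]
  unfold Matrix.mulVec dotProduct at h1
  linarith

/-- Rounding up a mixing time of the form `a n log (b n)`. -/
lemma ceil_bound {a b : ℝ} (ha : 0 < a) (hb : 0 < b) {n : ℕ} (hn : 2 ≤ n) :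
    (⌈a * n * Real.log (b * n)⌉₊ : ℝ) ≤ (a * (1 + 2 * |Real.log b|) + 2) * n * Real.log n := by
  have hn' : (2 : ℝ) ≤ n := by exact_mod_cast hn
  have hl : 1 / 2 ≤ Real.log n :=
    (by linarith [Real.log_two_gt_d9] : (1 / 2 : ℝ) ≤ Real.log 2).trans
      (Real.log_le_log (by norm_num) hn')
  have h1 : a * n * Real.log (b * n) ≤ a * n * ((1 + 2 * |Real.log b|) * Real.log n) := by
    refine mul_le_mul_of_nonneg_left ?_ (by positivity)
    rw [Real.log_mul hb.ne' (by positivity)]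
    nlinarith [le_abs_self (Real.log b), abs_nonneg (Real.log b)]
  have h0 : 0 ≤ a * n * ((1 + 2 * |Real.log b|) * Real.log n) := by positivity
  have h2 : (⌈a * n * Real.log (b * n)⌉₊ : ℝ) ≤ a * n * ((1 + 2 * |Real.log b|) * Real.log n) + 1 := by
    refine (Nat.cast_le.2 (Nat.ceil_mono h1)).trans (Nat.ceil_lt_add_one h0).le
  nlinarith

/-- The number of steps of `ceil_bound` suffices for decay at rate `1 / (a n)` to reach `1 / (b n)`. -/
lemma exp_ceil {a b : ℝ} (ha : 0 < a) (hb : 0 < b) {n : ℕ} (hn : 2 ≤ n) :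
    Real.exp (-((⌈a * n * Real.log (b * n)⌉₊ : ℝ) / (a * n))) ≤ 1 / (b * n) := by
  have hn' : (0 : ℝ) < n := by exact_mod_cast (by omega : 0 < n)
  rw [one_div, ← Real.exp_log (inv_pos.2 (mul_pos hb hn')), Real.log_inv, Real.exp_le_exp,
    neg_le_neg_iff, le_div_iff₀ (mul_pos ha hn')]
  calc _ = a * n * Real.log (b * n) := by ring
    _ ≤ _ := Nat.le_ceil _

end HCT
end HC

/-- **Optimal mixing for the hard-core model up to the tree uniqueness threshold.**
For every `Δ ≥ 3` and `δ ∈ (0,1)` there is a constant `C = C(Δ,δ)` such that on every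
`n`-vertex graph of maximum degree at most `Δ` and for every fugacity
`0 < λ ≤ (1−δ)·λ_c(Δ)`, the Glauber dynamics for the hard-core model mixes (to total
variation distance `1/4`) within `C·n·log n` steps. -/
theorem hardcore_optimal_mixing
    (Δ : ℕ) (hΔ : 3 ≤ Δ) (δ : ℝ) (hδ0 : 0 < δ) (hδ1 : δ < 1) :
    ∃ C : ℝ, ∀ (V : Type) [Fintype V] [DecidableEq V]
      (G : SimpleGraph V) [DecidableRel G.Adj],
      2 ≤ Fintype.card V → (∀ v : V, G.degree v ≤ Δ) →
      ∀ lam : ℝ, 0 < lam → lam ≤ (1 - δ) * lambdaC Δ →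
      (mixingTime (hardCoreGibbs G lam)
          (glauberMatrix (hardCoreGibbs G lam)) (1 / 4) : ℝ) ≤
        C * (Fintype.card V : ℝ) * Real.log (Fintype.card V) := by
  classical
  obtain ⟨d, rfl⟩ : ∃ d, Δ = d + 1 := ⟨Δ - 1, by omega⟩
  have hd : 2 ≤ d := by omega
  have hlc : lambdaC (d + 1) = HC.lamD d := by
    unfold lambdaC HC.lamD
    push_cast
    norm_num
    congr 2
    ring
  have hL := HC.lamD_pos hd
  set D : ℕ := d + 1 with hD
  have hDp : (0 : ℝ) < D := by rw [hD]; positivity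
  -- below this fugacity one-step coupling contracts; above it, marginals are bounded below
  set lam0 : ℝ := 1 / (2 * D) with hlam0
  have h0 : 0 < lam0 := by positivity
  have h01 : lam0 ≤ 1 := by
    rw [hlam0, div_le_one (by positivity)]
    have : (1 : ℝ) ≤ D := by rw [hD]; push_cast; linarith [(Nat.cast_nonneg d : (0 : ℝ) ≤ d)]
    linarith
  obtain ⟨A, hA, hAT⟩ := HC.at_hc d hd δ hδ0 hδ1 lam0 h0
  set K : ℝ := (1 + HC.lamD d) / lam0 with hK
  have hKp : 0 < K := by positivity
  refine ⟨max (A * (1 + 2 * |Real.log (64 * K)|) + 2) (2 * (1 + 2 * |Real.log 8|) + 2), ?_⟩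
  intro V _ _ G _ hn hdeg lam hlam hle
  have : Nonempty V := Fintype.card_pos_iff.1 (by omega)
  rw [hlc] at hle
  have hnb : ∀ v, #(HC.nbr G v) ≤ D := fun v => by
    have e : HC.nbr G v = G.neighborFinset v := by ext; simp [HC.nbr]
    rw [e, G.card_neighborFinset_eq_degree]
    convert hdeg v
  have hnp : (0 : ℝ) < Fintype.card V := by exact_mod_cast (by omega : 0 < Fintype.card V)
  have hlogn : 0 ≤ (Fintype.card V : ℝ) * Real.log (Fintype.card V) :=
    mul_nonneg hnp.le (Real.log_natCast_nonneg _)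
  rcases le_total lam0 lam with hbig | hsmall
  · -- fugacity bounded below: entropy decay
    set t := ⌈A * Fintype.card V * Real.log (64 * K * Fintype.card V)⌉₊ with ht
    have hmix := HC.mixingTime_le G hlam t fun x g hg => by
      refine HC.mix_entropy (HC.hc_pos hlam) Subtype.val_injective (HC.hc_sum hlam) hA
        (hAT V G hnb lam hbig hle) x
        (HC.log_inv_hc hlam h0 h01 hbig (hle.trans (mul_le_of_le_one_left hL.le (by linarith))) x)
        ?_ hg
      have h1 := HC.exp_ceil hA (by positivity : 0 < 64 * K) hn
      calc _ ≤ 1 / (64 * K * Fintype.card V) * (Fintype.card V * K) :=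
            mul_le_mul_of_nonneg_right h1 (by positivity)
        _ = 1 / 64 := by field_simp
    have h2 := HC.ceil_bound hA (by positivity : 0 < 64 * K) hn
    calc _ ≤ (t : ℝ) := by exact_mod_cast hmix
      _ ≤ _ := h2
      _ ≤ _ := by
        rw [mul_assoc, mul_assoc]
        exact mul_le_mul_of_nonneg_right (le_max_left _ _) hlogn
  · -- small fugacity: contraction of Lipschitz functions
    set t := ⌈2 * Fintype.card V * Real.log (8 * Fintype.card V)⌉₊ with ht
    have hmix := HC.mixingTime_le G hlam t fun x g hg => by
      refine HC.mix_small hnb hlam ?_ x ?_ hg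
      · calc 2 * D * lam ≤ 2 * D * lam0 := by gcongr
          _ = 1 := by rw [hlam0]; field_simp
      · have h1 := HC.exp_ceil (by norm_num : (0 : ℝ) < 2) (by norm_num : (0 : ℝ) < 8) hn
        calc _ ≤ 4 * Fintype.card V * (1 / (8 * (Fintype.card V : ℝ))) :=
              mul_le_mul_of_nonneg_left h1 (by positivity)
          _ ≤ 1 / 2 := le_of_eq (by field_simp; norm_num)
    have h2 := HC.ceil_bound (by norm_num : (0 : ℝ) < 2) (by norm_num : (0 : ℝ) < 8) hn
    calc _ ≤ (t : ℝ) := by exact_mod_cast hmix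
      _ ≤ _ := h2
      _ ≤ _ := by
        rw [mul_assoc, mul_assoc]
        exact mul_le_mul_of_nonneg_right (le_max_right _ _) hlogn
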